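/- arXiv:1604.08144 — 4 statements merged into one kernel-verified Lean document; each statement's English description precedes it below -/
import Mathlib

section
/- Let G be a graph with infinite edge motion (i.e. every non-trivial automorphism of G moves infinitely many edges), let γ be an automorphism of G, and let V_move be the set of vertices of G not fixed by γ. If C is the vertex set of a connected component of the subgraph of G induced by V_move and C is finite, then C contains a vertex of infinite degree. -/
lemma aux_fin {V : Type} (G : SimpleGraph V)
    (hmotion : ∀ γ : G ≃g G, (∃ v, γ v ≠ v) →
      {e : Sym2 V | e ∈ G.edgeSet ∧ e.map γ ≠ e}.Infinite)
    (γ : G ≃g G) (S : Set V) (hS : S.Finite) (hd : ∀ x ∈ S, (G.neighborSet x).Finite)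
    (hfix : ∀ x, x ∉ S → γ x = x) (v : V) (hv : γ v ≠ v) : False := by
  refine hmotion γ ⟨v, hv⟩ ?_
  have hfin : (⋃ x ∈ S, (fun y => s(x, y)) '' G.neighborSet x).Finite :=
    hS.biUnion fun x hx => (hd x hx).image _
  refine hfin.subset ?_
  rintro e ⟨he, hm⟩
  induction e using Sym2.ind with
  | _ x y =>
    simp only [Set.mem_iUnion]
    by_cases hx : x ∈ S
    · exact ⟨x, hx, y, he, rfl⟩
    · by_cases hy : y ∈ S
      · exact ⟨y, hy, x, G.adj_symm he, Sym2.eq_swap⟩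
      · exact absurd (by simp [hfix x hx, hfix y hy]) hm

open Classical in
lemma aux_case1 {V : Type} (G : SimpleGraph V) (γ : G ≃g G) (S : Set V)
    (hS : ∀ x, γ x ∈ S ↔ x ∈ S) (hb : ∀ x ∈ S, ∀ y, y ∉ S → G.Adj x y → γ y = y) :
    ∃ δ : G ≃g G, (∀ x ∈ S, δ x = γ x) ∧ ∀ x, x ∉ S → δ x = x := by
  have hS' : ∀ x, γ.symm x ∈ S ↔ x ∈ S := fun x => by
    rw [← hS]; simp
  have key : ∀ x ∈ S, ∀ y, y ∉ S → (G.Adj (γ x) y ↔ G.Adj x y) := by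
    intro x hx y hy
    constructor
    · intro h
      have h1 := hb _ ((hS x).2 hx) y hy h
      rw [← h1] at h
      exact γ.map_adj_iff.1 h
    · intro h
      have h1 := hb _ hx y hy h
      rw [← h1]
      exact γ.map_adj_iff.2 h
  refine ⟨⟨⟨fun x => if x ∈ S then γ x else x, fun x => if x ∈ S then γ.symm x else x,
    ?_, ?_⟩, ?_⟩, ?_, ?_⟩
  · intro x
    by_cases hx : x ∈ S <;> simp [hx, hS]
  · intro x
    by_cases hx : x ∈ S <;> simp [hx, hS']
  · intro x y
    by_cases hx : x ∈ S <;> by_cases hy : y ∈ S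
    · simpa [hx, hy] using γ.map_adj_iff
    · simp [hx, hy, key x hx y hy]
    · simp [hx, hy, G.adj_comm x, key y hy x hx]
    · simp [hx, hy]
  · intro x hx
    exact if_pos hx
  · intro x hx
    exact if_neg hx

open Classical in
lemma aux_case2 {V : Type} (G : SimpleGraph V) (γ : G ≃g G) (S : Set V)
    (hS : ∀ x ∈ S, γ x ∉ S) (hb : ∀ x ∈ S, ∀ y, y ∉ S → G.Adj x y → γ y = y) :
    ∃ δ : G ≃g G, (∀ x ∈ S, δ x = γ x) ∧ ∀ x, x ∉ S ∪ γ '' S → δ x = x := by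
  let f : V → V := fun x => if x ∈ S then γ x else if γ.symm x ∈ S then γ.symm x else x
  have f1 : ∀ x ∈ S, f x = γ x := fun x hx => if_pos hx
  have f2 : ∀ x ∈ S, f (γ x) = x := fun x hx => by simp [f, hx, hS x hx]
  have f3 : ∀ x, x ∉ S → γ.symm x ∉ S → f x = x := fun x hx hx' => by simp [f, hx, hx']
  have tri : ∀ x, x ∈ S ∨ (∃ z ∈ S, x = γ z) ∨ (x ∉ S ∧ γ.symm x ∉ S) := by
    intro x
    by_cases hx : x ∈ S
    · exact Or.inl hx
    · by_cases hx' : γ.symm x ∈ S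
      · exact Or.inr (Or.inl ⟨_, hx', by simp⟩)
      · exact Or.inr (Or.inr ⟨hx, hx'⟩)
  have finv : Function.Involutive f := by
    intro x
    rcases tri x with hx | ⟨z, hz, rfl⟩ | ⟨hx, hx'⟩
    · rw [f1 x hx, f2 x hx]
    · rw [f2 z hz, f1 z hz]
    · rw [f3 x hx hx', f3 x hx hx']
  have k1 : ∀ x ∈ S, ∀ z ∈ S, ¬ G.Adj x (γ z) := by
    intro x hx z hz h
    have h1 := hb x hx _ (hS z hz) h
    exact hS z hz (by rw [γ.injective h1]; exact hz)
  have k2 : ∀ x ∈ S, ∀ y, y ∉ S → G.Adj x y → G.Adj (γ x) y := by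
    intro x hx y hy h
    rw [← hb x hx y hy h]
    exact γ.map_adj_iff.2 h
  have k3 : ∀ x ∈ S, ∀ y, γ.symm y ∉ S → G.Adj (γ x) y → G.Adj x y := by
    intro x hx y hy h
    have h0 : G.Adj x (γ.symm y) := by
      rw [← γ.map_adj_iff]; simpa using h
    have h1 := hb x hx _ hy h0
    have h2 : y = γ.symm y := by simpa using h1
    rw [h2]; exact h0
  have fadj : ∀ x y, G.Adj x y → G.Adj (f x) (f y) := by
    intro x y h
    rcases tri x with hx | ⟨z, hz, rfl⟩ | ⟨hx, hx'⟩ <;>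
      rcases tri y with hy | ⟨w, hw, rfl⟩ | ⟨hy, hy'⟩
    · rw [f1 x hx, f1 y hy]; exact γ.map_adj_iff.2 h
    · exact absurd h (k1 _ hx _ hw)
    · rw [f1 x hx, f3 y hy hy']; exact k2 x hx y hy h
    · exact absurd h.symm (k1 _ hy _ hz)
    · rw [f2 z hz, f2 w hw]; exact γ.map_adj_iff.1 h
    · rw [f2 z hz, f3 y hy hy']; exact k3 z hz y hy' h
    · rw [f1 y hy, f3 x hx hx']; exact (k2 y hy x hx h.symm).symm
    · rw [f2 w hw, f3 x hx hx']; exact (k3 w hw x hx' h.symm).symm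
    · rw [f3 x hx hx', f3 y hy hy']; exact h
  refine ⟨⟨finv.toPerm, ?_⟩, f1, ?_⟩
  · intro x y
    constructor
    · intro h
      have := fadj _ _ h
      simpa [finv x, finv y] using this
    · exact fadj x y
  · intro x hx
    refine f3 x (fun h => hx (Or.inl h)) (fun h => hx (Or.inr ⟨_, h, by simp⟩))

/-- If `G` has infinite edge motion, `γ` is an automorphism of `G`,
`Vmove` is the set of vertices moved by `γ`, and `C` is a finite connected component
of the subgraph induced by `Vmove`, then `C` contains a vertex of infinite degree. -/
theorem stmt_0 {V : Type} (G : SimpleGraph V)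
    (hmotion : ∀ γ : G ≃g G, (∃ v, γ v ≠ v) →
      {e : Sym2 V | e ∈ G.edgeSet ∧ e.map γ ≠ e}.Infinite)
    (γ : G ≃g G)
    (Vmove : Set V) (hVmove : Vmove = {v | γ v ≠ v})
    (C : (G.induce Vmove).ConnectedComponent)
    (hC : C.supp.Finite) :
    ∃ w ∈ C.supp, (G.neighborSet (w : V)).Infinite := by
  by_contra hcon
  push Not at hcon
  have hmem : ∀ v, v ∈ Vmove ↔ γ v ≠ v := fun v => by rw [hVmove]; rfl
  let S : Set V := Subtype.val '' C.supp
  have hSfin : S.Finite := hC.image _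
  have hSd : ∀ x ∈ S, (G.neighborSet x).Finite := by
    rintro _ ⟨w, hw, rfl⟩
    simpa using hcon w hw
  have hSm : ∀ x ∈ S, γ x ≠ x := by
    rintro _ ⟨w, hw, rfl⟩
    exact (hmem _).1 w.2
  have hb : ∀ x ∈ S, ∀ y, y ∉ S → G.Adj x y → γ y = y := by
    rintro _ ⟨w, hw, rfl⟩ y hy h
    by_contra hne
    refine hy ⟨⟨y, (hmem y).2 hne⟩, ?_, rfl⟩
    have ha : (G.induce Vmove).Adj w ⟨y, (hmem y).2 hne⟩ := h
    rw [SimpleGraph.ConnectedComponent.mem_supp_iff] at hw ⊢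
    rw [← hw]
    exact SimpleGraph.ConnectedComponent.sound ha.symm.reachable
  have hne : ∃ v, v ∈ S := by
    obtain ⟨w, hw⟩ := C.nonempty_supp
    exact ⟨w, w, hw, rfl⟩
  obtain ⟨v, hv⟩ := hne
  let φ : G.induce Vmove →g G.induce Vmove :=
    ⟨fun x => ⟨γ x, (hmem _).2 fun h => (hmem _).1 x.2 (γ.injective h)⟩,
      fun {a b} h => γ.map_adj_iff.2 h⟩
  by_cases hcase : ∃ x ∈ S, γ x ∈ S
  · have hmaps : Set.MapsTo γ S S := by
      obtain ⟨_, ⟨x, hx, rfl⟩, ⟨x', hx', hxx'⟩⟩ := hcase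
      have e : x' = φ x := Subtype.ext hxx'
      subst e
      rw [SimpleGraph.ConnectedComponent.mem_supp_iff] at hx hx'
      have hCm : C.map φ = C := by
        rw [← hx']
        conv_lhs => rw [hx', ← hx]
        rfl
      rintro _ ⟨w, hw, rfl⟩
      refine ⟨φ w, ?_, rfl⟩
      rw [SimpleGraph.ConnectedComponent.mem_supp_iff] at hw ⊢
      rw [← hCm, ← hw]
      rfl
    have hbij := (hSfin.injOn_iff_bijOn_of_mapsTo hmaps).1 γ.injective.injOn
    have hSi : ∀ x, γ x ∈ S ↔ x ∈ S := by
      intro x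
      refine ⟨fun h => ?_, fun h => hmaps h⟩
      obtain ⟨z, hz, hzx⟩ := hbij.surjOn h
      rwa [← γ.injective hzx]
    obtain ⟨δ, h1, h2⟩ := aux_case1 G γ S hSi hb
    exact aux_fin G hmotion δ S hSfin hSd h2 v (by rw [h1 v hv]; exact hSm v hv)
  · push Not at hcase
    obtain ⟨δ, h1, h2⟩ := aux_case2 G γ S hcase hb
    refine aux_fin G hmotion δ _ (hSfin.union (hSfin.image γ)) ?_ h2 v
      (by rw [h1 v hv]; exact hSm v hv)
    rintro x (hx | ⟨z, hz, rfl⟩)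
    · exact hSd x hx
    · refine ((hSd z hz).image γ).subset ?_
      intro y hy
      refine ⟨γ.symm y, ?_, by simp⟩
      have hy' : G.Adj (γ z) y := hy
      show G.Adj z (γ.symm y)
      rw [← γ.map_adj_iff]; simpa using hy'
end

section
/- Every countable connected graph in which every non-trivial automorphism moves infinitely many edges admits a distinguishing 2-edge colouring; that is, its distinguishing index D'(G) is at most 2. -/
theorem inf_part {V : Type} [Countable V] (G : SimpleGraph V) :
    ∃ F : SimpleGraph V, F ≤ G ∧
      (∀ x y, F.Adj x y → (G.neighborSet x).Infinite ∨ (G.neighborSet y).Infinite) ∧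
      ∀ γ : V ≃ V, (∀ x y, F.Adj (γ x) (γ y) ↔ F.Adj x y) →
        (∀ x, (G.neighborSet (γ x)).Infinite ↔ (G.neighborSet x).Infinite) →
        ∀ x, (G.neighborSet x).Infinite → γ x = x := by
  classical
  obtain ⟨e, he⟩ := exists_injective_nat V
  have hfinE : ∀ n : ℕ, {x | e x ≤ n}.Finite := fun n =>
    (Set.finite_Iic n).preimage he.injOn
  have hN : ∀ c, ∃ N : Set V, (G.neighborSet c).Infinite →
      (N ⊆ G.neighborSet c \ {x | e x ≤ e c} ∧ N.Finite ∧ N.ncard = (e c)^2) := by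
    intro c
    by_cases hc : (G.neighborSet c).Infinite
    · obtain ⟨N, h1, h2, h3⟩ := (hc.sdiff (hfinE (e c))).exists_subset_ncard_eq ((e c)^2)
      exact ⟨N, fun _ => ⟨h1, h2, h3⟩⟩
    · exact ⟨∅, fun h => absurd h hc⟩
  choose N hN using hN
  let R : V → V → Prop := fun x y => (G.neighborSet x).Infinite ∧ y ∈ N x
  have hRG : ∀ x y, R x y → G.Adj x y := fun x y h => ((hN x h.1).1 h.2).1
  have hRe : ∀ x y, R x y → e x < e y := fun x y h => by
    have := ((hN x h.1).1 h.2).2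
    simpa using this
  let F : SimpleGraph V :=
    { Adj := fun x y => R x y ∨ R y x
      symm := ⟨fun x y h => h.symm⟩
      loopless := ⟨fun x h => by rcases h with h | h <;> exact (lt_irrefl _ (hRe _ _ h))⟩ }
  have hcard : ∀ c, (G.neighborSet c).Infinite →
      (e c)^2 ≤ (F.neighborSet c).ncard ∧ (F.neighborSet c).ncard ≤ (e c)^2 + e c := by
    intro c hc
    obtain ⟨h1, h2, h3⟩ := hN c hc
    have hlow : {d | R d c}.Finite ∧ {d | R d c}.ncard ≤ e c := by
      have hsub : {d | R d c} ⊆ e ⁻¹' (Set.Iio (e c)) := fun d hd => hRe _ _ hd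
      have hf : (e ⁻¹' (Set.Iio (e c))).Finite := (Set.finite_Iio _).preimage he.injOn
      refine ⟨hf.subset hsub, (Set.ncard_le_ncard hsub hf).trans ?_⟩
      have := Set.ncard_le_ncard_of_injOn (s := e ⁻¹' (Set.Iio (e c))) (t := Set.Iio (e c)) e
        (fun a ha => ha) he.injOn (Set.finite_Iio _)
      refine this.trans ?_
      rw [Set.ncard_eq_toFinset_card']
      simp
    have heq : F.neighborSet c = N c ∪ {d | R d c} := by
      ext d
      simp only [SimpleGraph.mem_neighborSet, Set.mem_union, Set.mem_setOf_eq, F, R, hc, true_and]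
    rw [heq]
    constructor
    · rw [← h3]
      exact Set.ncard_le_ncard Set.subset_union_left (h2.union hlow.1)
    · refine (Set.ncard_union_le _ _).trans ?_
      rw [h3]
      exact Nat.add_le_add_left hlow.2 _
  refine ⟨F, ?_, ?_, ?_⟩
  · intro x y h
    rcases h with h | h
    · exact hRG _ _ h
    · exact (hRG _ _ h).symm
  · intro x y h
    rcases h with h | h
    · exact Or.inl h.1
    · exact Or.inr h.1
  · intro γ hγ hI x hx
    have hx' := (hI x).2 hx
    have hset : F.neighborSet (γ x) = γ '' F.neighborSet x := by
      ext y
      constructor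
      · intro h
        refine ⟨γ.symm y, ?_, by simp⟩
        have := (hγ x (γ.symm y)).1 (by simpa using h)
        exact this
      · rintro ⟨z, hz, rfl⟩
        exact (hγ x z).2 hz
    have hc : (F.neighborSet (γ x)).ncard = (F.neighborSet x).ncard := by
      rw [hset, Set.ncard_image_of_injective _ γ.injective]
    obtain ⟨a1, a2⟩ := hcard x hx
    obtain ⟨b1, b2⟩ := hcard _ hx'
    apply he
    rw [hc] at b1 b2
    by_contra hne
    rcases lt_or_gt_of_ne hne with h | h
    · nlinarith
    · nlinarith

/-- Delete all edges touching `X`. -/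
def delV {V : Type} (G : SimpleGraph V) (X : Set V) : SimpleGraph V where
  Adj x y := G.Adj x y ∧ x ∉ X ∧ y ∉ X
  symm := ⟨fun _ _ h => ⟨h.1.symm, h.2.2, h.2.1⟩⟩
  loopless := ⟨fun _ h => G.loopless.irrefl _ h.1⟩

theorem reach_closed {V : Type} (H : SimpleGraph V) (S : Set V)
    (hS : ∀ x y, x ∈ S → H.Adj x y → y ∈ S) {x y : V} (h : H.Reachable x y) (hx : x ∈ S) :
    y ∈ S := by
  obtain ⟨p⟩ := h
  induction p with
  | nil => exact hx
  | cons h p ih => exact ih (hS _ _ hx h)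

/-- The local modification of an automorphism. -/
theorem local_fwd {V : Type} (G : SimpleGraph V) (γ : V ≃ V)
    (hγ : ∀ x y, G.Adj (γ x) (γ y) ↔ G.Adj x y) (X M : Set V) (hX : ∀ x ∈ X, γ x = x)
    (hMX : ∀ x ∈ M, x ∉ X)
    (hcl : ∀ x y, x ∈ M → G.Adj x y → y ∈ M ∨ y ∈ X) (hM : γ '' M = M) :
    ∃ σ : V ≃ V, (∀ x ∈ M, σ x = γ x) ∧ (∀ x, x ∉ M → σ x = x) ∧
      (∀ x y, G.Adj (σ x) (σ y) ↔ G.Adj x y) := by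
  classical
  have hmem : ∀ x, γ x ∈ M ↔ x ∈ M := by
    intro x
    constructor
    · intro h
      rw [← hM] at h
      obtain ⟨z, hz, hzx⟩ := h
      rwa [← γ.injective hzx]
    · intro h
      rw [← hM]
      exact ⟨x, h, rfl⟩
  let σ : V ≃ V :=
    { toFun := fun x => if x ∈ M then γ x else x
      invFun := fun x => if x ∈ M then γ.symm x else x
      left_inv := by
        intro x
        by_cases h : x ∈ M
        · simp [h, hmem]
        · simp [h]
      right_inv := by
        intro x
        by_cases h : x ∈ M
        · have : γ.symm x ∈ M := by rw [← hmem]; simpa using h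
          simp [h, this]
        · simp [h] }
  have h1 : ∀ x ∈ M, σ x = γ x := fun x hx => if_pos hx
  have h2 : ∀ x, x ∉ M → σ x = x := fun x hx => if_neg hx
  have key : ∀ x y, x ∈ M → y ∉ M → (G.Adj (γ x) y ↔ G.Adj x y) := by
    intro x y hx hy
    by_cases hyX : y ∈ X
    · rw [← hγ x y, hX y hyX]
    · constructor
      · intro h
        rcases hcl _ _ ((hmem x).2 hx) h with h | h <;> contradiction
      · intro h
        rcases hcl _ _ hx h with h | h <;> contradiction
  refine ⟨σ, h1, h2, ?_⟩
  intro x y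
  by_cases hx : x ∈ M <;> by_cases hy : y ∈ M
  · rw [h1 x hx, h1 y hy, hγ]
  · rw [h1 x hx, h2 y hy, key x y hx hy]
  · rw [h2 x hx, h1 y hy, G.adj_comm, key y x hy hx, G.adj_comm]
  · rw [h2 x hx, h2 y hy]

theorem motion_part {V : Type} (G : SimpleGraph V) (γ : V ≃ V)
    (hγ : ∀ x y, G.Adj (γ x) (γ y) ↔ G.Adj x y) (X : Set V) (hX : ∀ x ∈ X, γ x = x)
    (v : V) (hv : γ v ≠ v) (hfin : {y | (delV G X).Reachable v y}.Finite)
    (hdeg : ∀ x, x ∉ X → (G.neighborSet x).Finite) :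
    ∃ σ : G ≃g G, σ v ≠ v ∧ {e : Sym2 V | e ∈ G.edgeSet ∧ e.map σ ≠ e}.Finite := by
  classical
  have hXm : ∀ x, γ x ∈ X ↔ x ∈ X := by
    intro x
    constructor
    · intro h
      have := γ.injective (hX _ h)
      rwa [this] at h
    · intro h
      rwa [hX x h]
  have hvX : v ∉ X := fun h => hv (hX v h)
  let γ' : delV G X ≃g delV G X :=
    { toEquiv := γ
      map_rel_iff' := by
        intro a b
        simp only [delV, hγ, hXm] }
  have hγ'r : ∀ a b, (delV G X).Reachable (γ a) (γ b) ↔ (delV G X).Reachable a b :=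
    fun a b => γ'.reachable_iff
  set M := {y | (delV G X).Reachable v y} with hMdef
  have hvM : v ∈ M := SimpleGraph.Reachable.refl _
  have hMX : ∀ x ∈ M, x ∉ X := fun x hx =>
    reach_closed (delV G X) Xᶜ (fun _ _ _ h => h.2.2) hx hvX
  have hcl : ∀ x y, x ∈ M → G.Adj x y → y ∈ M ∨ y ∈ X := by
    intro x y hx hxy
    by_cases hy : y ∈ X
    · exact Or.inr hy
    · left
      exact SimpleGraph.Reachable.trans hx (SimpleGraph.Adj.reachable ⟨hxy, hMX x hx, hy⟩)
  have fin_moved : ∀ (T : Set V), T.Finite → (∀ x ∈ T, x ∉ X) → ∀ σ : V ≃ V,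
      (∀ x, x ∉ T → σ x = x) →
      {e : Sym2 V | e ∈ G.edgeSet ∧ e.map σ ≠ e}.Finite := by
    intro T hT hTX σ hσ
    have : (⋃ x ∈ T, (fun y => s(x, y)) '' G.neighborSet x).Finite :=
      hT.biUnion (fun x hx => (hdeg x (hTX x hx)).image _)
    refine this.subset ?_
    rintro e ⟨he, hne⟩
    induction e using Sym2.ind with
    | _ a b =>
      simp only [Set.mem_iUnion]
      by_cases ha : a ∈ T
      · exact ⟨a, ha, b, he, rfl⟩
      · by_cases hb : b ∈ T
        · exact ⟨b, hb, a, SimpleGraph.Adj.symm he, Sym2.eq_swap⟩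
        · exact absurd (by simp [hσ a ha, hσ b hb]) hne
  by_cases hr : (delV G X).Reachable v (γ v)
  · have hM : γ '' M = M := by
      ext y
      constructor
      · rintro ⟨z, hz, rfl⟩
        exact SimpleGraph.Reachable.trans hr ((hγ'r v z).2 hz)
      · intro hy
        refine ⟨γ.symm y, ?_, by simp⟩
        have : (delV G X).Reachable (γ v) (γ (γ.symm y)) := by
          simpa using hr.symm.trans hy
        exact (hγ'r _ _).1 this
    obtain ⟨σ, h1, h2, h3⟩ := local_fwd G γ hγ X M hX hMX hcl hM
    refine ⟨⟨σ, fun {a b} => h3 a b⟩, ?_, fin_moved M hfin hMX σ h2⟩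
    show σ v ≠ v
    rw [h1 v hvM]; exact hv
  ·
    have hdisj : ∀ x ∈ M, γ x ∉ M := by
      intro x hx hx'
      exact hr (SimpleGraph.Reachable.trans hx' ((hγ'r v x).2 hx).symm)
    have hdisj' : ∀ x ∈ M, γ.symm x ∉ M := by
      intro x hx hx'
      exact hdisj _ hx' (by simpa using hx)
    let f : V → V := fun x => if x ∈ M then γ x else if γ.symm x ∈ M then γ.symm x else x
    have f1 : ∀ x ∈ M, f x = γ x := fun x hx => if_pos hx
    have f2 : ∀ x ∈ M, f (γ x) = x := fun x hx => by
      simp only [f, if_neg (hdisj x hx)]; simp [hx]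
    have f3 : ∀ x, x ∉ M → γ.symm x ∉ M → f x = x := fun x hx hx' => by
      simp only [f, if_neg hx, if_neg hx']
    have cases3 : ∀ x, x ∈ M ∨ (∃ z ∈ M, x = γ z) ∨ (x ∉ M ∧ γ.symm x ∉ M) := by
      intro x
      by_cases h : x ∈ M
      · exact Or.inl h
      · by_cases h' : γ.symm x ∈ M
        · exact Or.inr (Or.inl ⟨_, h', by simp⟩)
        · exact Or.inr (Or.inr ⟨h, h'⟩)
    have finv : ∀ x, f (f x) = x := by
      intro x
      rcases cases3 x with h | ⟨z, h, rfl⟩ | ⟨h, h'⟩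
      · rw [f1 x h, f2 x h]
      · rw [f2 z h, f1 z h]
      · rw [f3 x h h', f3 x h h']
    have hsym : ∀ x ∈ X, γ.symm x = x := fun x hx => by
      rw [Equiv.symm_apply_eq, hX x hx]
    have half : ∀ x y, x ∈ M → G.Adj x y → G.Adj (f x) (f y) := by
      intro x y hx hxy
      rcases hcl x y hx hxy with hy | hy
      · rw [f1 x hx, f1 y hy, hγ]; exact hxy
      · have : y ∉ M := fun h => hMX y h hy
        rw [f1 x hx, f3 y this (by rwa [hsym y hy]), ← hX y hy, hγ]; exact hxy
    have half' : ∀ x y, x ∈ M → G.Adj (γ x) y → G.Adj (f (γ x)) (f y) := by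
      intro x y hx hxy
      have hxy' : G.Adj x (γ.symm y) := by
        rw [← hγ]; simpa using hxy
      rcases hcl x _ hx hxy' with hy | hy
      · have hfy : f y = γ.symm y := by
          have := f2 _ hy
          simpa using this
        rw [f2 x hx, hfy]; exact hxy'
      · have hyX : y ∈ X := by
          have := (hXm _).2 hy
          simpa using this
        rw [f2 x hx, f3 y (fun h => hMX y h hyX) (fun h => hMX _ h hy)]
        rwa [hsym y hyX] at hxy'
    have fadj : ∀ x y, G.Adj x y → G.Adj (f x) (f y) := by
      intro x y hxy
      rcases cases3 x with h | ⟨z, h, rfl⟩ | ⟨h, h'⟩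
      · exact half x y h hxy
      · exact half' z y h hxy
      · rcases cases3 y with k | ⟨z, k, rfl⟩ | ⟨k, k'⟩
        · exact (half y x k hxy.symm).symm
        · exact (half' z x k hxy.symm).symm
        · rwa [f3 x h h', f3 y k k']
    let σ : V ≃ V := ⟨f, f, finv, finv⟩
    refine ⟨⟨σ, fun {a b} => ⟨fun h => ?_, fun h => fadj a b h⟩⟩, ?_, 
      fin_moved (M ∪ γ '' M) (hfin.union (hfin.image _)) ?_ σ ?_⟩
    · have := fadj _ _ h
      change G.Adj (f (f a)) (f (f b)) at this
      rwa [finv, finv] at this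
    · show f v ≠ v
      rw [f1 v hvM]; exact hv
    · rintro x (hx | ⟨z, hz, rfl⟩)
      · exact hMX x hx
      · rw [hXm]; exact hMX z hz
    · intro x hx
      refine f3 x (fun h => hx (Or.inl h)) (fun h => hx (Or.inr ⟨_, h, by simp⟩))

/-- `y` can be reached from `x` in at most `n` steps. -/
def near {V : Type} (H : SimpleGraph V) (n : ℕ) (x y : V) : Prop :=
  ∃ p : H.Walk x y, p.length ≤ n

theorem near_symm {V : Type} {H : SimpleGraph V} {n : ℕ} {x y : V} (h : near H n x y) :
    near H n y x := by
  obtain ⟨p, hp⟩ := h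
  exact ⟨p.reverse, by simpa using hp⟩

theorem near_finite {V : Type} (H : SimpleGraph V) (hH : ∀ x, (H.neighborSet x).Finite)
    (n : ℕ) : ∀ x, {y | near H n x y}.Finite := by
  induction n with
  | zero =>
    intro x
    refine (Set.finite_singleton x).subset ?_
    rintro y ⟨p, hp⟩
    exact (SimpleGraph.Walk.eq_of_length_eq_zero (Nat.le_zero.1 hp)).symm
  | succ n ih =>
    intro x
    refine ((Set.finite_singleton x).union ((hH x).biUnion (fun z _ => ih z))).subset ?_
    rintro y ⟨p, hp⟩
    cases p with
    | nil => exact Or.inl rfl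
    | cons h p =>
      right
      simp only [Set.mem_iUnion]
      refine ⟨_, h, p, ?_⟩
      simpa using hp

theorem near_map {V : Type} {H : SimpleGraph V} {γ : V ≃ V}
    (hγ : ∀ x y, H.Adj (γ x) (γ y) ↔ H.Adj x y) {n : ℕ} {x y : V} (h : near H n x y) :
    near H n (γ x) (γ y) := by
  obtain ⟨p, hp⟩ := h
  let φ : H →g H := ⟨γ, fun {a b} h => (hγ a b).2 h⟩
  exact ⟨p.map φ, by simpa using hp⟩

/-- A path of positive length, parametrised by `0, ..., len`. -/
structure Piece {V : Type} (H : SimpleGraph V) where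
  f : ℕ → V
  len : ℕ
  pos : 0 < len
  adj : ∀ i, i < len → H.Adj (f i) (f (i + 1))
  inj : ∀ i j, i ≤ len → j ≤ len → f i = f j → i = j

/-- The vertex set of a piece. -/
def Piece.verts {V : Type} {H : SimpleGraph V} (p : Piece H) : Set V :=
  {x | ∃ i, i ≤ p.len ∧ x = p.f i}

/-- The distances to `q` show that `p` cannot be flipped. -/
def PSep {V : Type} {H : SimpleGraph V} (q p : Piece H) : Prop :=
  ∃ D, (∀ y ∈ q.verts, H.Reachable (p.f 0) y → near H D (p.f 0) y) ∧
    ∀ y ∈ q.verts, ¬ near H D (p.f p.len) y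

/-- Compatibility of two pieces. -/
def Compat {V : Type} {H : SimpleGraph V} (p q : Piece H) : Prop :=
  Disjoint p.verts q.verts ∧ p.len ≠ q.len ∧ (PSep p q ∨ PSep q p)

theorem Compat.symm {V : Type} {H : SimpleGraph V} {p q : Piece H} (h : Compat p q) :
    Compat q p := ⟨h.1.symm, h.2.1.symm, h.2.2.symm⟩

theorem Piece.verts_finite {V : Type} {H : SimpleGraph V} (p : Piece H) : p.verts.Finite := by
  refine ((Set.finite_Iic p.len).image p.f).subset ?_
  rintro x ⟨i, hi, rfl⟩
  exact ⟨i, hi, rfl⟩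

theorem Piece.verts_ncard {V : Type} {H : SimpleGraph V} (p : Piece H) :
    p.verts.ncard = p.len + 1 := by
  have : p.verts = p.f '' (Set.Iic p.len) := by
    ext x
    constructor
    · rintro ⟨i, hi, rfl⟩
      exact ⟨i, hi, rfl⟩
    · rintro ⟨i, hi, rfl⟩
      exact ⟨i, hi, rfl⟩
  have hinj : Set.InjOn p.f (Set.Iic p.len) := fun i hi j hj h => p.inj i j hi hj h
  rw [this, hinj.ncard_image, Set.ncard_eq_toFinset_card']
  simp

theorem delV_le {V : Type} (H : SimpleGraph V) (X : Set V) : delV H X ≤ H := fun _ _ h => h.1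

theorem Piece.reach {V : Type} {H : SimpleGraph V} (p : Piece H) (F : SimpleGraph V)
    (hF : ∀ i, i < p.len → F.Adj (p.f i) (p.f (i + 1))) :
    ∀ x ∈ p.verts, F.Reachable (p.f 0) x := by
  rintro x ⟨i, hi, rfl⟩
  induction i with
  | zero => exact SimpleGraph.Reachable.refl _
  | succ i ih => exact (ih (by omega)).trans (hF i (by omega)).reachable

/-- All vertices of a family of pieces. -/
def allV {V : Type} {H : SimpleGraph V} (S : Set (Piece H)) : Set V := {x | ∃ p ∈ S, x ∈ p.verts}

theorem extend {V : Type} (H : SimpleGraph V) (hH : ∀ x, (H.neighborSet x).Finite)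
    (S : Set (Piece H)) (hS : S.Finite) (hc : S.Pairwise Compat) (v : V) :
    ∃ S' : Set (Piece H), S ⊆ S' ∧ S'.Finite ∧ S'.Pairwise Compat ∧
      (v ∈ allV S' ∨ {y | (delV H (allV S')).Reachable v y}.Finite) := by
  classical
  by_cases hv : v ∈ allV S
  · exact ⟨S, subset_rfl, hS, hc, Or.inl hv⟩
  by_cases hfin : {y | (delV H (allV S)).Reachable v y}.Finite
  · exact ⟨S, subset_rfl, hS, hc, Or.inr hfin⟩
  have hU : (allV S).Finite := by
    refine (hS.biUnion (fun p _ => p.verts_finite)).subset ?_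
    rintro x ⟨p, hp, hx⟩
    simp only [Set.mem_iUnion]
    exact ⟨p, hp, hx⟩
  obtain ⟨D1, hD1⟩ : ∃ D1, ∀ p ∈ S, p.len ≤ D1 := by
    obtain ⟨D, hD⟩ := (hS.image Piece.len).bddAbove
    exact ⟨D, fun p hp => hD ⟨p, hp, rfl⟩⟩
  obtain ⟨D2, hD2⟩ : ∃ D2, ∀ y ∈ allV S, H.dist v y ≤ D2 := by
    obtain ⟨D, hD⟩ := (hU.image (H.dist v)).bddAbove
    exact ⟨D, fun p hp => hD ⟨p, hp, rfl⟩⟩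
  set D := D1 + D2 with hD
  have hbad : (⋃ y ∈ insert v (allV S), {w | near H D y w}).Finite :=
    (hU.insert v).biUnion (fun y _ => near_finite H hH D y)
  obtain ⟨w, hw, hw'⟩ := (Set.Infinite.sdiff hfin hbad).nonempty
  have hfar : ∀ y, y = v ∨ y ∈ allV S → ¬ near H D y w := by
    intro y hy h
    apply hw'
    simp only [Set.mem_iUnion]
    exact ⟨y, hy, h⟩
  obtain ⟨p, hp⟩ := SimpleGraph.Reachable.exists_isPath (show (delV H (allV S)).Reachable v w from hw)
  have hlen : D < p.length := by
    by_contra h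
    refine hfar v (Or.inl rfl) ⟨p.mapLe (delV_le _ _), ?_⟩
    rw [SimpleGraph.Walk.length_mapLe]; omega
  let P : Piece H :=
    { f := p.getVert
      len := p.length
      pos := by omega
      adj := fun i hi => (p.adj_getVert_succ hi).1
      inj := fun i j hi hj h => hp.getVert_injOn hi hj h }
  have hPU : ∀ x ∈ P.verts, x ∉ allV S := by
    rintro x ⟨i, hi, rfl⟩
    change i ≤ p.length at hi
    change p.getVert i ∉ _
    rcases Nat.lt_or_ge i p.length with h | h
    · exact (p.adj_getVert_succ h).2.1
    · have h1 : i - 1 < p.length := by omega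
      have := (p.adj_getVert_succ h1).2.2
      rwa [show i - 1 + 1 = i by omega] at this
  have hcomp : ∀ q ∈ S, Compat q P := by
    intro q hq
    refine ⟨?_, ?_, Or.inl ⟨D, ?_, ?_⟩⟩
    · rw [Set.disjoint_left]
      intro x hx hx'
      exact hPU x hx' ⟨q, hq, hx⟩
    · have := hD1 q hq
      change q.len ≠ p.length
      omega
    · intro y hy hr
      have h0 : P.f 0 = v := p.getVert_zero
      rw [h0] at hr ⊢
      obtain ⟨r, hr⟩ := hr.exists_walk_length_eq_dist
      have := hD2 y ⟨q, hq, hy⟩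
      exact ⟨r, by omega⟩
    · intro y hy hn
      have h0 : P.f P.len = w := p.getVert_length
      rw [h0] at hn
      exact hfar y (Or.inr ⟨q, hq, hy⟩) (near_symm hn)
  refine ⟨insert P S, Set.subset_insert _ _, hS.insert P, ?_, Or.inl ⟨P, Set.mem_insert _ _, 0, Nat.zero_le _, ?_⟩⟩
  · intro a ha b hb hab
    rcases ha with rfl | ha <;> rcases hb with rfl | hb
    · exact absurd rfl hab
    · exact (hcomp b hb).symm
    · exact hcomp a ha
    · exact hc ha hb hab
  · exact p.getVert_zero.symm

theorem family {V : Type} [Countable V] (H : SimpleGraph V)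
    (hH : ∀ x, (H.neighborSet x).Finite) :
    ∃ S : Set (Piece H), S.Pairwise Compat ∧
      ∀ v, {y | (delV H (allV S)).Reachable v y}.Finite := by
  classical
  rcases isEmpty_or_nonempty V with hV | hV
  · exact ⟨∅, Set.pairwise_empty _, fun v => (hV.false v).elim⟩
  obtain ⟨e, he⟩ := exists_surjective_nat V
  choose g g1 g2 g3 g4 using extend H hH
  let T : ℕ → {S : Set (Piece H) // S.Finite ∧ S.Pairwise Compat} := fun n =>
    Nat.rec ⟨∅, Set.finite_empty, Set.pairwise_empty _⟩
      (fun n S => ⟨g S.1 S.2.1 S.2.2 (e n), g2 _ _ _ _, g3 _ _ _ _⟩) n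
  have hstep : ∀ n, (T (n + 1)).1 = g (T n).1 (T n).2.1 (T n).2.2 (e n) := fun n => rfl
  have hmono : Monotone (fun n => (T n).1) := by
    refine monotone_nat_of_le_succ (fun n => ?_)
    show (T n).1 ⊆ (T (n+1)).1
    rw [hstep]
    exact g1 _ _ _ _
  refine ⟨⋃ n, (T n).1, ?_, ?_⟩
  · intro a ha b hb hab
    obtain ⟨i, hi⟩ := Set.mem_iUnion.1 ha
    obtain ⟨j, hj⟩ := Set.mem_iUnion.1 hb
    exact (T (max i j)).2.2 (hmono (le_max_left i j) hi) (hmono (le_max_right i j) hj) hab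
  · intro v
    obtain ⟨n, rfl⟩ := he v
    have hsub : allV (T (n + 1)).1 ⊆ allV (⋃ n, (T n).1) := by
      rintro x ⟨p, hp, hx⟩
      exact ⟨p, Set.mem_iUnion.2 ⟨n + 1, hp⟩, hx⟩
    have h4 := g4 (T n).1 (T n).2.1 (T n).2.2 (e n)
    rw [← hstep] at h4
    rcases h4 with h | h
    · refine (Set.finite_singleton (e n)).subset ?_
      intro y hy
      exact reach_closed _ {e n} (fun x y hx hxy => by
        rw [Set.mem_singleton_iff.1 hx] at hxy
        exact absurd (hsub h) hxy.2.1) hy rfl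
    · refine h.subset ?_
      intro y hy
      have hle : delV H (allV (⋃ n, (T n).1)) ≤ delV H (allV (T (n + 1)).1) :=
        fun a b hab => ⟨hab.1, fun h => hab.2.1 (hsub h), fun h => hab.2.2 (hsub h)⟩
      exact SimpleGraph.Reachable.mono hle hy

theorem fin_part {V : Type} [Countable V] (H : SimpleGraph V)
    (hH : ∀ x, (H.neighborSet x).Finite) :
    ∃ (F : SimpleGraph V) (X : Set V), F ≤ H ∧
      (∀ γ : V ≃ V, (∀ x y, H.Adj (γ x) (γ y) ↔ H.Adj x y) →
        (∀ x y, F.Adj (γ x) (γ y) ↔ F.Adj x y) → ∀ x ∈ X, γ x = x) ∧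
      ∀ v, {y | (delV H X).Reachable v y}.Finite := by
  classical
  obtain ⟨S, hS, hfin⟩ := family H hH
  let R : V → V → Prop := fun x y => ∃ p ∈ S, ∃ i, i < p.len ∧ x = p.f i ∧ y = p.f (i + 1)
  have hRH : ∀ x y, R x y → H.Adj x y := by
    rintro x y ⟨p, hp, i, hi, rfl, rfl⟩
    exact p.adj i hi
  let F : SimpleGraph V :=
    { Adj := fun x y => R x y ∨ R y x
      symm := ⟨fun x y h => h.symm⟩
      loopless := ⟨fun x h => by rcases h with h | h <;> exact H.loopless.irrefl _ (hRH _ _ h)⟩ }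
  have hFle : F ≤ H := by
    intro x y h
    rcases h with h | h
    · exact hRH _ _ h
    · exact (hRH _ _ h).symm
  have huniq : ∀ p ∈ S, ∀ q ∈ S, ∀ x, x ∈ p.verts → x ∈ q.verts → p = q := by
    intro p hp q hq x hx hx'
    by_contra hne
    exact Set.disjoint_left.1 (hS hp hq hne).1 hx hx'
  have hFp : ∀ p ∈ S, ∀ i, i < p.len → F.Adj (p.f i) (p.f (i + 1)) :=
    fun p hp i hi => Or.inl ⟨p, hp, i, hi, rfl, rfl⟩
  have hFn : ∀ p ∈ S, ∀ i, i ≤ p.len → ∀ y, F.Adj (p.f i) y →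
      (i < p.len ∧ y = p.f (i + 1)) ∨ ∃ j, i = j + 1 ∧ y = p.f j := by
    rintro p hp i hi y (⟨q, hq, j, hj, h1, h2⟩ | ⟨q, hq, j, hj, h1, h2⟩)
    · have : p = q := huniq p hp q hq (p.f i) ⟨i, hi, rfl⟩ ⟨j, hj.le, h1⟩
      subst this
      have : i = j := p.inj i j hi hj.le h1
      subst this
      exact Or.inl ⟨hj, h2⟩
    · have : p = q := huniq p hp q hq (p.f i) ⟨i, hi, rfl⟩ ⟨j + 1, hj, h2⟩
      subst this
      have : i = j + 1 := p.inj i (j + 1) hi hj h2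
      exact Or.inr ⟨j, this, h1⟩
  have hcompo : ∀ p ∈ S, ∀ x ∈ p.verts, {y | F.Reachable x y} = p.verts := by
    intro p hp x hx
    ext y
    constructor
    · intro h
      refine reach_closed F p.verts ?_ h hx
      rintro a b ⟨i, hi, rfl⟩ hab
      rcases hFn p hp i hi b hab with ⟨h, rfl⟩ | ⟨j, rfl, rfl⟩
      · exact ⟨i + 1, h, rfl⟩
      · exact ⟨j, by omega, rfl⟩
    · intro hy
      exact (p.reach F (hFp p hp) x hx).symm.trans (p.reach F (hFp p hp) y hy)
  have hpres : ∀ γ : V ≃ V, (∀ x y, F.Adj (γ x) (γ y) ↔ F.Adj x y) →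
      ∀ p ∈ S, ∀ x ∈ p.verts, γ x ∈ p.verts := by
    intro γ hγ p hp x hx
    let φ : F ≃g F := ⟨γ, fun {a b} => hγ a b⟩
    have hset : {y | F.Reachable (γ x) y} = γ '' {y | F.Reachable x y} := by
      ext y
      constructor
      · intro h
        refine ⟨γ.symm y, ?_, by simp⟩
        have h' : F.Reachable (φ x) (φ (γ.symm y)) := by
          show F.Reachable (γ x) (γ (γ.symm y))
          simpa using h
        exact φ.reachable_iff.1 h'
      · rintro ⟨z, hz, rfl⟩
        exact φ.reachable_iff.2 hz
    have hcard : {y | F.Reachable (γ x) y}.ncard = p.len + 1 := by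
      rw [hset, Set.ncard_image_of_injective _ γ.injective, hcompo p hp x hx, p.verts_ncard]
    obtain ⟨i, hi, rfl⟩ := hx
    have hnb : ∃ z, F.Adj (p.f i) z := by
      rcases Nat.lt_or_ge i p.len with h | h
      · exact ⟨_, hFp p hp i h⟩
      · have hpos := p.pos
        obtain ⟨j, rfl⟩ : ∃ j, i = j + 1 := ⟨i - 1, by omega⟩
        exact ⟨_, (hFp p hp j (by omega)).symm⟩
    obtain ⟨z, hz⟩ := hnb
    have hin : ∃ q ∈ S, γ (p.f i) ∈ q.verts := by
      rcases (hγ _ _).2 hz with ⟨q, hq, j, hj, h1, h2⟩ | ⟨q, hq, j, hj, h1, h2⟩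
      · exact ⟨q, hq, j, hj.le, h1⟩
      · exact ⟨q, hq, j + 1, hj, h2⟩
    obtain ⟨q, hq, hqx⟩ := hin
    rw [hcompo q hq _ hqx, q.verts_ncard] at hcard
    have : q = p := by
      by_contra hne
      exact (hS hq hp hne).2.1 (by omega)
    rwa [this] at hqx
  let X : Set V := {x | ∃ p ∈ S, x ∈ p.verts ∧ ∃ q ∈ S, PSep q p ∧
    ∃ y ∈ q.verts, H.Reachable (p.f 0) y}
  refine ⟨F, X, hFle, ?_, ?_⟩
  · rintro γ hγH hγF x ⟨p, hp, hx, q, hq, ⟨D, hD1, hD2⟩, y, hy, hr⟩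
    have h0 : γ (p.f 0) = p.f 0 := by
      obtain ⟨j, hj, hj'⟩ := hpres γ hγF p hp (p.f 0) ⟨0, Nat.zero_le _, rfl⟩
      rcases Nat.eq_zero_or_pos j with rfl | hjpos
      · exact hj'
      exfalso
      rcases Nat.lt_or_ge j p.len with h | h
      · obtain ⟨k, rfl⟩ : ∃ k, j = k + 1 := ⟨j - 1, by omega⟩
        have a1 : F.Adj (γ (p.f 0)) (γ (γ.symm (p.f (k + 1 + 1)))) := by
          rw [hj']; simpa using hFp p hp (k + 1) h
        have a2 : F.Adj (γ (p.f 0)) (γ (γ.symm (p.f k))) := by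
          rw [hj']; simpa using (hFp p hp k (by omega)).symm
        rw [hγF] at a1 a2
        have key : ∀ y, F.Adj (p.f 0) y → y = p.f 1 := by
          intro y hy
          rcases hFn p hp 0 (Nat.zero_le _) y hy with ⟨_, h⟩ | ⟨j, h, _⟩
          · exact h
          · omega
        have := γ.symm.injective ((key _ a1).trans (key _ a2).symm)
        have := p.inj _ _ h (by omega) this
        omega
      · have : j = p.len := le_antisymm hj h
        subst this
        have := near_map hγH (hD1 y hy hr)
        rw [hj'] at this
        exact hD2 _ (hpres γ hγF q hq y hy) this
    have hall : ∀ i, i ≤ p.len → γ (p.f i) = p.f i := by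
      intro i
      induction i using Nat.strong_induction_on with
      | _ i ih =>
        intro hi
        rcases i with _ | i
        · exact h0
        · have hadj := (hγF _ _).2 (hFp p hp i hi)
          rw [ih i (by omega) (by omega)] at hadj
          rcases hFn p hp i (by omega) _ hadj with ⟨_, h⟩ | ⟨j, rfl, h⟩
          · exact h
          · exfalso
            have h' := ih j (by omega) (by omega)
            have := γ.injective (h.trans h'.symm)
            have := p.inj _ _ hi (by omega) this
            omega
    obtain ⟨i, hi, rfl⟩ := hx
    exact hall i hi
  · intro v
    let B : Set V := {x | x ∈ allV S ∧ x ∉ X ∧ H.Reachable v x}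
    have hBfin : B.Finite := by
      by_cases hB : B.Nonempty
      · obtain ⟨b, ⟨p, hp, hb⟩, hbX, hbr⟩ := hB
        refine p.verts_finite.subset ?_
        rintro c ⟨⟨q, hq, hc⟩, hcX, hcr⟩
        by_cases hpq : q = p
        · rwa [hpq] at hc
        exfalso
        have r1 : H.Reachable (p.f 0) b := p.reach H p.adj b hb
        have r2 : H.Reachable (q.f 0) c := q.reach H q.adj c hc
        rcases (hS hq hp hpq).2.2 with h | h
        · exact hbX ⟨p, hp, hb, q, hq, h, c, hc, r1.trans (hbr.symm.trans hcr)⟩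
        · exact hcX ⟨q, hq, hc, p, hp, h, b, hb, r2.trans (hcr.symm.trans hbr)⟩
      · rw [Set.not_nonempty_iff_eq_empty.1 hB]; exact Set.finite_empty
    let C : V → Set V := fun x => {y | (delV H (allV S)).Reachable x y}
    have hCfin : ∀ x, (C x).Finite := hfin
    have hbig : (C v ∪ B ∪ ⋃ b ∈ B, ⋃ z ∈ H.neighborSet b, C z).Finite :=
      ((hCfin v).union hBfin).union
        (hBfin.biUnion (fun b _ => (hH b).biUnion (fun z _ => hCfin z)))
    refine hbig.subset ?_
    intro y hy
    have hXsub : X ⊆ allV S := by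
      rintro x ⟨p, hp, hx, _⟩
      exact ⟨p, hp, hx⟩
    refine (reach_closed (delV H X)
      ((C v ∪ B ∪ ⋃ b ∈ B, ⋃ z ∈ H.neighborSet b, C z) ∩ {x | H.Reachable v x}) ?_ hy
      ⟨Or.inl (Or.inl (SimpleGraph.Reachable.refl _)), SimpleGraph.Reachable.refl _⟩).1
    rintro a b ⟨ha, har⟩ hab
    have hbr : H.Reachable v b := SimpleGraph.Reachable.trans har hab.1.reachable
    refine ⟨?_, hbr⟩
    by_cases hbS : b ∈ allV S
    · exact Or.inl (Or.inr ⟨hbS, hab.2.2, hbr⟩)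
    by_cases haS : a ∈ allV S
    · right
      simp only [Set.mem_iUnion]
      exact ⟨a, ⟨haS, hab.2.1, har⟩, b, hab.1, SimpleGraph.Reachable.refl _⟩
    have hr : (delV H (allV S)).Reachable a b := SimpleGraph.Adj.reachable ⟨hab.1, haS, hbS⟩
    rcases ha with (ha | ha) | ha
    · exact Or.inl (Or.inl (SimpleGraph.Reachable.trans ha hr))
    · exact absurd ha.1 haS
    · right
      simp only [Set.mem_iUnion] at ha ⊢
      obtain ⟨c, hc, z, hz, h⟩ := ha
      exact ⟨c, hc, z, hz, SimpleGraph.Reachable.trans h hr⟩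

/-- Every countable connected graph in which every non-trivial automorphism
moves infinitely many edges admits a distinguishing 2-edge colouring, i.e. `D'(G) ≤ 2`. -/
theorem stmt_2 {V : Type} [Countable V] (G : SimpleGraph V) (hconn : G.Connected)
    (hmotion : ∀ γ : G ≃g G, (∃ v, γ v ≠ v) →
      {e : Sym2 V | e ∈ G.edgeSet ∧ e.map γ ≠ e}.Infinite) :
    ∃ c : G.edgeSet → Fin 2, ∀ γ : G ≃g G,
      (∀ e : G.edgeSet, c (γ.mapEdgeSet e) = c e) → ∀ v, γ v = v := by
  classical
  let I : Set V := {x | (G.neighborSet x).Infinite}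
  let H : SimpleGraph V := delV G I
  have hH : ∀ x, (H.neighborSet x).Finite := by
    intro x
    by_cases hx : x ∈ I
    · refine Set.finite_empty.subset ?_
      intro y hy
      exact absurd hx hy.2.1
    · exact (Set.not_infinite.1 hx).subset (fun y hy => hy.1)
  obtain ⟨F1, hF1, hF1I, hfix1⟩ := inf_part G
  obtain ⟨F2, X, hF2, hfix2, hfin⟩ := fin_part H hH
  refine ⟨fun e => if e.1 ∈ (F1 ⊔ F2).edgeSet then 1 else 0, ?_⟩
  intro γ hγ v
  by_contra hv
  have hadj : ∀ x y, G.Adj (γ x) (γ y) ↔ G.Adj x y := fun x y => γ.map_adj_iff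
  have hF : ∀ x y, (F1 ⊔ F2).Adj (γ x) (γ y) ↔ (F1 ⊔ F2).Adj x y := by
    have hle : F1 ⊔ F2 ≤ G := sup_le hF1 (hF2.trans (delV_le _ _))
    intro x y
    by_cases hxy : G.Adj x y
    · have h := hγ ⟨s(x, y), hxy⟩
      have e1 : (γ.mapEdgeSet ⟨s(x, y), hxy⟩).1 = s(γ x, γ y) := rfl
      simp only [e1, SimpleGraph.mem_edgeSet] at h
      by_cases h1 : (F1 ⊔ F2).Adj (γ x) (γ y) <;> by_cases h2 : (F1 ⊔ F2).Adj x y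
      · exact iff_of_true h1 h2
      · rw [if_pos h1, if_neg h2] at h; exact absurd h (by decide)
      · rw [if_neg h1, if_pos h2] at h; exact absurd h (by decide)
      · exact iff_of_false h1 h2
    · exact iff_of_false (fun h => hxy ((hadj x y).1 (hle h))) (fun h => hxy (hle h))
  have hI : ∀ x, (G.neighborSet (γ x)).Infinite ↔ (G.neighborSet x).Infinite := by
    intro x
    have : G.neighborSet (γ x) = γ '' G.neighborSet x := by
      ext y
      constructor
      · intro h
        refine ⟨γ.symm y, ?_, by simp⟩
        exact (hadj x _).1 (by simpa using h)
      · rintro ⟨z, hz, rfl⟩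
        exact (hadj x z).2 hz
    rw [this, Set.infinite_image_iff γ.injective.injOn]
  have hI' : ∀ x, γ x ∈ I ↔ x ∈ I := hI
  have c1 : ∀ x y, F1.Adj x y ↔ (F1 ⊔ F2).Adj x y ∧ (x ∈ I ∨ y ∈ I) := by
    intro x y
    constructor
    · intro h
      exact ⟨Or.inl h, hF1I x y h⟩
    · rintro ⟨h | h, h'⟩
      · exact h
      · have := hF2 h
        exact absurd h' (not_or.2 this.2)
  have c2 : ∀ x y, F2.Adj x y ↔ (F1 ⊔ F2).Adj x y ∧ ¬ (x ∈ I ∨ y ∈ I) := by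
    intro x y
    constructor
    · intro h
      exact ⟨Or.inr h, not_or.2 (hF2 h).2⟩
    · rintro ⟨h | h, h'⟩
      · exact absurd (hF1I x y h) h'
      · exact h
  have g1 : ∀ x ∈ I, γ x = x := by
    refine hfix1 γ.toEquiv ?_ hI
    intro x y
    show F1.Adj (γ x) (γ y) ↔ F1.Adj x y
    rw [c1, c1 x y, hF, hI', hI']
  have g2 : ∀ x ∈ X, γ x = x := by
    refine hfix2 γ.toEquiv ?_ ?_
    · intro x y
      show (G.Adj (γ x) (γ y) ∧ γ x ∉ I ∧ γ y ∉ I) ↔ (G.Adj x y ∧ x ∉ I ∧ y ∉ I)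
      rw [hadj, hI', hI']
    · intro x y
      show F2.Adj (γ x) (γ y) ↔ F2.Adj x y
      rw [c2, c2 x y, hF, hI', hI']
  have hle : delV G (I ∪ X) ≤ delV H X := fun a b hab =>
    ⟨⟨hab.1, fun h => hab.2.1 (Or.inl h), fun h => hab.2.2 (Or.inl h)⟩,
      fun h => hab.2.1 (Or.inr h), fun h => hab.2.2 (Or.inr h)⟩
  obtain ⟨σ, hσ, hσf⟩ := motion_part G γ.toEquiv hadj (I ∪ X)
    (fun x hx => hx.elim (g1 x) (g2 x)) v hv
    ((hfin v).subset (fun y hy => SimpleGraph.Reachable.mono hle hy))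
    (fun x hx => Set.not_infinite.1 (fun h => hx (Or.inl h)))
  exact hmotion σ ⟨v, hσ⟩ hσf
end

section
/- Let G be a graph whose line graph L(G) is countable and connected, and suppose every non-trivial automorphism of L(G) moves infinitely many vertices of L(G). Then L(G) admits a distinguishing 2-vertex colouring. -/
namespace LG
open SimpleGraph

/-- The graph obtained by keeping only the edges with both ends in `S`. -/
def resG {V : Type} (H : SimpleGraph V) (S : Set V) : SimpleGraph V where
  Adj a b := H.Adj a b ∧ a ∈ S ∧ b ∈ S
  symm := ⟨fun _ _ h => ⟨h.1.symm, h.2.2, h.2.1⟩⟩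
  loopless := ⟨fun _ h => h.1.ne rfl⟩

/-- Induction along reachability. -/
theorem reach_ind {V : Type} {K : SimpleGraph V} {v : V} {p : V → Prop} (h0 : p v)
    (hs : ∀ a b, K.Reachable v a → K.Adj a b → p a → p b) {u : V} (h : K.Reachable v u) : p u := by
  rw [reachable_iff_reflTransGen] at h
  induction h with
  | refl => exact h0
  | tail h1 h2 ih => exact hs _ _ ((reachable_iff_reflTransGen _ _).2 h1) h2 ih

theorem reach_step {V : Type} {K : SimpleGraph V} {v a b : V} (h : K.Reachable v a)
    (h2 : K.Adj a b) : K.Reachable v b := h.trans h2.reachable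

theorem reach_mem {V : Type} {H : SimpleGraph V} {S : Set V} {v u : V} (hv : v ∈ S)
    (h : (resG H S).Reachable v u) : u ∈ S :=
  reach_ind (K := resG H S) (p := fun u => u ∈ S) hv (fun _ _ _ h _ => h.2.2) h

theorem reach_mono {V : Type} {K L : SimpleGraph V} (hKL : ∀ a b, K.Adj a b → L.Adj a b)
    {v u : V} (h : K.Reachable v u) : L.Reachable v u :=
  reach_ind (p := fun u => L.Reachable v u) (Reachable.refl _)
    (fun _ _ _ h ih => reach_step ih (hKL _ _ h)) h

theorem reach_map {V : Type} {K L : SimpleGraph V} (f : V → V)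
    (hKL : ∀ a b, K.Adj a b → L.Adj (f a) (f b))
    {v u : V} (h : K.Reachable v u) : L.Reachable (f v) (f u) :=
  reach_ind (p := fun u => L.Reachable (f v) (f u)) (Reachable.refl _)
    (fun _ _ _ h ih => reach_step ih (hKL _ _ h)) h

/-- Normal rooted spanning forest of `H` on the vertex set `Y`. -/
structure NT {V : Type} (H : SimpleGraph V) (Y : Set V) (rt : V → V) (d : V → ℕ)
    (anc : ℕ → V → V) : Prop where
  d_anc : ∀ v ∈ Y, ∀ n ≤ d v, d (anc n v) = n
  mem_anc : ∀ v ∈ Y, ∀ n ≤ d v, anc n v ∈ Y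
  anc_self : ∀ v ∈ Y, anc (d v) v = v
  anc_anc : ∀ v ∈ Y, ∀ m n, m ≤ n → n ≤ d v → anc m (anc n v) = anc m v
  adj_anc : ∀ v ∈ Y, ∀ n, n < d v → H.Adj (anc n v) (anc (n+1) v)
  comp : ∀ u ∈ Y, ∀ v ∈ Y, H.Adj u v →
    (d u < d v ∧ anc (d u) v = u) ∨ (d v < d u ∧ anc (d v) u = v)
  zero : ∀ v ∈ Y, anc 0 v = rt v

open Classical in
noncomputable def pick {V : Type} (H : SimpleGraph V) (ι : V → ℕ) (u : V) (S C : Set V) : V :=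
  if h : ∃ w, w ∈ C ∧ H.Adj u w ∧ ∀ a ∈ C, (∀ b ∈ C, ι a ≤ ι b) → ∀ w' ∈ C, H.Adj u w' →
    (resG H S).dist w a ≤ (resG H S).dist w' a then h.choose else u

theorem pick_spec {V : Type} (H : SimpleGraph V) (ι : V → ℕ) (u : V) (S C : Set V)
    (hι : Set.InjOn ι C) (hne : ∃ w ∈ C, H.Adj u w) :
    pick H ι u S C ∈ C ∧ H.Adj u (pick H ι u S C) ∧
    ∀ a ∈ C, (∀ b ∈ C, ι a ≤ ι b) → ∀ w' ∈ C, H.Adj u w' →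
    (resG H S).dist (pick H ι u S C) a ≤ (resG H S).dist w' a := by
  have h : ∃ w, w ∈ C ∧ H.Adj u w ∧ ∀ a ∈ C, (∀ b ∈ C, ι a ≤ ι b) → ∀ w' ∈ C, H.Adj u w' →
    (resG H S).dist w a ≤ (resG H S).dist w' a := by
    obtain ⟨w0, hw0, hw0'⟩ := hne
    have hex : ∃ a ∈ C, ∀ b ∈ C, ι a ≤ ι b := by
      obtain ⟨a, ha, hm⟩ := WellFounded.has_min (measure ι).wf C ⟨w0, hw0⟩
      exact ⟨a, ha, fun b hb => not_lt.1 (hm b hb)⟩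
    obtain ⟨a, ha, ham⟩ := hex
    obtain ⟨w, hw, hwm⟩ := WellFounded.has_min (measure fun w => (resG H S).dist w a).wf
      {w | w ∈ C ∧ H.Adj u w} ⟨w0, hw0, hw0'⟩
    refine ⟨w, hw.1, hw.2, fun a' ha' hm' w' hw' hadj => ?_⟩
    have : a' = a := hι ha' ha (le_antisymm (hm' _ ha) (ham _ ha'))
    subst this
    exact not_lt.1 (hwm w' ⟨hw', hadj⟩)
  unfold pick
  rw [dif_pos h]
  exact h.choose_spec

/-- The state at level `n` of the search for `v`: the allowed set and the level-`n` ancestor. -/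
noncomputable def st {V : Type} (H : SimpleGraph V) (ι : V → ℕ) (rt : V → V) :
    ℕ → V → Set V × V
  | 0, v => (Set.univ, rt v)
  | n+1, v =>
    let S := (st H ι rt n v).1
    let x := (st H ι rt n v).2
    let S' := {t | t ∈ S ∧ v ∈ S ∧ (resG H S).Reachable v t} \ {x}
    (S', pick H ι x S' {t | (resG H S').Reachable v t})

section
variable {V : Type} {H : SimpleGraph V} {ι : V → ℕ} {rt : V → V}

theorem st_same (hrt : ∀ a b, H.Adj a b → rt a = rt b) (n : ℕ) (v u : V)
    (hv : v ∈ (st H ι rt n v).1)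
    (h : (resG H (st H ι rt n v).1).Reachable v u) : st H ι rt n u = st H ι rt n v := by
  induction n generalizing u with
  | zero =>
    simp only [st]
    congr 1
    exact (reach_ind (K := resG H _) (p := fun u => rt u = rt v) rfl
      (fun a b _ hab ih => (hrt _ _ hab.1).symm.trans ih) h)
  | succ n ih =>
    have hu := reach_mem hv h
    have hv' := hv
    simp only [st] at hu hv'
    obtain ⟨⟨hu1, hv1, hr⟩, hux⟩ := hu
    have e := ih u hv1 hr
    have hS : (st H ι rt (n+1) u).1 = (st H ι rt (n+1) v).1 := by
      simp only [st, e]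
      ext t
      constructor
      · rintro ⟨⟨a, b, c⟩, d⟩
        exact ⟨⟨a, hv1, hr.trans c⟩, d⟩
      · rintro ⟨⟨a, b, c⟩, d⟩
        exact ⟨⟨a, hu1, hr.symm.trans c⟩, d⟩
    refine Prod.ext hS ?_
    have hC : {t | (resG H (st H ι rt (n+1) u).1).Reachable u t} =
        {t | (resG H (st H ι rt (n+1) v).1).Reachable v t} := by
      rw [hS]
      ext t
      exact ⟨fun ht => h.trans ht, fun ht => h.symm.trans ht⟩
    change pick H ι (st H ι rt n u).2 (st H ι rt (n+1) u).1
        {t | (resG H (st H ι rt (n+1) u).1).Reachable u t} =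
      pick H ι (st H ι rt n v).2 (st H ι rt (n+1) v).1
        {t | (resG H (st H ι rt (n+1) v).1).Reachable v t}
    rw [hC, hS, e]

theorem st_alive {n : ℕ} {v : V} (h : v ∈ (st H ι rt (n+1) v).1) :
    v ∈ (st H ι rt n v).1 ∧ v ≠ (st H ι rt n v).2 := by
  simp only [st] at h
  exact ⟨h.1.1, h.2⟩

theorem st_alive' {n : ℕ} {v : V} (h : v ∈ (st H ι rt n v).1) (h' : v ≠ (st H ι rt n v).2) :
    v ∈ (st H ι rt (n+1) v).1 := by
  simp only [st]
  exact ⟨⟨h, h, Reachable.refl _⟩, h'⟩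

theorem st_alive_le {m n : ℕ} (hmn : m ≤ n) {v : V} (h : v ∈ (st H ι rt n v).1) :
    v ∈ (st H ι rt m v).1 := by
  induction hmn with
  | refl => exact h
  | step _ ih => exact ih (st_alive h).1

theorem st_sub {n : ℕ} {v u : V} (h : v ∈ (st H ι rt (n+1) v).1)
    (hr : (resG H (st H ι rt (n+1) v).1).Reachable v u) :
    (resG H (st H ι rt n v).1).Reachable v u ∧ u ≠ (st H ι rt n v).2 := by
  have := reach_mem h hr
  simp only [st] at this
  exact ⟨this.1.2.2, this.2⟩

variable {Y : Set V}

theorem reachY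
    (hY : ∀ a b, H.Adj a b → a ∈ Y)
    {v u : V} (hv : v ∈ Y) (h : H.Reachable v u) : u ∈ Y :=
  reach_ind (p := fun u => u ∈ Y) hv (fun _ _ _ h _ => hY _ _ h.symm) h

theorem reachY'
    (hY : ∀ a b, H.Adj a b → a ∈ Y)
    {S : Set V} {v u : V} (hv : v ∈ Y) (h : (resG H S).Reachable v u) : u ∈ Y :=
  reachY hY hv (reach_mono (K := resG H S) (fun _ _ h => h.1) h)

theorem exists_last {S S' : Set V} {v x : V} (hvx : v ≠ x) 
    (hS' : ∀ t, (resG H S).Reachable v t → t ≠ x → t ∈ S')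
    (h : (resG H S).Reachable v x) : ∃ w, (resG H S').Reachable v w ∧ H.Adj x w := by
  have : (x ≠ x ∧ (resG H S').Reachable v x) ∨
      ∃ w, (resG H S').Reachable v w ∧ H.Adj x w := by
    refine reach_ind (p := fun t => (t ≠ x ∧ (resG H S').Reachable v t) ∨
      ∃ w, (resG H S').Reachable v w ∧ H.Adj x w) (Or.inl ⟨hvx, Reachable.refl _⟩) ?_ h
    intro a b hra hab ih
    rcases ih with ⟨hax, ih⟩ | ih
    · by_cases hb : b = x
      · subst hb
        exact Or.inr ⟨a, ih, hab.1.symm⟩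
      · exact Or.inl ⟨hb, reach_step ih ⟨hab.1, hS' _ hra hax, hS' _ (reach_step hra hab) hb⟩⟩
    · exact Or.inr ih
  rcases this with h | h
  · exact absurd rfl h.1
  · exact h

theorem st_root
    (hY : ∀ a b, H.Adj a b → a ∈ Y) (hι : Set.InjOn ι Y) (hrt2 : ∀ v ∈ Y, H.Reachable v (rt v))
    (n : ℕ) (v : V) (hvY : v ∈ Y) (hv : v ∈ (st H ι rt n v).1) :
    (resG H (st H ι rt n v).1).Reachable v (st H ι rt n v).2 ∧
    (∀ m, n = m + 1 → H.Adj (st H ι rt m v).2 (st H ι rt n v).2 ∧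
      ∀ a, (resG H (st H ι rt n v).1).Reachable v a →
      (∀ b, (resG H (st H ι rt n v).1).Reachable v b → ι a ≤ ι b) → 
      ∀ w', (resG H (st H ι rt n v).1).Reachable v w' → H.Adj (st H ι rt m v).2 w' →
    (resG H (st H ι rt n v).1).dist (st H ι rt n v).2 a ≤
      (resG H (st H ι rt n v).1).dist w' a) := by
  induction n with
  | zero =>
    refine ⟨?_, fun m hm => by omega⟩
    exact reach_mono (L := resG H Set.univ) (fun a b h => ⟨h, trivial, trivial⟩) (hrt2 v hvY)
  | succ n ih =>
    obtain ⟨h1, h2⟩ := st_alive hv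
    have ih1 := (ih h1).1
    have hl := exists_last (S' := (st H ι rt (n+1) v).1) h2 (by
      intro t ht htx
      simp only [st]
      exact ⟨⟨reach_mem h1 ht, h1, ht⟩, htx⟩) ih1
    obtain ⟨w, hw1, hw2⟩ := hl
    have := pick_spec H ι (st H ι rt n v).2 (st H ι rt (n+1) v).1
      {t | (resG H (st H ι rt (n+1) v).1).Reachable v t}
      (hι.mono (fun t ht => reachY' hY hvY ht)) ⟨w, hw1, hw2⟩
    refine ⟨this.1, ?_⟩
    intro m hm
    obtain rfl : n = m := by omega
    exact this.2

theorem walk_avoid {S S' : Set V} {x w a : V} (p : (resG H S).Walk w a) (hx : x ∉ p.support)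
    (hS : ∀ t, (resG H S).Reachable w t → t ≠ x → t ∈ S') :
    ∃ q : (resG H S').Walk w a, q.length = p.length := by
  induction p with
  | nil => exact ⟨Walk.nil, rfl⟩
  | @cons u v w h p ih =>
    rw [Walk.support_cons, List.mem_cons, not_or] at hx
    obtain ⟨q, hq⟩ := ih hx.2 (fun t ht => hS t (h.reachable.trans ht))
    have hv : v ≠ x := fun e => hx.2 (e ▸ p.start_mem_support)
    exact ⟨Walk.cons (show (resG H S').Adj u v from
      ⟨h.1, hS _ (Reachable.refl _) (Ne.symm hx.1), hS _ h.reachable hv⟩) q, by simp [hq]⟩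

theorem st_dies
    (hY : ∀ a b, H.Adj a b → a ∈ Y) (hι : Set.InjOn ι Y) (hrt2 : ∀ v ∈ Y, H.Reachable v (rt v))
    (v : V) (hvY : v ∈ Y) : ∃ n, v ∈ (st H ι rt n v).1 ∧ (st H ι rt n v).2 = v := by
  by_contra hcon
  push Not at hcon
  have al : ∀ n, v ∈ (st H ι rt n v).1 := by
    intro n
    induction n with
    | zero => trivial
    | succ n ih => exact st_alive' ih (hcon n ih).symm
  have hmin : ∀ n, ∃ a, (resG H (st H ι rt n v).1).Reachable v a ∧
      ∀ b, (resG H (st H ι rt n v).1).Reachable v b → ι a ≤ ι b := by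
    intro n
    obtain ⟨a, ha, hm⟩ := WellFounded.has_min (measure ι).wf
      {a | (resG H (st H ι rt n v).1).Reachable v a} ⟨v, Reachable.refl _⟩
    exact ⟨a, ha, fun b hb => not_lt.1 (hm b hb)⟩
  choose a ha ham using hmin
  let f : ℕ → ℕ ×ₗ ℕ := fun n => toLex (ι v - ι (a n),
    (resG H (st H ι rt n v).1).dist (st H ι rt n v).2 (a n))
  have hdec : ∀ n, f (n+1) < f n := by
    intro n
    have hle : ι (a n) ≤ ι (a (n+1)) := ham n _ (st_sub (al (n+1)) (ha (n+1))).1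
    have hle2 : ι (a (n+1)) ≤ ι v := ham (n+1) v (Reachable.refl _)
    rcases hle.lt_or_eq with hlt | heq
    · refine Prod.Lex.toLex_lt_toLex.2 (Or.inl ?_)
      simp only
      omega
    · have hae : a (n+1) = a n :=
        hι (reachY' hY hvY (ha (n+1))) (reachY' hY hvY (ha n)) heq.symm
      refine Prod.Lex.toLex_lt_toLex.2 (Or.inr ⟨by simp only [hae], ?_⟩)
      simp only
      have hax : a (n+1) ≠ (st H ι rt n v).2 := (st_sub (al (n+1)) (ha (n+1))).2
      have hroot := (st_root hY hι hrt2 n v hvY (al n)).1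
      have hreach : (resG H (st H ι rt n v).1).Reachable (st H ι rt n v).2 (a (n+1)) :=
        hroot.symm.trans (st_sub (al (n+1)) (ha (n+1))).1
      rw [← hae]
      obtain ⟨p, hp⟩ := hreach.exists_walk_length_eq_dist
      have hpath := p.isPath_of_length_eq_dist hp
      have hp2 := (st_root hY hι hrt2 (n+1) v hvY (al (n+1))).2 n rfl
      rw [← hp]
      have hS' : ∀ t, (resG H (st H ι rt n v).1).Reachable v t → t ≠ (st H ι rt n v).2 →
          t ∈ (st H ι rt (n+1) v).1 := by
        intro t ht htx
        simp only [st]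
        exact ⟨⟨reach_mem (al n) ht, al n, ht⟩, htx⟩
      have ha1 := ha (n+1)
      have ham1 := ham (n+1)
      generalize a (n+1) = a1 at *
      generalize hx : (st H ι rt n v).2 = x at *
      cases p with
      | nil => exact absurd rfl hax
      | @cons _ w' _ h q =>
        rw [Walk.cons_isPath_iff] at hpath
        obtain ⟨q', hq'⟩ := walk_avoid (S' := (st H ι rt (n+1) v).1) q hpath.2
          (fun t ht => hS' t (hroot.trans (h.reachable.trans ht)))
        have h2 := hp2.2 a1 ha1 ham1 w' (ha1.trans q'.reachable.symm) h.1
        have h3 := dist_le q'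
        rw [Walk.length_cons]
        omega
  exact (not_strictAnti_of_wellFoundedLT f) (strictAnti_nat_of_succ_lt hdec)

theorem st_sub_le {m n : ℕ} (hmn : m ≤ n) {v u : V} (h : v ∈ (st H ι rt n v).1)
    (hr : (resG H (st H ι rt n v).1).Reachable v u) :
    (resG H (st H ι rt m v).1).Reachable v u := by
  induction hmn with
  | refl => exact hr
  | step _ ih => exact ih (st_alive h).1 (st_sub h hr).1

theorem exists_NT
    (hrt : ∀ a b, H.Adj a b → rt a = rt b) (hY : ∀ a b, H.Adj a b → a ∈ Y) (hι : Set.InjOn ι Y) (hrt2 : ∀ v ∈ Y, H.Reachable v (rt v))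
    : ∃ d anc, NT H Y rt d anc := by
  classical
  let d : V → ℕ := fun v => if h : ∃ n, v ∈ (st H ι rt n v).1 ∧ (st H ι rt n v).2 = v
    then h.choose else 0
  have hd : ∀ v ∈ Y, v ∈ (st H ι rt (d v) v).1 ∧ (st H ι rt (d v) v).2 = v := by
    intro v hv
    have h := st_dies hY hι hrt2 v hv
    simp only [d, dif_pos h]
    exact h.choose_spec
  have al : ∀ v ∈ Y, ∀ n ≤ d v, v ∈ (st H ι rt n v).1 :=
    fun v hv n hn => st_alive_le hn (hd v hv).1
  have ne : ∀ v ∈ Y, ∀ n < d v, v ≠ (st H ι rt n v).2 :=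
    fun v hv n hn => (st_alive (al v hv (n+1) hn)).2
  have uniq : ∀ v ∈ Y, ∀ n, v ∈ (st H ι rt n v).1 → (st H ι rt n v).2 = v → d v = n := by
    intro v hv n h1 h2
    rcases lt_trichotomy (d v) n with h | h | h
    · exact absurd (hd v hv).2.symm (st_alive (st_alive_le h h1)).2
    · exact h
    · exact absurd h2.symm (ne v hv n h)
  have key : ∀ v ∈ Y, ∀ u, H.Adj v u → ∀ n, n ≤ d v → n ≤ d u →
      (resG H (st H ι rt n v).1).Reachable v u := by
    intro v hv u hvu n
    have hu : u ∈ Y := hY _ _ hvu.symm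
    induction n with
    | zero =>
      intro _ _
      exact Adj.reachable (show (resG H Set.univ).Adj v u from ⟨hvu, trivial, trivial⟩)
    | succ n ih =>
      intro h1 h2
      have h3 := ih (by omega) (by omega)
      have h4 := st_same hrt n v u (al v hv n (by omega)) h3
      have h5 := ne u hu n (by omega)
      rw [h4] at h5
      have h6 : u ∈ (st H ι rt (n+1) v).1 := by
        simp only [st]
        exact ⟨⟨reach_mem (al v hv n (by omega)) h3, al v hv n (by omega), h3⟩, h5⟩
      exact Adj.reachable (show (resG H _).Adj v u from ⟨hvu, al v hv _ h1, h6⟩)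
  refine ⟨d, fun n v => (st H ι rt n v).2, ?_⟩
  refine ⟨?_, ?_, ?_, ?_, ?_, ?_, ?_⟩
  · intro v hv n hn
    have h1 := (st_root hY hι hrt2 n v hv (al v hv n hn)).1
    have h2 := st_same hrt n v _ (al v hv n hn) h1
    apply uniq _ (reachY' hY hv h1)
    · rw [h2]
      exact reach_mem (al v hv n hn) h1
    · rw [h2]
  · intro v hv n hn
    exact reachY' hY hv (st_root hY hι hrt2 n v hv (al v hv n hn)).1
  · intro v hv
    exact (hd v hv).2
  · intro v hv m n hmn hn
    have h1 := (st_root hY hι hrt2 n v hv (al v hv n hn)).1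
    have h2 := st_sub_le hmn (al v hv n hn) h1
    have h3 := st_same hrt m v _ (al v hv m (by omega)) h2
    simp only [h3]
  · intro v hv n hn
    exact ((st_root hY hι hrt2 (n+1) v hv (al v hv _ hn)).2 n rfl).1
  · have half : ∀ u ∈ Y, ∀ v ∈ Y, H.Adj u v → d u ≤ d v →
      (d u < d v ∧ (st H ι rt (d u) v).2 = u) := by
      intro u hu v hv huv hle
      have h1 := st_same hrt _ _ _ (al u hu _ le_rfl) (key u hu v huv (d u) le_rfl hle)
      have h2 : (st H ι rt (d u) v).2 = u := by rw [h1]; exact (hd u hu).2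
      refine ⟨lt_of_le_of_ne hle ?_, h2⟩
      intro e
      rw [e, (hd v hv).2] at h2
      exact huv.ne h2.symm
    intro u hu v hv huv
    rcases le_total (d u) (d v) with h | h
    · exact Or.inl (half u hu v hv huv h)
    · exact Or.inr (half v hv u hu huv.symm h)
  · intro v hv
    rfl
end
end LG

namespace LG
open SimpleGraph

/-- The subtree of `y`. -/
def Tr {V : Type} (Y : Set V) (d : V → ℕ) (anc : ℕ → V → V) (y : V) : Set V :=
  {t | t ∈ Y ∧ d y ≤ d t ∧ anc (d y) t = y}

/-- A valid flip with lower bound `d u` and upper bound `m`. -/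
structure ValidF {V : Type} (H : SimpleGraph V) (Y : Set V) (d : V → ℕ) (anc : ℕ → V → V)
    (u z : V) (m : ℕ) : Prop where
  hu : u ∈ Y
  hz : z ∈ Y
  lt : d u < d z
  hanc : anc (d u) z = u
  adj : H.Adj u z
  le : d u ≤ m
  alt : (d z = d u + 1 ∧ ∀ t ∈ Tr Y d anc z, H.Adj u t → t = z) ∨
    (d u + 1 < d z ∧ ∃ b ∈ Y, d z < d b ∧ anc (d z) b = z ∧ H.Adj (anc (d z - 1) z) b ∧ d b ≤ m)

/-- A separated family of valid flips. -/
structure FS {V : Type} (H : SimpleGraph V) (Y : Set V) (d : V → ℕ) (anc : ℕ → V → V)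
    (F : V → V → ℕ → Prop) : Prop where
  valid : ∀ u z m, F u z m → ValidF H Y d anc u z m
  sep : ∀ u z m u' z' m', F u z m → F u' z' m' →
    (u = u' ∧ z = z' ∧ m = m') ∨ m + 2 ≤ d u' ∨ m' + 2 ≤ d u

/-- Flipped edges. -/
def Fl {V : Type} (F : V → V → ℕ → Prop) (u z : V) : Prop := ∃ m, F u z m

def upE {V : Type} (d : V → ℕ) (anc : ℕ → V → V)
    (F : V → V → ℕ → Prop) (u v : V) : Prop :=
  ¬ ((d v = d u + 1 ∧ anc (d u) v = u) ↔ Fl F u v)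

def oneY {V : Type} (d : V → ℕ) (anc : ℕ → V → V)
    (F : V → V → ℕ → Prop) (u v : V) : Prop :=
  upE d anc F u v ∨ upE d anc F v u

/-- Structure preserving maps. -/
structure Pres {V : Type} (H : SimpleGraph V) (Y : Set V) (rt : V → V) (d : V → ℕ)
    (anc : ℕ → V → V) (F : V → V → ℕ → Prop) (φ : V → V) : Prop where
  mem : ∀ v ∈ Y, φ v ∈ Y
  adj : ∀ a b, H.Adj a b → H.Adj (φ a) (φ b)
  one : ∀ a b, a ∈ Y → b ∈ Y → H.Adj a b → (oneY d anc F (φ a) (φ b) ↔ oneY d anc F a b)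
  hrt : ∀ v ∈ Y, φ (rt v) = rt (φ v)

section
variable {V : Type} {H : SimpleGraph V} {Y : Set V} {rt : V → V} {d : V → ℕ}
  {anc : ℕ → V → V} {F : V → V → ℕ → Prop}

theorem oneY_iff (hF : FS H Y d anc F) {u t : V} (h1 : d u < d t) (h2 : anc (d u) t = u) :
    oneY d anc F u t ↔ ¬ (d t = d u + 1 ↔ Fl F u t) := by
  have h3 : ¬ upE d anc F t u := by
    unfold upE
    rw [not_not]
    constructor
    · rintro ⟨h, _⟩; omega
    · rintro ⟨m, h⟩
      have := (hF.valid _ _ _ h).lt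
      omega
  unfold oneY
  rw [or_iff_left h3, upE]
  simp only [h2, and_true]

theorem Fl_unique (hF : FS H Y d anc F) {u z u' z' : V} (h : Fl F u z) (h' : Fl F u' z')
    (hd : d u = d u') : u = u' ∧ z = z' := by
  obtain ⟨m, h⟩ := h
  obtain ⟨m', h'⟩ := h'
  have h1 := (hF.valid _ _ _ h).le
  have h2 := (hF.valid _ _ _ h').le
  rcases hF.sep _ _ _ _ _ _ h h' with h3 | h3 | h3
  · exact ⟨h3.1, h3.2.1⟩
  · omega
  · omega

/-- comparable adjacent vertices have equal ancestors at common levels -/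
theorem anc_eq_of_adj (hT : NT H Y rt d anc) {a b : V} (ha : a ∈ Y) (hb : b ∈ Y)
    (hab : H.Adj a b) {n : ℕ} (h1 : n ≤ d a) (h2 : n ≤ d b) : anc n a = anc n b := by
  rcases hT.comp a ha b hb hab with ⟨h, h'⟩ | ⟨h, h'⟩
  · rw [← hT.anc_anc b hb n (d a) h1 h.le, h']
  · rw [← hT.anc_anc a ha n (d b) h2 h.le, h']

/-- The claim at level `n`. -/
def Cl (Y : Set V) (d : V → ℕ) (anc : ℕ → V → V) (n : ℕ) (φ : V → V) : Prop :=
  ∀ v ∈ Y, n ≤ d v → n ≤ d (φ v) ∧ φ (anc n v) = anc n (φ v)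

theorem clX (hT : NT H Y rt d anc) {n : ℕ} {φ : V → V} (hφ : Pres H Y rt d anc F φ)
    (hinj : Function.Injective φ) (hc : Cl Y d anc n φ) (t : V) (ht : t ∈ Y) (h : n + 1 ≤ d t) :
    n + 1 ≤ d (φ t) := by
  obtain ⟨h1, h2⟩ := hc t ht (by omega)
  by_contra hcon
  have h3 : d (φ t) = n := by omega
  have h4 := hT.anc_self _ (hφ.mem t ht)
  rw [h3, ← h2] at h4
  have h5 := hT.d_anc t ht n (by omega)
  rw [hinj h4] at h5
  omega

theorem clY (hT : NT H Y rt d anc) {n : ℕ} {φ : V → V} (hφ : Pres H Y rt d anc F φ)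
    (hinj : Function.Injective φ) (hc : Cl Y d anc n φ) (k : ℕ) : ∀ (t : V) (_ : t ∈ Y)
    (_ : n + 1 ≤ d t) (_ : d t = n + 1 + k), anc (n+1) (φ t) = anc (n+1) (φ (anc (n+1) t)) := by
  induction k with
  | zero =>
    intro t ht h hk
    have : anc (n+1) t = t := by
      have := hT.anc_self t ht
      rwa [hk] at this
    rw [this]
  | succ k ih =>
    intro t ht h hk
    have hp := hT.mem_anc t ht (n+1+k) (by omega)
    have hdp := hT.d_anc t ht (n+1+k) (by omega)
    have had := hT.adj_anc t ht (n+1+k) (by omega)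
    have hs := hT.anc_self t ht
    rw [hk] at hs
    rw [show n+1+k+1 = n+1+(k+1) by omega, hs] at had
    have e1 := ih _ hp (by omega) hdp
    rw [hT.anc_anc t ht _ _ (by omega) (by omega)] at e1
    rw [← e1]
    exact (anc_eq_of_adj hT (hφ.mem _ hp) (hφ.mem _ ht) (hφ.adj _ _ had)
      (clX hT hφ hinj hc _ hp (by omega)) (clX hT hφ hinj hc _ ht (by omega))).symm

theorem no_swap (hT : NT H Y rt d anc) (hF : FS H Y d anc F) {n : ℕ} {φ : V → V}
    (hφ : Pres H Y rt d anc F φ) (hinj : Function.Injective φ)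
    (hX : ∀ t ∈ Y, n + 1 ≤ d t → n + 1 ≤ d (φ t)) {u w z : V} {m : ℕ}
    (hfl : F u z m) (hu : d u = n) (hw : w ∈ Y) (hwd : d w = n + 1) (hzw : φ z = w) {b : V}
    (hlt : n + 1 < d z)
    (hb : b ∈ Y) (hzb : d z < d b) (hab : anc (d z) b = z) (had : H.Adj (anc (d z - 1) z) b)
    (hbm : d b ≤ m) : False := by
  have hz := (hF.valid _ _ _ hfl).hz
  have noF : ∀ a c, n + 1 ≤ d a → d a ≤ m + 1 → ¬ Fl F a c := by
    rintro a c h1 h2 ⟨m1, h3⟩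
    have h4 := (hF.valid _ _ _ h3).le
    rcases hF.sep _ _ _ _ _ _ hfl h3 with h | h | h
    · rw [← h.1] at h1
      omega
    · omega
    · omega
  have hone : ∀ a c, n + 1 ≤ d a → d a ≤ m + 1 → d a < d c → anc (d a) c = a →
      (oneY d anc F a c ↔ d c = d a + 1) := by
    intro a c h1 h2 h3 h4
    rw [oneY_iff hF h3 h4]
    simp [noF a c h1 h2]
  have inv : ∀ i, d z + i ≤ d b → d (φ (anc (d z + i) b)) = n + 1 + i ∧
      ∀ j ≤ i, anc (n + 1 + j) (φ (anc (d z + i) b)) = φ (anc (d z + j) b) := by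
    intro i
    induction i with
    | zero =>
      intro _
      refine ⟨by rw [add_zero, hab, hzw, hwd], ?_⟩
      intro j hj
      obtain rfl : j = 0 := by omega
      simp only [add_zero]
      rw [hab, hzw, ← hwd, hT.anc_self w hw]
    | succ i ih =>
      intro hi
      obtain ⟨ih1, ih2⟩ := ih (by omega)
      have hq := hT.mem_anc b hb (d z + i) (by omega)
      have hq' := hT.mem_anc b hb (d z + (i+1)) (by omega)
      have hdq := hT.d_anc b hb (d z + i) (by omega)
      have hdq' := hT.d_anc b hb (d z + (i+1)) (by omega)
      have hadj := hT.adj_anc b hb (d z + i) (by omega)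
      have hanq := hT.anc_anc b hb (d z + i) (d z + (i+1)) (by omega) (by omega)
      rw [show d z + i + 1 = d z + (i+1) by omega] at hadj
      have h1 : oneY d anc F (anc (d z + i) b) (anc (d z + (i+1)) b) := by
        rw [hone _ _ (by omega) (by omega) (by omega) (by rw [hdq, hanq])]
        omega
      have h2 := (hφ.one _ _ hq hq' hadj).2 h1
      rcases hT.comp _ (hφ.mem _ hq) _ (hφ.mem _ hq') (hφ.adj _ _ hadj) with ⟨h, h'⟩ | ⟨h, h'⟩
      · rw [hone _ _ (by omega) (by omega) h h'] at h2
        refine ⟨by omega, ?_⟩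
        intro j hj
        rcases hj.lt_or_eq with hj | rfl
        · rw [← hT.anc_anc _ (hφ.mem _ hq') (n+1+j) (n+1+i) (by omega) (by omega)]
          rw [ih1] at h'
          rw [h', ih2 j (by omega)]
        · have := hT.anc_self _ (hφ.mem _ hq')
          rw [h2, ih1] at this
          exact this
      · exfalso
        have h3 := hX _ hq' (by omega)
        obtain ⟨j, hj⟩ : ∃ j, d (φ (anc (d z + (i+1)) b)) = n + 1 + j :=
          ⟨d (φ (anc (d z + (i+1)) b)) - (n+1), by omega⟩
        rw [hj, ih2 j (by omega)] at h'
        have := hT.d_anc b hb (d z + j) (by omega)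
        rw [hinj h'] at this
        omega
  have htY := hT.mem_anc z hz (d z - 1) (by omega)
  have htd := hT.d_anc z hz (d z - 1) (by omega)
  have htz := hT.adj_anc z hz (d z - 1) (by omega)
  rw [show d z - 1 + 1 = d z by omega, hT.anc_self z hz] at htz
  generalize htt : anc (d z - 1) z = t at *
  have h1 : oneY d anc F t z := by
    rw [hone _ _ (by omega) _ (by omega) (by rw [htd, htt])]
    · omega
    · omega
  have h2 := (hφ.one _ _ htY hz htz).2 h1
  have h3 := hX t htY (by omega)
  have h4 : d (φ t) = n + 2 := by
    rcases hT.comp _ (hφ.mem _ htY) _ (hφ.mem _ hz) (hφ.adj _ _ htz) with ⟨h, h'⟩ | ⟨h, h'⟩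
    · rw [hzw] at h
      omega
    · unfold oneY at h2
      rw [or_comm] at h2
      have := (hone (φ z) (φ t) (by rw [hzw]; omega) (by rw [hzw]; omega) h h').1 h2
      rw [hzw] at this
      omega
  obtain ⟨h5, h6⟩ := inv (d b - d z) (by omega)
  rw [show d z + (d b - d z) = d b by omega, hT.anc_self b hb] at h5 h6
  have h7 := h6 1 (by omega)
  rcases hT.comp _ (hφ.mem _ htY) _ (hφ.mem _ hb) (hφ.adj _ _ had) with ⟨h, h'⟩ | ⟨h, h'⟩
  · rw [h4] at h'
    rw [h'] at h7
    have := hT.d_anc b hb (d z + 1) (by omega)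
    rw [← hinj h7] at this
    omega
  · omega

theorem cl_succ (hT : NT H Y rt d anc) (hF : FS H Y d anc F) {n : ℕ} {φ ψ : V → V}
    (hφ : Pres H Y rt d anc F φ) (hψ : Pres H Y rt d anc F ψ)
    (hl : ∀ v, ψ (φ v) = v) (hr : ∀ v, φ (ψ v) = v)
    (hc : Cl Y d anc n φ) (hc' : Cl Y d anc n ψ) : Cl Y d anc (n+1) φ := by
  have hinj : Function.Injective φ := Function.LeftInverse.injective hl
  have hinj' : Function.Injective ψ := Function.LeftInverse.injective hr
  intro v hv hnv
  have hnv' := clX hT hφ hinj hc v hv hnv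
  refine ⟨hnv', ?_⟩
  have hv' := hφ.mem v hv
  have huY := hT.mem_anc v hv n (by omega)
  have hud := hT.d_anc v hv n (by omega)
  have huY' := hT.mem_anc _ hv' n (by omega)
  have hud' := hT.d_anc _ hv' n (by omega)
  have hwY := hT.mem_anc v hv (n+1) (by omega)
  have hwd := hT.d_anc v hv (n+1) (by omega)
  have hwY' := hT.mem_anc _ hv' (n+1) (by omega)
  have hwd' := hT.d_anc _ hv' (n+1) (by omega)
  have huw := hT.adj_anc v hv n (by omega)
  have huw' := hT.adj_anc _ hv' n (by omega)
  have haw := hT.anc_anc v hv n (n+1) (by omega) (by omega)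
  have haw' := hT.anc_anc _ hv' n (n+1) (by omega) (by omega)
  have hφu := (hc v hv (by omega)).2
  have e1 : anc (n+1) (φ (anc (n+1) v)) = anc (n+1) (φ v) :=
    (clY hT hφ hinj hc (d v - (n+1)) v hv hnv (by omega)).symm
  have e2 : anc (n+1) (ψ (anc (n+1) (φ v))) = anc (n+1) v := by
    have := (clY hT hψ hinj' hc' (d (φ v) - (n+1)) _ hv' hnv' (by omega)).symm
    rwa [hl] at this
  by_contra hne
  set u := anc n v with hu
  set w := anc (n+1) v with hw
  set u' := anc n (φ v) with hu'
  set w' := anc (n+1) (φ v) with hw'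
  set x := φ w with hx
  set y := ψ w' with hy
  have hxY : x ∈ Y := hφ.mem _ hwY
  have hyY : y ∈ Y := hψ.mem _ hwY'
  have hxd : n + 1 ≤ d x := clX hT hφ hinj hc _ hwY (by omega)
  have hyd : n + 1 ≤ d y := clX hT hψ hinj' hc' _ hwY' (by omega)
  have hyw : y ≠ w := by
    intro e
    apply hne
    rw [hx, ← e, hy, hr]
  have hxd2 : d x ≠ n + 1 := by
    intro e
    apply hne
    rw [← e1, ← e, hT.anc_self _ hxY]
  have hyd2 : d y ≠ n + 1 := by
    intro e
    apply hyw
    rw [← e2, ← e, hT.anc_self _ hyY]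
  have hux : H.Adj u' x := by
    rw [← hφu]; exact hφ.adj _ _ huw
  have huy : H.Adj u y := by
    have := hψ.adj _ _ huw'
    rwa [← hφu, hl] at this
  have hax : anc n x = u' := by
    rw [← haw', ← e1, hT.anc_anc _ hxY _ _ (by omega) (by omega)]
  have hay : anc n y = u := by
    rw [← haw, ← e2, hT.anc_anc _ hyY _ _ (by omega) (by omega)]
  -- the four colours
  have c1 : oneY d anc F u w ↔ ¬ Fl F u w := by
    rw [oneY_iff hF (by omega) (by rw [hud, haw]), hud, hwd]; simp
  have c1' : oneY d anc F u' w' ↔ ¬ Fl F u' w' := by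
    rw [oneY_iff hF (by omega) (by rw [hud', haw']), hud', hwd']; simp
  have c2 : oneY d anc F u' x ↔ Fl F u' x := by
    rw [oneY_iff hF (by omega) (by rw [hud', hax]), hud']; simp [hxd2]
  have c2' : oneY d anc F u y ↔ Fl F u y := by
    rw [oneY_iff hF (by omega) (by rw [hud, hay]), hud]; simp [hyd2]
  have k1 : Fl F u' x ↔ ¬ Fl F u w := by
    have := hφ.one _ _ huY hwY huw
    rw [hφu] at this
    rw [← c2, ← c1]
    exact this
  have k2 : Fl F u y ↔ ¬ Fl F u' w' := by
    have := hψ.one _ _ huY' hwY' huw'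
    rw [← hφu, hl] at this
    rw [hφu] at this
    rw [← c2', ← c1']
    exact this
  have n1 : ¬ Fl F u w := by
    rintro ⟨m, hm⟩
    rcases (hF.valid _ _ _ hm).alt with ⟨_, h⟩ | ⟨h, _⟩
    · exact hyw (h y ⟨hyY, by omega, by rw [hwd, e2]⟩ huy)
    · omega
  have n2 : ¬ Fl F u' w' := by
    rintro ⟨m, hm⟩
    rcases (hF.valid _ _ _ hm).alt with ⟨_, h⟩ | ⟨h, _⟩
    · exact hne (h x ⟨hxY, by omega, by rw [hwd', e1]⟩ hux)
    · omega
  have f1 := k1.2 n1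
  have f2 := k2.2 n2
  obtain ⟨g1, g2⟩ := Fl_unique hF f1 f2 (by rw [hud, hud'])
  have hww : w' = w := by rw [← e1, g2, e2]
  obtain ⟨m, hm⟩ := f2
  rcases (hF.valid _ _ _ hm).alt with ⟨h, _⟩ | ⟨h, b, hb, h2, h3, h4, h5⟩
  · omega
  · exact no_swap hT hF hφ hinj (clX hT hφ hinj hc) hm hud hwY hwd
      (by rw [hy, hr, hww]) (by omega) hb h2 h3 h4 h5

theorem cl_all (hT : NT H Y rt d anc) (hF : FS H Y d anc F) {φ ψ : V → V}
    (hφ : Pres H Y rt d anc F φ) (hψ : Pres H Y rt d anc F ψ)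
    (hl : ∀ v, ψ (φ v) = v) (hr : ∀ v, φ (ψ v) = v) (n : ℕ) :
    Cl Y d anc n φ ∧ Cl Y d anc n ψ := by
  induction n with
  | zero =>
    refine ⟨fun v hv _ => ⟨Nat.zero_le _, ?_⟩, fun v hv _ => ⟨Nat.zero_le _, ?_⟩⟩
    · rw [hT.zero v hv, hT.zero _ (hφ.mem v hv), hφ.hrt v hv]
    · rw [hT.zero v hv, hT.zero _ (hψ.mem v hv), hψ.hrt v hv]
  | succ n ih =>
    exact ⟨cl_succ hT hF hφ hψ hl hr ih.1 ih.2, cl_succ hT hF hψ hφ hr hl ih.2 ih.1⟩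

/-- Depth and ancestors are preserved, and the lower end of every flip is fixed,
together with all its ancestors. -/
theorem decode (hT : NT H Y rt d anc) (hF : FS H Y d anc F) {φ ψ : V → V}
    (hφ : Pres H Y rt d anc F φ) (hψ : Pres H Y rt d anc F ψ)
    (hl : ∀ v, ψ (φ v) = v) (hr : ∀ v, φ (ψ v) = v) {u z : V} {m : ℕ} (h : F u z m) {y : V}
    (hu : u ∈ Tr Y d anc y) : φ y = y := by
  have hd : ∀ v ∈ Y, d (φ v) = d v := by
    intro v hv
    have h1 := ((cl_all hT hF hφ hψ hl hr (d v)).1 v hv le_rfl).1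
    have h2 := ((cl_all hT hF hφ hψ hl hr (d (φ v))).2 _ (hφ.mem v hv) le_rfl).1
    rw [hl] at h2
    omega
  have ha : ∀ v ∈ Y, ∀ n ≤ d v, φ (anc n v) = anc n (φ v) :=
    fun v hv n hn => ((cl_all hT hF hφ hψ hl hr n).1 v hv hn).2
  have hv := hF.valid _ _ _ h
  have hua : anc (d (φ u)) (φ z) = φ u := by
    rw [hd u hv.hu, ← ha z hv.hz _ hv.lt.le, hv.hanc]
  have hlt : d (φ u) < d (φ z) := by rw [hd u hv.hu, hd z hv.hz]; exact hv.lt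
  have h1 := hφ.one _ _ hv.hu hv.hz hv.adj
  rw [oneY_iff hF hlt hua, oneY_iff hF hv.lt hv.hanc, hd u hv.hu, hd z hv.hz] at h1
  have h2 : Fl F u z := ⟨m, h⟩
  have h3 : Fl F (φ u) (φ z) := by tauto
  have h4 := (Fl_unique hF h3 h2 (hd u hv.hu)).1
  have h5 := ha u hv.hu (d y) hu.2.1
  rw [h4, hu.2.2] at h5
  exact h5
end
end LG

namespace LG
open SimpleGraph
section
variable {V : Type} {H : SimpleGraph V} {Y : Set V} {rt : V → V} {d : V → ℕ}
  {anc : ℕ → V → V}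

theorem Tr_trans (hT : NT H Y rt d anc) {y u t : V} (h1 : u ∈ Tr Y d anc y)
    (h2 : t ∈ Tr Y d anc u) : t ∈ Tr Y d anc y := by
  refine ⟨h2.1, h1.2.1.trans h2.2.1, ?_⟩
  rw [← hT.anc_anc t h2.1 (d y) (d u) h1.2.1 h2.2.1, h2.2.2, h1.2.2]

theorem Tr_self (hT : NT H Y rt d anc) {y : V} (hy : y ∈ Y) : y ∈ Tr Y d anc y :=
  ⟨hy, le_rfl, hT.anc_self y hy⟩

theorem Tr_anc (hT : NT H Y rt d anc) {t : V} (ht : t ∈ Y) {n : ℕ} (hn : n ≤ d t) :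
    t ∈ Tr Y d anc (anc n t) := by
  refine ⟨ht, ?_, ?_⟩
  · rw [hT.d_anc t ht n hn]; exact hn
  · rw [hT.d_anc t ht n hn]

theorem Tr_anc' (hT : NT H Y rt d anc) {y t : V} (ht : t ∈ Tr Y d anc y) {n : ℕ} (hn : n ≤ d t)
    (hy : d y ≤ n) : anc n t ∈ Tr Y d anc y := by
  refine ⟨hT.mem_anc t ht.1 n hn, ?_, ?_⟩
  · rw [hT.d_anc t ht.1 n hn]; exact hy
  · rw [hT.anc_anc t ht.1 _ _ hy hn, ht.2.2]

theorem Tr_eq (hT : NT H Y rt d anc) {y t : V} (ht : t ∈ Tr Y d anc y) (h : d t = d y) :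
    t = y := by
  rw [← hT.anc_self t ht.1, h, ht.2.2]

theorem inf_child (hT : NT H Y rt d anc) (hlf : ∀ v ∈ Y, {u | H.Adj v u}.Finite) {y : V}
    (hy : y ∈ Y) (hinf : (Tr Y d anc y).Infinite) :
    ∃ w ∈ Tr Y d anc y, d w = d y + 1 ∧ H.Adj y w ∧ (Tr Y d anc w).Infinite := by
  by_contra hcon
  push Not at hcon
  apply hinf
  have hfin : ({y} ∪ ⋃ w ∈ {w | H.Adj y w ∧ w ∈ Tr Y d anc y ∧ d w = d y + 1},
      Tr Y d anc w).Finite := by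
    refine (Set.finite_singleton y).union (Set.Finite.biUnion ?_ ?_)
    · exact (hlf y hy).subset (fun w hw => hw.1)
    · rintro w ⟨h1, h2, h3⟩
      exact hcon w h2 h3 h1
  refine hfin.subset ?_
  intro t ht
  by_cases h : d t = d y
  · left; exact Tr_eq hT ht h
  · right
    have h1 : d y < d t := lt_of_le_of_ne ht.2.1 (Ne.symm h)
    refine Set.mem_biUnion (x := anc (d y + 1) t) ⟨?_, Tr_anc' hT ht h1 (by omega), ?_⟩
      (Tr_anc hT ht.1 h1)
    · have := hT.adj_anc t ht.1 (d y) h1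
      rwa [ht.2.2] at this
    · exact hT.d_anc t ht.1 _ h1

theorem inf_deep (hT : NT H Y rt d anc) (hlf : ∀ v ∈ Y, {u | H.Adj v u}.Finite) {y : V}
    (hy : y ∈ Y) (hinf : (Tr Y d anc y).Infinite) (N : ℕ) :
    ∃ u ∈ Tr Y d anc y, N ≤ d u ∧ (Tr Y d anc u).Infinite := by
  induction N with
  | zero => exact ⟨y, Tr_self hT hy, Nat.zero_le _, hinf⟩
  | succ N ih =>
    obtain ⟨u, h1, h2, h3⟩ := ih
    obtain ⟨w, h4, h5, _, h6⟩ := inf_child hT hlf h1.1 h3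
    exact ⟨w, Tr_trans hT h1 h4, by omega, h6⟩

theorem slot (hT : NT H Y rt d anc) (hlf : ∀ v ∈ Y, {u | H.Adj v u}.Finite) {y : V}
    (hy : y ∈ Y) (hinf : (Tr Y d anc y).Infinite) (N : ℕ) :
    ∃ f : V × V × ℕ, ValidF H Y d anc f.1 f.2.1 f.2.2 ∧ f.1 ∈ Tr Y d anc y ∧ N ≤ d f.1 := by
  obtain ⟨u, hu, hN, huinf⟩ := inf_deep hT hlf hy hinf N
  obtain ⟨w, hw, hwd, huw, hwinf⟩ := inf_child hT hlf hu.1 huinf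
  by_cases c1 : ∀ t ∈ Tr Y d anc w, H.Adj u t → t = w
  · exact ⟨(u, w, d u), ⟨hu.1, hw.1, by simp only; omega, hw.2.2, huw, le_rfl, Or.inl ⟨hwd, c1⟩⟩, hu, hN⟩
  push Not at c1
  obtain ⟨z, hz, huz, hzw⟩ := c1
  have hzd : d u + 1 < d z := by
    have h1 := hz.2.1
    have h2 : d z ≠ d w := fun e => hzw (Tr_eq hT hz e)
    omega
  have hzu := Tr_trans hT hw hz
  have htu := Tr_anc' hT hzu (n := d z - 1) (by omega) (by omega)
  have htd := hT.d_anc z hz.1 (d z - 1) (by omega)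
  have htz := hT.adj_anc z hz.1 (d z - 1) (by omega)
  rw [show d z - 1 + 1 = d z by omega, hT.anc_self z hz.1] at htz
  by_cases c2 : ∀ b ∈ Tr Y d anc z, H.Adj (anc (d z - 1) z) b → b = z
  · refine ⟨(anc (d z - 1) z, z, d (anc (d z - 1) z)), ⟨htu.1, hz.1, ?_, ?_, htz, le_rfl,
      Or.inl ⟨?_, c2⟩⟩, Tr_trans hT hu htu, ?_⟩
    · simp only; omega
    · simp only; rw [htd]
    · simp only; omega
    · simp only; omega
  push Not at c2
  obtain ⟨b, hb, htb, hbz⟩ := c2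
  have hbd : d z < d b := lt_of_le_of_ne hb.2.1 (fun e => hbz (Tr_eq hT hb e.symm))
  exact ⟨(u, z, d b), ⟨hu.1, hz.1, by simp only; omega, hzu.2.2, huz, by simp only; omega,
    Or.inr ⟨hzd, b, hb.1, hbd, hb.2.2, htb, le_rfl⟩⟩, hu, hN⟩

theorem exists_FS (hT : NT H Y rt d anc) (hlf : ∀ v ∈ Y, {u | H.Adj v u}.Finite)
    (hY : Y.Countable) : ∃ F, FS H Y d anc F ∧ ∀ y ∈ Y, (Tr Y d anc y).Infinite →
      ∃ u z m, F u z m ∧ u ∈ Tr Y d anc y := by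
  by_cases hne : {y | y ∈ Y ∧ (Tr Y d anc y).Infinite}.Nonempty
  · obtain ⟨y, hy⟩ := (hY.mono (s₁ := {y | y ∈ Y ∧ (Tr Y d anc y).Infinite})
      (fun y h => h.1)).exists_eq_range hne
    have hy' : ∀ k, y k ∈ Y ∧ (Tr Y d anc (y k)).Infinite := by
      intro k
      have : y k ∈ Set.range y := ⟨k, rfl⟩
      rwa [← hy] at this
    have hs : ∀ k N, ∃ f : V × V × ℕ, ValidF H Y d anc f.1 f.2.1 f.2.2 ∧
        f.1 ∈ Tr Y d anc (y k) ∧ N ≤ d f.1 :=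
      fun k N => slot hT hlf (hy' k).1 (hy' k).2 N
    choose s hs1 hs2 hs3 using hs
    let M : ℕ → ℕ := fun k => Nat.rec 0 (fun k Mk => (s k Mk).2.2 + 2) k
    have hM : ∀ k, M (k+1) = (s k (M k)).2.2 + 2 := fun k => rfl
    have hMm : Monotone M := by
      refine monotone_nat_of_le_succ (fun k => ?_)
      rw [hM]
      have h1 := (hs1 k (M k)).le
      have h2 := hs3 k (M k)
      omega
    refine ⟨fun u z m => ∃ k, s k (M k) = (u, z, m), ⟨?_, ?_⟩, ?_⟩
    · rintro u z m ⟨k, hk⟩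
      have := hs1 k (M k)
      rwa [hk] at this
    · rintro u z m u' z' m' ⟨k, hk⟩ ⟨k', hk'⟩
      rcases lt_trichotomy k k' with h | h | h
      · right; left
        have h1 := hMm (Nat.succ_le_of_lt h)
        have h2 := hs3 k' (M k')
        rw [Nat.succ_eq_add_one, hM, hk] at h1
        rw [hk'] at h2
        simp only at h1 h2
        omega
      · left
        subst h
        rw [hk] at hk'
        simpa using hk'
      · right; right
        have h1 := hMm (Nat.succ_le_of_lt h)
        have h2 := hs3 k (M k)
        rw [Nat.succ_eq_add_one, hM, hk'] at h1
        rw [hk] at h2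
        simp only at h1 h2
        omega
    · intro v hv hinf
      have : v ∈ Set.range y := by rw [← hy]; exact ⟨hv, hinf⟩
      obtain ⟨k, rfl⟩ := this
      exact ⟨_, _, _, ⟨k, rfl⟩, hs2 k (M k)⟩
  · refine ⟨fun _ _ _ => False, ⟨fun _ _ _ h => h.elim, fun _ _ _ _ _ _ h => h.elim⟩, ?_⟩
    intro y hy hinf
    exact absurd ⟨y, hy, hinf⟩ hne
end
end LG

namespace LG
open SimpleGraph
section
variable {V : Type}

theorem F_lemma (G : SimpleGraph V) (I : Set V) (ι : V → ℕ) (hι : Set.InjOn ι I)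
    (hI : ∀ v ∈ I, {u | G.Adj v u}.Infinite) :
    ∃ F : V → V → Prop, (∀ u v, F u v ↔ F v u) ∧
      ∀ φ : G ≃g G, (∀ v, φ v ∈ I ↔ v ∈ I) →
      (∀ u v, G.Adj u v → (u ∈ I ∨ v ∈ I) → (F (φ u) (φ v) ↔ F u v)) → ∀ v ∈ I, φ v = v := by
  classical
  have hlow : ∀ k, {u | u ∈ I ∧ ι u < k}.Finite := by
    intro k
    refine Set.Finite.of_finite_image ((Set.finite_lt_nat k).subset ?_)
      (hι.mono (fun u hu => hu.1))
    rintro _ ⟨u, hu, rfl⟩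
    exact hu.2
  have hA : ∀ v, ∃ A : Finset V, v ∈ I → (↑A ⊆ {u | G.Adj v u} \ {u | u ∈ I ∧ ι u < ι v} ∧
      A.card = (ι v + 1)^2) := by
    intro v
    by_cases hv : v ∈ I
    · obtain ⟨A, h1, h2⟩ :=
        ((hI v hv).diff (hlow (ι v))).exists_subset_card_eq ((ι v + 1)^2)
      exact ⟨A, fun _ => ⟨h1, h2⟩⟩
    · exact ⟨∅, fun h => absurd h hv⟩
  choose A hA using hA
  let F : V → V → Prop := fun u v => (u ∈ I ∧ v ∈ A u) ∨ (v ∈ I ∧ u ∈ A v)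
  have hadjF : ∀ u v, F u v → G.Adj u v := by
    rintro u v (⟨h1, h2⟩ | ⟨h1, h2⟩)
    · exact ((hA u h1).1 h2).1
    · exact ((hA v h1).1 h2).1.symm
  have hcard : ∀ v ∈ I, (ι v + 1)^2 ≤ {u | F v u}.ncard ∧
      {u | F v u}.ncard ≤ (ι v + 1)^2 + ι v := by
    intro v hv
    have e : {u | F v u} = ↑(A v) ∪ {u | u ∈ I ∧ v ∈ A u} := by
      ext u
      simp [F, hv]
    have hsub : {u | u ∈ I ∧ v ∈ A u} ⊆ {u | u ∈ I ∧ ι u < ι v} := by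
      rintro u ⟨h1, h2⟩
      have h3 := (hA u h1).1 h2
      have h4 : ¬ ι v < ι u := fun h => h3.2 ⟨hv, h⟩
      have h5 : ι u ≠ ι v := fun h => h3.1.ne (hι h1 hv h)
      exact ⟨h1, by omega⟩
    have hfin2 := (hlow (ι v)).subset hsub
    have hle : {u | u ∈ I ∧ v ∈ A u}.ncard ≤ ι v := by
      refine (Set.ncard_le_ncard hsub (hlow _)).trans ?_
      have := Set.ncard_le_ncard_of_injOn (s := {u | u ∈ I ∧ ι u < ι v}) (t := Set.Iio (ι v)) ι
        (fun u hu => hu.2) (hι.mono (fun u hu => hu.1)) (Set.finite_Iio _)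
      simpa using this
    rw [e]
    constructor
    · rw [← (hA v hv).2, ← Set.ncard_coe_finset]
      exact Set.ncard_le_ncard Set.subset_union_left ((A v).finite_toSet.union hfin2)
    · refine (Set.ncard_union_le _ _).trans ?_
      rw [Set.ncard_coe_finset, (hA v hv).2]
      omega
  refine ⟨F, fun u v => or_comm, ?_⟩
  intro φ hφI hφ v hv
  have e : {u | F (φ v) u} = φ '' {u | F v u} := by
    ext u
    constructor
    · intro h
      have h1 := hadjF _ _ h
      obtain ⟨u, rfl⟩ := φ.surjective u
      rw [φ.map_adj_iff] at h1
      exact ⟨u, (hφ v u h1 (Or.inl hv)).1 h, rfl⟩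
    · rintro ⟨u, h, rfl⟩
      exact (hφ v u (hadjF _ _ h) (Or.inl hv)).2 h
  have hn : {u | F (φ v) u}.ncard = {u | F v u}.ncard := by
    rw [e, Set.ncard_image_of_injective _ φ.injective]
  have h1 := hcard v hv
  have h2 := hcard (φ v) ((hφI v).2 hv)
  rw [hn] at h2
  apply hι ((hφI v).2 hv) hv
  rcases lt_trichotomy (ι (φ v)) (ι v) with h | h | h
  · nlinarith
  · exact h
  · nlinarith

theorem LF_lemma (K : SimpleGraph V) (hK : ∀ v, {u | K.Adj v u}.Finite) (v : V) (B : Set V)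
    (hinf : {u | K.Reachable v u}.Infinite) (hB : {u | u ∈ B ∧ K.Reachable v u}.Finite) :
    ∃ v', v' ∉ B ∧ K.Reachable v v' ∧ {u | (resG K Bᶜ).Reachable v' u}.Infinite := by
  by_contra hcon
  push Not at hcon
  apply hinf
  let S : Set V := {u | u ∈ B ∧ K.Reachable v u}
  let X : Set V := {x | (x = v ∨ ∃ b ∈ S, K.Adj b x) ∧ x ∉ B}
  have hX : X.Finite := by
    have : ({v} ∪ ⋃ b ∈ S, {x | K.Adj b x}).Finite :=
      (Set.finite_singleton v).union (hB.biUnion (fun b _ => hK b))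
    refine this.subset ?_
    rintro x ⟨h | ⟨b, h1, h2⟩, _⟩
    · left; exact h
    · right; exact Set.mem_biUnion h1 h2
  have hXr : ∀ x ∈ X, K.Reachable v x := by
    rintro x ⟨h | ⟨b, h1, h2⟩, _⟩
    · rw [h]
    · exact reach_step h1.2 h2
  have hW : (S ∪ ⋃ x ∈ X, {u | (resG K Bᶜ).Reachable x u}).Finite :=
    hB.union (hX.biUnion (fun x hx => hcon x hx.2 (hXr x hx)))
  refine hW.subset ?_
  intro u hu
  refine reach_ind (K := K) (p := fun u => u ∈ S ∪ ⋃ x ∈ X, {u | (resG K Bᶜ).Reachable x u})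
    ?_ ?_ hu
  · by_cases hv : v ∈ B
    · left; exact ⟨hv, Reachable.refl _⟩
    · right; exact Set.mem_biUnion (x := v) ⟨Or.inl rfl, hv⟩ (Reachable.refl _)
  · intro a b hra hab ih
    by_cases hb : b ∈ B
    · left; exact ⟨hb, reach_step hra hab⟩
    right
    by_cases ha : a ∈ B
    · exact Set.mem_biUnion (x := b) ⟨Or.inr ⟨a, ⟨ha, hra⟩, hab⟩, hb⟩ (Reachable.refl _)
    rcases ih with ih | ih
    · exact absurd ih.1 ha
    · simp only [Set.mem_iUnion] at ih ⊢
      obtain ⟨x, hx, hxa⟩ := ih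
      exact ⟨x, hx, reach_step hxa ⟨hab, ha, hb⟩⟩

/-- the motion hypothesis for the base graph -/
def Motion (G : SimpleGraph V) : Prop :=
  ∀ φ : G ≃g G, {p : V × V | G.Adj p.1 p.2 ∧ s(φ p.1, φ p.2) ≠ s(p.1, p.2)}.Finite →
    ∀ u v, G.Adj u v → s(φ u, φ v) = s(u, v)

theorem glue (G : SimpleGraph V) (hm : Motion G) (τ τ' : V → V) (h1 : ∀ v, τ' (τ v) = v)
    (h2 : ∀ v, τ (τ' v) = v) (ha : ∀ u v, G.Adj u v → G.Adj (τ u) (τ v))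
    (ha' : ∀ u v, G.Adj u v → G.Adj (τ' u) (τ' v)) (Z : Set V) (hZ : Z.Finite)
    (hZd : ∀ z ∈ Z, {u | G.Adj z u}.Finite) (hid : ∀ v, v ∉ Z → τ v = v) :
    ∀ u v, G.Adj u v → s(τ u, τ v) = s(u, v) := by
  let e : G ≃g G := ⟨⟨τ, τ', h1, h2⟩, by
    intro u v
    constructor
    · intro h
      have := ha' _ _ h
      simpa [h1] using this
    · exact ha u v⟩
  have := hm e ?_
  · exact this
  · have hfin : ((⋃ z ∈ Z, (fun u => (z, u)) '' {u | G.Adj z u}) ∪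
        (⋃ z ∈ Z, (fun u => (u, z)) '' {u | G.Adj z u})).Finite :=
      (hZ.biUnion (fun z hz => (hZd z hz).image _)).union
        (hZ.biUnion (fun z hz => (hZd z hz).image _))
    refine hfin.subset ?_
    rintro ⟨u, v⟩ ⟨h1, h2⟩
    by_cases hu : u ∈ Z
    · left; exact Set.mem_biUnion hu ⟨v, h1, rfl⟩
    by_cases hv : v ∈ Z
    · right; exact Set.mem_biUnion hv ⟨u, h1.symm, rfl⟩
    exfalso
    apply h2
    change s(τ u, τ v) = s(u, v)
    rw [hid u hu, hid v hv]

theorem swap_lemma (G : SimpleGraph V) (hm : Motion G) (P : Set V) (φ : G ≃g G)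
    (hP : ∀ v ∈ P, φ v = v) (a : V) (haP : a ∉ P)
    (hfin : {u | (resG G Pᶜ).Reachable a u}.Finite)
    (hdeg : ∀ u, u ∉ P → {w | G.Adj u w}.Finite) (b : V) (hab : G.Adj a b) :
    s(φ a, φ b) = s(a, b) := by
  classical
  set X := {u | (resG G Pᶜ).Reachable a u} with hX
  have hXP : ∀ x ∈ X, x ∉ P := fun x hx => reach_mem (S := Pᶜ) haP hx
  have hP' : ∀ v ∈ P, φ.symm v = v := fun v hv => by
    rw [RelIso.symm_apply_eq, hP v hv]
  have hPφ : ∀ v, φ v ∈ P ↔ v ∈ P := by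
    intro v
    constructor
    · intro h
      have h1 := hP' _ h
      rw [RelIso.symm_apply_apply] at h1
      rw [h1]; exact h
    · intro h; rw [hP v h]; exact h
  have hnb : ∀ u v, u ∈ X → G.Adj u v → v ∈ X ∨ v ∈ P := by
    intro u v hu huv
    by_cases hv : v ∈ P
    · exact Or.inr hv
    · exact Or.inl (reach_step (K := resG G Pᶜ) hu ⟨huv, hXP u hu, hv⟩)
  have haX : a ∈ X := Reachable.refl _
  have hPX : ∀ p ∈ P, p ∉ X := fun p hp hx => hXP p hx hp
  by_cases hcase : ∃ x ∈ X, φ x ∈ X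
  · obtain ⟨x, hx, hx'⟩ := hcase
    have k1 : ∀ v ∈ X, φ v ∈ X := by
      intro v hv
      have h1 : (resG G Pᶜ).Reachable x v := Reachable.trans (Reachable.symm hx) hv
      have h2 := reach_map (K := resG G Pᶜ) (L := resG G Pᶜ) φ
        (fun a b h => ⟨φ.map_adj_iff.2 h.1, fun h' => h.2.1 ((hPφ _).1 h'),
          fun h' => h.2.2 ((hPφ _).1 h')⟩) h1
      exact Reachable.trans hx' h2
    have k2 : ∀ v ∈ X, φ.symm v ∈ X := by
      intro v hv
      have h1 : (resG G Pᶜ).Reachable (φ x) v := Reachable.trans (Reachable.symm hx') hv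
      have h2 := reach_map (K := resG G Pᶜ) (L := resG G Pᶜ) φ.symm
        (fun a b h => ⟨φ.symm.map_adj_iff.2 h.1,
          fun h' => h.2.1 (by have := (hPφ _).2 h'; rwa [RelIso.apply_symm_apply] at this),
          fun h' => h.2.2 (by have := (hPφ _).2 h'; rwa [RelIso.apply_symm_apply] at this)⟩) h1
      rw [RelIso.symm_apply_apply] at h2
      exact Reachable.trans hx h2
    have hadj : ∀ f : G ≃g G, (∀ v ∈ P, f v = v) → ∀ u v, G.Adj u v →
        G.Adj (if u ∈ X then f u else u) (if v ∈ X then f v else v) := by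
      intro f hf u v huv
      have hfa : G.Adj (f u) (f v) := f.map_adj_iff.2 huv
      by_cases hu : u ∈ X
      · by_cases hv : v ∈ X
        · simp only [hu, hv, if_true]; exact hfa
        · simp only [hu, hv, if_true, if_false]
          rcases hnb u v hu huv with h | h
          · exact absurd h hv
          · rwa [hf v h] at hfa
      · by_cases hv : v ∈ X
        · simp only [hu, hv, if_true, if_false]
          rcases hnb v u hv huv.symm with h | h
          · exact absurd h hu
          · rwa [hf u h] at hfa
        · simp only [hu, hv, if_false]; exact huv
    have := glue G hm (fun v => if v ∈ X then φ v else v) (fun v => if v ∈ X then φ.symm v else v)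
      (by
        intro v
        by_cases hv : v ∈ X
        · simp [hv, k1 v hv]
        · simp [hv])
      (by
        intro v
        by_cases hv : v ∈ X
        · simp [hv, k2 v hv]
        · simp [hv]) (hadj φ hP) (hadj φ.symm hP') X hfin (fun z hz => hdeg z (hXP z hz))
      (fun v hv => by simp [hv]) a b hab
    simp only [haX, if_true] at this
    rcases hnb a b haX hab with h | h
    · simpa only [h, if_true] using this
    · simpa only [hPX b h, if_false, hP b h] using this
  · push Not at hcase
    have k0 : ∀ x ∈ X, φ.symm x ∉ X := by
      intro x hx h
      have := hcase _ h
      rw [RelIso.apply_symm_apply] at this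
      exact this hx
    let τ : V → V := fun v => if v ∈ X then φ v else if φ.symm v ∈ X then φ.symm v else v
    have t1 : ∀ v, v ∈ X → τ v = φ v := fun v hv => by simp [τ, hv]
    have t2 : ∀ v, φ.symm v ∈ X → τ v = φ.symm v := by
      intro v hv
      have : v ∉ X := fun h => k0 v h hv
      simp [τ, hv, this]
    have t3 : ∀ v, v ∉ X → φ.symm v ∉ X → τ v = v := fun v h1 h2 => by simp [τ, h1, h2]
    have t4 : ∀ v ∈ P, τ v = v := fun v hv =>
      t3 v (hPX v hv) (by rw [hP' v hv]; exact hPX v hv)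
    have hinv : ∀ v, τ (τ v) = v := by
      intro v
      by_cases h1 : v ∈ X
      · rw [t1 v h1, t2 _ (by rw [RelIso.symm_apply_apply]; exact h1), RelIso.symm_apply_apply]
      · by_cases h2 : φ.symm v ∈ X
        · rw [t2 v h2, t1 _ h2, RelIso.apply_symm_apply]
        · rw [t3 v h1 h2, t3 v h1 h2]
    have hnb2 : ∀ u v, φ.symm u ∈ X → G.Adj u v → φ.symm v ∈ X ∨ v ∈ P := by
      intro u v hu huv
      rcases hnb _ _ hu (φ.symm.map_adj_iff.2 huv) with h | h
      · exact Or.inl h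
      · right
        have := (hPφ _).2 h
        rwa [RelIso.apply_symm_apply] at this
    have half : ∀ u v, G.Adj u v → (u ∈ X ∨ φ.symm u ∈ X) → G.Adj (τ u) (τ v) := by
      rintro u v huv (hu | hu)
      · have hfa : G.Adj (φ u) (φ v) := φ.map_adj_iff.2 huv
        rcases hnb u v hu huv with h | h
        · rw [t1 u hu, t1 v h]; exact hfa
        · rw [t1 u hu, t4 v h]; rwa [hP v h] at hfa
      · have hfa : G.Adj (φ.symm u) (φ.symm v) := φ.symm.map_adj_iff.2 huv
        rcases hnb2 u v hu huv with h | h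
        · rw [t2 u hu, t2 v h]; exact hfa
        · rw [t2 u hu, t4 v h]; rwa [hP' v h] at hfa
    have hadj : ∀ u v, G.Adj u v → G.Adj (τ u) (τ v) := by
      intro u v huv
      by_cases hu : u ∈ X ∨ φ.symm u ∈ X
      · exact half u v huv hu
      by_cases hv : v ∈ X ∨ φ.symm v ∈ X
      · exact (half v u huv.symm hv).symm
      push Not at hu hv
      rw [t3 u hu.1 hu.2, t3 v hv.1 hv.2]
      exact huv
    have := glue G hm τ τ hinv hinv hadj hadj (X ∪ φ '' X) (hfin.union (hfin.image _))
      (by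
        rintro z (hz | ⟨x, hx, rfl⟩)
        · exact hdeg z (hXP z hz)
        · exact hdeg _ (fun h => hXP x hx ((hPφ x).1 h)))
      (fun v hv => t3 v (fun h => hv (Or.inl h))
        (fun h => hv (Or.inr ⟨_, h, RelIso.apply_symm_apply _ _⟩))) a b hab
    rw [t1 a haX] at this
    rcases hnb a b haX hab with h | h
    · rwa [t1 b h] at this
    · rw [t4 b h] at this; rwa [hP b h]
end
end LG

namespace LG
open SimpleGraph
section
variable {V : Type}

theorem comp_choice (K : SimpleGraph V) (Q : V → Prop) : ∃ f : V → V,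
    (∀ a b, K.Reachable a b → f a = f b) ∧
    ∀ v, (∃ r, K.Reachable v r ∧ Q r) → K.Reachable v (f v) ∧ Q (f v) := by
  classical
  let g : K.ConnectedComponent → V := fun c =>
    if h : ∃ r, K.connectedComponentMk r = c ∧ Q r then h.choose else c.out
  refine ⟨fun v => g (K.connectedComponentMk v), ?_, ?_⟩
  · intro a b hab
    simp only [ConnectedComponent.sound hab]
  · rintro v ⟨r, h1, h2⟩
    have h : ∃ r, K.connectedComponentMk r = K.connectedComponentMk v ∧ Q r :=
      ⟨r, ConnectedComponent.sound h1.symm, h2⟩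
    simp only [g, dif_pos h]
    exact ⟨(ConnectedComponent.exact h.choose_spec.1).symm, h.choose_spec.2⟩

/-- vertices of infinite degree -/
def Iset (G : SimpleGraph V) : Set V := {v | {u | G.Adj v u}.Infinite}

/-- the part of the graph on the vertices of finite degree -/
def Gp (G : SimpleGraph V) : SimpleGraph V := resG G (Iset G)ᶜ

def bigV (G : SimpleGraph V) (v : V) : Prop := v ∉ Iset G ∧ {u | (Gp G).Reachable v u}.Infinite

/-- balls of radius two around the representatives of the big components -/
def beta (G : SimpleGraph V) (rep : V → V) : Set V :=
  {v | bigV G v ∧ ∃ s, (s = rep v ∨ (Gp G).Adj (rep v) s) ∧ (v = s ∨ (Gp G).Adj s v)}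

/-- balls of radius three -/
def beta1 (G : SimpleGraph V) (rep : V → V) : Set V :=
  {v | bigV G v ∧ ∃ s ∈ beta G rep, v = s ∨ (Gp G).Adj s v}

def H0 (G : SimpleGraph V) (rep : V → V) : SimpleGraph V := resG (Gp G) (beta1 G rep)ᶜ

def Yset (G : SimpleGraph V) (rep : V → V) : Set V :=
  {v | v ∉ Iset G ∧ v ∉ beta1 G rep ∧ {u | (H0 G rep).Reachable v u}.Infinite}

def Hg (G : SimpleGraph V) (rep : V → V) : SimpleGraph V := resG G (Yset G rep)

/-- the colour class -/
def oneP (G : SimpleGraph V) (rep rt sC : V → V) (d : V → ℕ) (anc : ℕ → V → V)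
    (F : V → V → ℕ → Prop) (FI : V → V → Prop) (u v : V) : Prop :=
  ((u ∈ Iset G ∨ v ∈ Iset G) ∧ FI u v) ∨ (u ∉ Iset G ∧ v ∉ Iset G ∧
    ((u ∈ Yset G rep ∧ v ∈ Yset G rep ∧ oneY d anc F u v) ∨
     (u ∈ Yset G rep ∧ v ∉ Yset G rep ∧ u = rt u ∧ v = sC u) ∨
     (v ∈ Yset G rep ∧ u ∉ Yset G rep ∧ v = rt v ∧ u = sC v) ∨
     (u ∉ Yset G rep ∧ v ∉ Yset G rep ∧ ¬ (u ∈ beta G rep ∧ v ∈ beta G rep))))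

structure PatOK (G : SimpleGraph V) (rep rt sC : V → V) (d : V → ℕ) (anc : ℕ → V → V)
    (F : V → V → ℕ → Prop) : Prop where
  rep_reach : ∀ v, (Gp G).Reachable v (rep v)
  rep_eq : ∀ a b, (Gp G).Reachable a b → rep a = rep b
  rt_eq : ∀ a b, (Hg G rep).Reachable a b → rt a = rt b
  rt_reach : ∀ v ∈ Yset G rep, (Hg G rep).Reachable v (rt v)
  sC1 : ∀ v ∈ Yset G rep, (Gp G).Adj (rt v) (sC (rt v))
  sC2 : ∀ v ∈ Yset G rep, sC (rt v) ∉ Yset G rep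
  nt : NT (Hg G rep) (Yset G rep) rt d anc
  fs : FS (Hg G rep) (Yset G rep) d anc F
  fl : ∀ y ∈ Yset G rep, (Tr (Yset G rep) d anc y).Infinite →
      ∃ u z m, F u z m ∧ u ∈ Tr (Yset G rep) d anc y

theorem Gp_fin (G : SimpleGraph V) (v : V) : {u | (Gp G).Adj v u}.Finite := by
  by_cases h : v ∈ Iset G
  · refine Set.Finite.subset Set.finite_empty ?_
    intro u hu
    exact absurd h hu.2.1
  · have h' : {u | G.Adj v u}.Finite := Set.not_infinite.1 h
    exact h'.subset (fun u hu => hu.1)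

theorem bigV_reach {G : SimpleGraph V} {a b : V} (h : bigV G a) (hab : (Gp G).Reachable a b) :
    bigV G b := by
  refine ⟨reach_mem (S := (Iset G)ᶜ) h.1 hab, ?_⟩
  have : {u | (Gp G).Reachable b u} = {u | (Gp G).Reachable a u} := by
    ext u
    exact ⟨fun h => hab.trans h, fun h => hab.symm.trans h⟩
  rw [this]
  exact h.2

theorem bigV_nb {G : SimpleGraph V} {a : V} (h : bigV G a) : ∃ b, (Gp G).Adj a b := by
  by_contra hcon
  push Not at hcon
  apply h.2
  refine (Set.finite_singleton a).subset ?_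
  intro u hu
  exact reach_ind (K := Gp G) (p := fun u => u = a) rfl
    (fun x y _ hxy e => absurd (e ▸ hxy) (hcon y)) hu

theorem beta_sub {G : SimpleGraph V} {rep : V → V} {v : V} (h : v ∈ beta G rep) :
    v ∈ beta1 G rep := ⟨h.1, v, h, Or.inl rfl⟩

theorem beta_notY {G : SimpleGraph V} {rep : V → V} {v : V} (h : v ∈ beta G rep) :
    v ∉ Yset G rep := fun h' => h'.2.1 (beta_sub h)

theorem Y_big {G : SimpleGraph V} {rep : V → V} {v : V} (h : v ∈ Yset G rep) : bigV G v :=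
  ⟨h.1, h.2.2.mono (fun _ hu => reach_mono (K := H0 G rep) (fun _ _ h => h.1) hu)⟩

theorem Y_step {G : SimpleGraph V} {rep : V → V} {v u : V} (h : v ∈ Yset G rep)
    (ha : (Gp G).Adj v u) (hu : u ∉ beta1 G rep) : u ∈ Yset G rep := by
  refine ⟨ha.2.2, hu, ?_⟩
  have hadj : (H0 G rep).Adj u v := ⟨ha.symm, hu, h.2.1⟩
  exact h.2.2.mono (fun t ht => Reachable.trans hadj.reachable ht)

theorem exists_Pat (G : SimpleGraph V) (ι : V → ℕ)
    (hι : Set.InjOn ι {v | ∃ u, G.Adj v u}) : ∃ rep rt sC d anc F, PatOK G rep rt sC d anc F := by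
  classical
  obtain ⟨rep, hrep1, hrep2⟩ := comp_choice (Gp G) (fun _ => True)
  have hrep2 : ∀ v, (Gp G).Reachable v (rep v) :=
    fun v => (hrep2 v ⟨v, Reachable.refl _, trivial⟩).1
  have hYs : Yset G rep ⊆ {v | ∃ u, G.Adj v u} := by
    intro v hv
    obtain ⟨b, hb⟩ := bigV_nb (Y_big hv)
    exact ⟨b, hb.1⟩
  obtain ⟨rt, hrt1, hrt2⟩ := comp_choice (Hg G rep)
    (fun r => ∃ c, (Gp G).Adj r c ∧ c ∉ Yset G rep)
  have hex : ∀ v ∈ Yset G rep, ∃ r, (Hg G rep).Reachable v r ∧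
      ∃ c, (Gp G).Adj r c ∧ c ∉ Yset G rep := by
    intro v hv
    have hb := bigV_reach (Y_big hv) (hrep2 v)
    have hrr : rep (rep v) = rep v := (hrep1 _ _ (hrep2 v)).symm
    have hbe : rep v ∈ beta G rep := ⟨hb, rep v, Or.inl hrr.symm, Or.inl rfl⟩
    have := reach_ind (K := Gp G) (v := v) (p := fun u =>
      (u ∈ Yset G rep ∧ (Hg G rep).Reachable v u) ∨
      ∃ r, (Hg G rep).Reachable v r ∧ ∃ c, (Gp G).Adj r c ∧ c ∉ Yset G rep)
      (Or.inl ⟨hv, Reachable.refl _⟩) (by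
        rintro a b _ hab (⟨h1, h2⟩ | h)
        · by_cases hbY : b ∈ Yset G rep
          · exact Or.inl ⟨hbY, reach_step h2 ⟨hab.1, h1, hbY⟩⟩
          · exact Or.inr ⟨a, h2, b, hab, hbY⟩
        · exact Or.inr h) (hrep2 v)
    rcases this with h | h
    · exact absurd h.1 (beta_notY hbe)
    · exact h
  have hrt2 := fun v hv => hrt2 v (hex v hv)
  let sC : V → V := fun r => if h : ∃ c, (Gp G).Adj r c ∧ c ∉ Yset G rep then h.choose else r
  have hsC : ∀ v ∈ Yset G rep, (Gp G).Adj (rt v) (sC (rt v)) ∧ sC (rt v) ∉ Yset G rep := by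
    intro v hv
    have h := (hrt2 v hv).2
    simp only [sC, dif_pos h]
    exact h.choose_spec
  have hYi : Set.InjOn ι (Yset G rep) := hι.mono hYs
  obtain ⟨d, anc, hT⟩ := exists_NT (H := Hg G rep) (Y := Yset G rep) (rt := rt) (ι := ι)
    (fun a b h => hrt1 a b h.reachable) (fun a b h => h.2.1) hYi (fun v hv => (hrt2 v hv).1)
  obtain ⟨F, hF, hF2⟩ := exists_FS hT (fun v hv =>
      (Set.not_infinite.1 hv.1 : {u | G.Adj v u}.Finite).subset (fun u hu => hu.1))
    (Set.MapsTo.countable_of_injOn (t := Set.univ) (fun _ _ => trivial) hYi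
      (Set.countable_univ))
  exact ⟨rep, rt, sC, d, anc, F, hrep2, hrep1, hrt1, fun v hv => (hrt2 v hv).1,
    fun v hv => (hsC v hv).1, fun v hv => (hsC v hv).2, hT, hF, hF2⟩

section
variable {G : SimpleGraph V} {rep rt sC : V → V} {d : V → ℕ} {anc : ℕ → V → V}
    {F : V → V → ℕ → Prop} {FI : V → V → Prop}

theorem oneP_symm (hFI : ∀ u v, FI u v ↔ FI v u) (u v : V) :
    oneP G rep rt sC d anc F FI u v ↔ oneP G rep rt sC d anc F FI v u := by
  have half : ∀ u v, oneP G rep rt sC d anc F FI u v → oneP G rep rt sC d anc F FI v u := by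
    rintro u v (⟨h1, h2⟩ | ⟨h1, h2, h⟩)
    · exact Or.inl ⟨h1.symm, (hFI u v).1 h2⟩
    · refine Or.inr ⟨h2, h1, ?_⟩
      rcases h with ⟨a, b, c⟩ | h | h | ⟨a, b, c⟩
      · exact Or.inl ⟨b, a, c.symm⟩
      · exact Or.inr (Or.inr (Or.inl h))
      · exact Or.inr (Or.inl h)
      · exact Or.inr (Or.inr (Or.inr ⟨b, a, fun h => c h.symm⟩))
  exact ⟨half u v, half v u⟩

theorem oneP_I {u v : V} (h : u ∈ Iset G ∨ v ∈ Iset G) :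
    oneP G rep rt sC d anc F FI u v ↔ FI u v := by
  unfold oneP
  tauto

theorem oneP_YY {u v : V} (h : u ∈ Yset G rep) (h' : v ∈ Yset G rep) :
    oneP G rep rt sC d anc F FI u v ↔ oneY d anc F u v := by
  have h1 : u ∉ Iset G := h.1
  have h2 : v ∉ Iset G := h'.1
  unfold oneP
  simp [*]

theorem oneP_Yn {u v : V} (h : u ∈ Yset G rep) (h' : v ∉ Yset G rep) (h2 : v ∉ Iset G) :
    oneP G rep rt sC d anc F FI u v ↔ (u = rt u ∧ v = sC u) := by
  have h1 : u ∉ Iset G := h.1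
  unfold oneP
  simp [*]

theorem oneP_nn {u v : V} (h : u ∉ Yset G rep) (h' : v ∉ Yset G rep) (h1 : u ∉ Iset G)
    (h2 : v ∉ Iset G) :
    oneP G rep rt sC d anc F FI u v ↔ ¬ (u ∈ beta G rep ∧ v ∈ beta G rep) := by
  unfold oneP
  simp [*]

theorem rt_Y (hP : PatOK G rep rt sC d anc F) {v : V} (hv : v ∈ Yset G rep) :
    rt v ∈ Yset G rep :=
  reach_mem (S := Yset G rep) hv (hP.rt_reach v hv)

theorem one_root (hP : PatOK G rep rt sC d anc F) {v : V} (hv : v ∈ Yset G rep) :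
    oneP G rep rt sC d anc F FI (rt v) (sC (rt v)) := by
  rw [oneP_Yn (rt_Y hP hv) (hP.sC2 v hv) (hP.sC1 v hv).2.2]
  exact ⟨hP.rt_eq _ _ (hP.rt_reach v hv), rfl⟩

/-- The recognisable set -/
def Qs (G : SimpleGraph V) (one : V → V → Prop) (v : V) : Prop :=
  bigV G v ∧ ∀ u, (u = v ∨ (Gp G).Adj v u) → ∀ t, (Gp G).Adj u t → ¬ one u t

theorem zero_beta (hP : PatOK G rep rt sC d anc F) {u v : V} (hu : u ∈ beta G rep)
    (hv : v ∈ beta G rep) : ¬ oneP G rep rt sC d anc F FI u v := by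
  rw [oneP_nn (beta_notY hu) (beta_notY hv) hu.1.1 hv.1.1]
  exact fun h => h ⟨hu, hv⟩

theorem mem_beta (hP : PatOK G rep rt sC d anc F) {v s t : V} (hv : bigV G v)
    (hs : s = rep v ∨ (Gp G).Adj (rep v) s) (ht : t = s ∨ (Gp G).Adj s t) : t ∈ beta G rep := by
  have h1 : (Gp G).Reachable v s := by
    rcases hs with rfl | hs
    · exact hP.rep_reach v
    · exact reach_step (hP.rep_reach v) hs
  have h2 : (Gp G).Reachable v t := by
    rcases ht with rfl | ht
    · exact h1
    · exact reach_step h1 ht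
  refine ⟨bigV_reach hv h2, s, ?_, ht⟩
  rw [← hP.rep_eq _ _ h2]
  exact hs

theorem rep_Q (hP : PatOK G rep rt sC d anc F) {v : V} (hv : bigV G v) :
    Qs G (oneP G rep rt sC d anc F FI) (rep v) := by
  refine ⟨bigV_reach hv (hP.rep_reach v), fun u hu t ht => ?_⟩
  exact zero_beta hP (mem_beta hP hv hu (Or.inl rfl)) (mem_beta hP hv hu (Or.inr ht))

theorem H_Gp {a b : V} (h : (Hg G rep).Adj a b) : (Gp G).Adj a b :=
  ⟨h.1, h.2.1.1, h.2.2.1⟩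

/-- every vertex of the forest is a root or its parent edge has colour one or is flipped -/
theorem par (hP : PatOK G rep rt sC d anc F) (hFI : ∀ u v, FI u v ↔ FI v u)
    {v : V} (hv : v ∈ Yset G rep)
    (hn : ∀ m, ¬ F (anc (d v - 1) v) v m) :
    ∃ t, (Gp G).Adj v t ∧ oneP G rep rt sC d anc F FI v t := by
  by_cases h0 : d v = 0
  · have h1 := hP.nt.anc_self v hv
    rw [h0, hP.nt.zero v hv] at h1
    refine ⟨sC v, ?_, ?_⟩
    · have := hP.sC1 v hv
      rwa [h1] at this
    · have := one_root (FI := FI) hP hv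
      rwa [h1] at this
  · have had := hP.nt.adj_anc v hv (d v - 1) (by omega)
    have hpd := hP.nt.d_anc v hv (d v - 1) (by omega)
    rw [show d v - 1 + 1 = d v by omega, hP.nt.anc_self v hv] at had
    refine ⟨_, (H_Gp had).symm, ?_⟩
    rw [oneP_symm hFI, oneP_YY had.2.1 hv, oneY_iff hP.fs (by omega) (by rw [hpd])]
    have : ¬ Fl F (anc (d v - 1) v) v := fun ⟨m, hm⟩ => hn m hm
    simp only [this, iff_false, not_not]
    omega

theorem Q_beta (hP : PatOK G rep rt sC d anc F) (hFI : ∀ u v, FI u v ↔ FI v u) {v : V}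
    (hQ : Qs G (oneP G rep rt sC d anc F FI) v) : v ∈ beta G rep := by
  by_contra hvb
  obtain ⟨hbig, hQ⟩ := hQ
  by_cases hY : v ∈ Yset G rep
  · by_cases hn : ∀ m, ¬ F (anc (d v - 1) v) v m
    · obtain ⟨t, h1, h2⟩ := par hP hFI hY hn
      exact hQ v (Or.inl rfl) t h1 h2
    · push Not at hn
      obtain ⟨m, hm⟩ := hn
      have hval := hP.fs.valid _ _ _ hm
      obtain ⟨t, h1, h2⟩ := par hP hFI hval.hu (by
        intro m' hm'
        have hval' := hP.fs.valid _ _ _ hm'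
        have h3 := hP.nt.d_anc _ hval.hu (d (anc (d v - 1) v) - 1) (by omega)
        have h4 := hval.le
        have h5 := hval'.le
        have h6 := hval'.lt
        rcases hP.fs.sep _ _ _ _ _ _ hm hm' with h | h | h
        · rw [← h.1] at h6; omega
        · omega
        · omega)
      exact hQ _ (Or.inr (H_Gp hval.adj).symm) t h1 h2
  · by_cases hb1 : v ∈ beta1 G rep
    · obtain ⟨_, s, hs, rfl | h⟩ := hb1
      · exact hvb hs
      · refine hQ v (Or.inl rfl) s h.symm ?_
        rw [oneP_nn hY (beta_notY hs) hbig.1 hs.1.1]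
        exact fun h => hvb h.1
    · obtain ⟨t, ht⟩ := bigV_nb hbig
      have htY : t ∉ Yset G rep := fun h => hY (Y_step h ht.symm hb1)
      refine hQ v (Or.inl rfl) t ht ?_
      rw [oneP_nn hY htY hbig.1 ht.2.2]
      exact fun h => hvb h.1

theorem beta_step (hP : PatOK G rep rt sC d anc F) {v t : V} (hv : v ∈ beta G rep)
    (ha : (Gp G).Adj v t) (h1 : ¬ oneP G rep rt sC d anc F FI v t) : t ∈ beta G rep := by
  have htb : t ∈ beta1 G rep := ⟨bigV_reach hv.1 ha.reachable, v, hv, Or.inr ha⟩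
  have htY : t ∉ Yset G rep := fun h => h.2.1 htb
  rw [oneP_nn (beta_notY hv) htY ha.2.1 ha.2.2, not_not] at h1
  exact h1.2

/-- good automorphisms -/
def Good (G : SimpleGraph V) (one : V → V → Prop) (φ : G ≃g G) : Prop :=
  ∀ u v, G.Adj u v → (one (φ u) (φ v) ↔ one u v)

theorem Good.symm {one : V → V → Prop} {φ : G ≃g G} (h : Good G one φ) : Good G one φ.symm := by
  intro u v huv
  have := h (φ.symm u) (φ.symm v) (φ.symm.map_adj_iff.2 huv)
  rw [RelIso.apply_symm_apply, RelIso.apply_symm_apply] at this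
  exact this.symm

theorem iff_of_both {φ : G ≃g G} {S : Set V} (h1 : ∀ v ∈ S, φ v ∈ S)
    (h2 : ∀ v ∈ S, φ.symm v ∈ S) (v : V) : φ v ∈ S ↔ v ∈ S := by
  refine ⟨fun h => ?_, h1 v⟩
  have := h2 _ h
  rwa [RelIso.symm_apply_apply] at this

theorem I_pres0 (φ : G ≃g G) (v : V) (hv : v ∈ Iset G) : φ v ∈ Iset G := by
  have h : {u | G.Adj v u}.Infinite := hv
  refine (h.image φ.injective.injOn).mono ?_
  rintro _ ⟨u, hu, rfl⟩
  exact φ.map_adj_iff.2 hu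

theorem I_pres (φ : G ≃g G) (v : V) : φ v ∈ Iset G ↔ v ∈ Iset G :=
  iff_of_both (I_pres0 φ) (I_pres0 φ.symm) v

theorem res_pres {K : SimpleGraph V} {S : Set V} {f : V → V}
    (h : ∀ a b, K.Adj (f a) (f b) ↔ K.Adj a b) (hS : ∀ v, f v ∈ S ↔ v ∈ S) (a b : V) :
    (resG K S).Adj (f a) (f b) ↔ (resG K S).Adj a b := by
  change (K.Adj (f a) (f b) ∧ f a ∈ S ∧ f b ∈ S) ↔ (K.Adj a b ∧ a ∈ S ∧ b ∈ S)
  rw [h, hS, hS]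

theorem inf_pres {K : SimpleGraph V} {f : V → V} (hf : Function.Injective f)
    (h : ∀ a b, K.Adj (f a) (f b) ↔ K.Adj a b) (v : V)
    (hv : {u | K.Reachable v u}.Infinite) : {u | K.Reachable (f v) u}.Infinite := by
  refine (hv.image hf.injOn).mono ?_
  rintro _ ⟨u, hu, rfl⟩
  exact reach_map (K := K) f (fun a b hab => (h a b).2 hab) hu

theorem Gp_pres (φ : G ≃g G) (a b : V) : (Gp G).Adj (φ a) (φ b) ↔ (Gp G).Adj a b :=
  res_pres (fun _ _ => φ.map_adj_iff) (fun v => not_congr (I_pres φ v)) a b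

theorem big_pres (φ : G ≃g G) (v : V) (hv : bigV G v) : bigV G (φ v) :=
  ⟨fun h => hv.1 ((I_pres φ v).1 h), inf_pres φ.injective (Gp_pres φ) v hv.2⟩

theorem Q_pres {one : V → V → Prop} {φ : G ≃g G} (h : Good G one φ) {v : V} (hv : Qs G one v) :
    Qs G one (φ v) := by
  refine ⟨big_pres φ v hv.1, fun u hu t ht => ?_⟩
  obtain ⟨u, rfl⟩ := φ.surjective u
  obtain ⟨t, rfl⟩ := φ.surjective t
  rw [Gp_pres] at ht
  rw [Gp_pres, φ.injective.eq_iff] at hu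
  rw [h u t ht.1]
  exact hv.2 u hu t ht

theorem beta_pres0 (hP : PatOK G rep rt sC d anc F) (hFI : ∀ u v, FI u v ↔ FI v u) {φ : G ≃g G}
    (h : Good G (oneP G rep rt sC d anc F FI) φ) (v : V) (hv : v ∈ beta G rep) :
    φ v ∈ beta G rep := by
  have h0 : φ (rep v) ∈ beta G rep := Q_beta hP hFI (Q_pres h (rep_Q hP hv.1))
  have hr : rep v ∈ beta G rep := mem_beta hP hv.1 (Or.inl rfl) (Or.inl rfl)
  have step : ∀ a b, a ∈ beta G rep → b ∈ beta G rep → φ a ∈ beta G rep →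
      (b = a ∨ (Gp G).Adj a b) → φ b ∈ beta G rep := by
    rintro a b ha hb hφ (rfl | hab)
    · exact hφ
    · refine beta_step (FI := FI) hP hφ ((Gp_pres φ a b).2 hab) ?_
      rw [h a b hab.1]
      exact zero_beta hP ha hb
  obtain ⟨s, hs, hsv⟩ := hv.2
  have hsb : s ∈ beta G rep := mem_beta hP hv.1 hs (Or.inl rfl)
  exact step s v hsb hv (step _ s hr hsb h0 hs) hsv

theorem Pres_of_good (hP : PatOK G rep rt sC d anc F) (hFI : ∀ u v, FI u v ↔ FI v u) {φ : G ≃g G}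
    (h : Good G (oneP G rep rt sC d anc F FI) φ) :
    Pres (Hg G rep) (Yset G rep) rt d anc F φ := by
  have hb : ∀ v, φ v ∈ beta G rep ↔ v ∈ beta G rep :=
    iff_of_both (beta_pres0 hP hFI h) (beta_pres0 hP hFI h.symm)
  have hb1' : ∀ φ : G ≃g G, (∀ v, φ v ∈ beta G rep ↔ v ∈ beta G rep) →
      ∀ v ∈ beta1 G rep, φ v ∈ beta1 G rep := by
    rintro φ hb v ⟨hv, s, hs, hsv⟩
    refine ⟨big_pres φ v hv, φ s, (hb s).2 hs, ?_⟩
    rcases hsv with rfl | hsv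
    · exact Or.inl rfl
    · exact Or.inr ((Gp_pres φ _ _).2 hsv)
  have hbs : ∀ v, φ.symm v ∈ beta G rep ↔ v ∈ beta G rep :=
    iff_of_both (beta_pres0 hP hFI h.symm) (beta_pres0 hP hFI h)
  have hb1 : ∀ v, φ v ∈ beta1 G rep ↔ v ∈ beta1 G rep :=
    iff_of_both (hb1' φ hb) (hb1' φ.symm hbs)
  have hb1s : ∀ v, φ.symm v ∈ beta1 G rep ↔ v ∈ beta1 G rep :=
    iff_of_both (φ := φ.symm) (hb1' φ.symm hbs) (hb1' φ hb)
  have hY' : ∀ φ : G ≃g G, (∀ v, φ v ∈ beta1 G rep ↔ v ∈ beta1 G rep) →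
      ∀ v ∈ Yset G rep, φ v ∈ Yset G rep := by
    rintro φ hb v ⟨h1, h2, h3⟩
    refine ⟨fun h => h1 ((I_pres φ v).1 h), fun h => h2 ((hb v).1 h),
      inf_pres φ.injective (res_pres (Gp_pres φ) (fun v => not_congr (hb v))) v h3⟩
  have hY : ∀ v, φ v ∈ Yset G rep ↔ v ∈ Yset G rep :=
    iff_of_both (hY' φ hb1) (hY' φ.symm hb1s)
  have hH : ∀ a b, (Hg G rep).Adj (φ a) (φ b) ↔ (Hg G rep).Adj a b :=
    res_pres (fun _ _ => φ.map_adj_iff) hY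
  refine ⟨fun v => (hY v).2, fun a b => (hH a b).2, ?_, ?_⟩
  · intro a b ha hb hab
    have := h a b hab.1
    rwa [oneP_YY ha hb, oneP_YY ((hY a).2 ha) ((hY b).2 hb)] at this
  · intro v hv
    have h1 := one_root (FI := FI) hP hv
    have h2 := hP.sC1 v hv
    have h3 := hP.sC2 v hv
    have h4 := (h _ _ h2.1).2 h1
    rw [oneP_Yn ((hY _).2 (rt_Y hP hv)) (fun h' => h3 ((hY _).1 h'))
      (fun h' => h2.2.2 ((I_pres φ _).1 h'))] at h4
    rw [h4.1]
    exact (hP.rt_eq _ _ (reach_map (K := Hg G rep) φ (fun a b => (hH a b).2)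
      (hP.rt_reach v hv))).symm

theorem comp_finite (hP : PatOK G rep rt sC d anc F) {P : Set V} (hPI : Iset G ⊆ P)
    (hPY : ∀ y ∈ Yset G rep, (Tr (Yset G rep) d anc y).Infinite → y ∈ P) (v : V) (hv : v ∉ P) :
    {u | (resG G Pᶜ).Reachable v u}.Finite := by
  by_contra hinf
  have hKG : ∀ a b, (resG G Pᶜ).Adj a b → (Gp G).Adj a b :=
    fun a b h => ⟨h.1, fun h' => h.2.1 (hPI h'), fun h' => h.2.2 (hPI h')⟩
  have hfin : {u | u ∈ beta1 G rep ∧ (resG G Pᶜ).Reachable v u}.Finite := by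
    let N : Set V → Set V := fun S => S ∪ ⋃ s ∈ S, {u | (Gp G).Adj s u}
    have hN : ∀ S, S.Finite → (N S).Finite :=
      fun S hS => hS.union (hS.biUnion (fun s _ => Gp_fin G s))
    have hN1 : ∀ S s u, s ∈ S → (u = s ∨ (Gp G).Adj s u) → u ∈ N S := by
      rintro S s u hs (rfl | h)
      · exact Or.inl hs
      · exact Or.inr (Set.mem_biUnion hs h)
    refine (hN _ (hN _ (hN _ (Set.finite_singleton (rep v))))).subset ?_
    rintro u ⟨⟨_, s, ⟨_, t, ht, hts⟩, hsu⟩, hr⟩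
    have e : rep s = rep v := by
      have h1 : (Gp G).Reachable v u := reach_mono hKG hr
      rw [hP.rep_eq _ _ h1]
      rcases hsu with rfl | h
      · rfl
      · exact hP.rep_eq _ _ h.reachable
    rw [e] at ht
    exact hN1 _ s u (hN1 _ t s (hN1 _ _ t rfl ht) hts) hsu
  obtain ⟨v', h1, h2, h3⟩ := LF_lemma (resG G Pᶜ) (fun v => (Gp_fin G v).subset
    (fun u hu => hKG _ _ hu)) v (beta1 G rep) hinf hfin
  have hv' : v' ∉ P := reach_mem (S := Pᶜ) hv h2
  set K := resG (resG G Pᶜ) (beta1 G rep)ᶜ with hK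
  have hKH : ∀ a b, K.Adj a b → (H0 G rep).Adj a b := fun a b h => ⟨hKG _ _ h.1, h.2⟩
  have hinY : ∀ u, K.Reachable v' u → u ∈ Yset G rep ∧ u ∉ P := by
    intro u hu
    have hu1 : u ∉ P := reach_mem (S := Pᶜ) hv' (reach_mono (K := K) (fun _ _ h => h.1) hu)
    refine ⟨⟨fun h => hu1 (hPI h), reach_mem (S := (beta1 G rep)ᶜ) h1 hu, ?_⟩, hu1⟩
    exact Set.Infinite.mono (fun t ht => reach_mono hKH (Reachable.trans (Reachable.symm hu) ht)) h3
  obtain ⟨y, hy, hm⟩ := WellFounded.has_min (measure d).wf {u | K.Reachable v' u}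
    ⟨v', Reachable.refl _⟩
  have hm : ∀ u, K.Reachable v' u → d y ≤ d u := fun u hu => not_lt.1 (hm u hu)
  have hyY := (hinY y hy).1
  apply (hinY y hy).2
  apply hPY y hyY
  refine h3.mono ?_
  intro u hu
  have hyu : K.Reachable y u := Reachable.trans (Reachable.symm hy) hu
  refine reach_ind (K := K) (p := fun u => u ∈ Tr (Yset G rep) d anc y) (Tr_self hP.nt hyY) ?_ hyu
  intro a b hra hab ih
  have hra' : K.Reachable v' a := Reachable.trans hy hra
  have hrb' : K.Reachable v' b := reach_step hra' hab
  have ha := (hinY a hra').1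
  have hb := (hinY b hrb').1
  refine ⟨hb, hm b hrb', ?_⟩
  rw [← anc_eq_of_adj hP.nt ha hb ⟨hab.1.1, ha, hb⟩ (hm a hra') (hm b hrb')]
  exact ih.2.2
end

theorem partB (G : SimpleGraph V) (hm : Motion G) (hc : {v | ∃ u, G.Adj v u}.Countable) :
    ∃ one : V → V → Prop, (∀ u v, one u v ↔ one v u) ∧ ∀ φ : G ≃g G, Good G one φ →
      ∀ u v, G.Adj u v → s(φ u, φ v) = s(u, v) := by
  obtain ⟨ι, hι⟩ := Set.countable_iff_exists_injOn.1 hc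
  obtain ⟨rep, rt, sC, d, anc, F, hP⟩ := exists_Pat G ι hι
  obtain ⟨FI, hFI, hFI2⟩ := F_lemma G (Iset G) ι (hι.mono (by
    intro v hv
    obtain ⟨u, hu⟩ := Set.Infinite.nonempty hv
    exact ⟨u, hu⟩)) (fun v hv => hv)
  refine ⟨oneP G rep rt sC d anc F FI, oneP_symm hFI, ?_⟩
  intro φ hφ
  have hIfix := hFI2 φ (I_pres φ) (by
    intro u v huv h
    have := hφ u v huv
    rwa [oneP_I h, oneP_I (by rw [I_pres, I_pres]; exact h)] at this)
  have hp := Pres_of_good hP hFI hφ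
  have hp' := Pres_of_good hP hFI hφ.symm
  let P : Set V := Iset G ∪ {y | y ∈ Yset G rep ∧ (Tr (Yset G rep) d anc y).Infinite}
  have hfix : ∀ v ∈ P, φ v = v := by
    rintro v (hv | ⟨hv, hinf⟩)
    · exact hIfix v hv
    · obtain ⟨u, z, m, h1, h2⟩ := hP.fl v hv hinf
      exact decode hP.nt hP.fs hp hp' (fun v => RelIso.symm_apply_apply _ _)
        (fun v => RelIso.apply_symm_apply _ _) h1 h2
  have hfinal : ∀ u v, G.Adj u v → u ∉ P → s(φ u, φ v) = s(u, v) := by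
    intro u v huv hu
    exact swap_lemma G hm P φ hfix u hu
      (comp_finite hP (P := P) (fun x hx => Or.inl hx) (fun y h1 h2 => Or.inr ⟨h1, h2⟩) u hu)
      (fun x hx => Set.not_infinite.1 (fun h => hx (Or.inl h))) v huv
  intro u v huv
  by_cases hu : u ∈ P
  · by_cases hv : v ∈ P
    · rw [hfix u hu, hfix v hv]
    · rw [Sym2.eq_swap, hfinal v u huv.symm hv, Sym2.eq_swap]
  · exact hfinal u v huv hu
end
end LG

namespace LG
open SimpleGraph
section
variable {V : Type} {G : SimpleGraph V}

theorem lg_adj (e f : G.edgeSet) : G.lineGraph.Adj e f ↔ e ≠ f ∧ ∃ v, v ∈ e.1 ∧ v ∈ f.1 := by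
  rw [lineGraph_adj_iff_exists]

/-- adjacency to an odd number of the three edges -/
def OddT (e f g : G.edgeSet) : Prop := ∃ h, 
  (G.lineGraph.Adj h e ∧ G.lineGraph.Adj h f ∧ G.lineGraph.Adj h g) ∨
  (G.lineGraph.Adj h e ∧ ¬ G.lineGraph.Adj h f ∧ ¬ G.lineGraph.Adj h g) ∨
  (¬ G.lineGraph.Adj h e ∧ G.lineGraph.Adj h f ∧ ¬ G.lineGraph.Adj h g) ∨
  (¬ G.lineGraph.Adj h e ∧ ¬ G.lineGraph.Adj h f ∧ G.lineGraph.Adj h g)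

theorem edge_form (e : G.edgeSet) {v : V} (h : v ∈ e.1) : ∃ a, a ≠ v ∧ e.1 = s(v, a) := by
  obtain ⟨a, ha⟩ := Sym2.mem_iff_exists.1 h
  refine ⟨a, ?_, ha⟩
  have := e.2
  rw [ha, mem_edgeSet] at this
  exact this.ne.symm

theorem edge_unique {e f : G.edgeSet} (hne : e ≠ f) {v w : V} (h1 : v ∈ e.1) (h2 : v ∈ f.1)
    (h3 : w ∈ e.1) (h4 : w ∈ f.1) : v = w := by
  by_contra h
  apply hne
  apply Subtype.ext
  rw [(Sym2.mem_and_mem_iff h).1 ⟨h1, h3⟩, (Sym2.mem_and_mem_iff h).1 ⟨h2, h4⟩]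

theorem star_of_odd {e f g : G.edgeSet} (hef : G.lineGraph.Adj e f) (heg : G.lineGraph.Adj e g)
    (hfg : G.lineGraph.Adj f g) (ho : OddT e f g) : ∃ v, v ∈ e.1 ∧ v ∈ f.1 ∧ v ∈ g.1 := by
  by_contra hcon
  push Not at hcon
  rw [lg_adj] at hef heg hfg
  obtain ⟨_, b, hb1, hb2⟩ := hef
  obtain ⟨_, a, ha1, ha2⟩ := heg
  obtain ⟨_, c, hc1, hc2⟩ := hfg
  have hab : a ≠ b := fun h => hcon b hb1 hb2 (h ▸ ha2)
  have hac : a ≠ c := fun h => hcon c (h ▸ ha1) hc1 hc2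
  have hbc : b ≠ c := fun h => hcon c (h ▸ hb1) hc1 hc2
  have he := (Sym2.mem_and_mem_iff hab).1 ⟨ha1, hb1⟩
  have hf := (Sym2.mem_and_mem_iff hbc).1 ⟨hb2, hc1⟩
  have hg := (Sym2.mem_and_mem_iff hac).1 ⟨ha2, hc2⟩
  obtain ⟨h, ho⟩ := ho
  simp only [lg_adj, ne_eq, Subtype.ext_iff, he, hf, hg] at ho
  obtain ⟨h, hh⟩ := h
  induction h using Sym2.ind with
  | _ x y =>
    have hxy : x ≠ y := (G.mem_edgeSet.1 hh).ne
    simp only [Sym2.mem_iff, Sym2.eq_iff] at ho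
    have key : ∀ p q : V, (∃ v, (v = x ∨ v = y) ∧ (v = p ∨ v = q)) ↔
        (x = p ∨ x = q ∨ y = p ∨ y = q) := by
      intro p q
      constructor
      · rintro ⟨v, rfl | rfl, rfl | rfl⟩ <;> simp
      · rintro (h | h | h | h)
        · exact ⟨x, Or.inl rfl, Or.inl h⟩
        · exact ⟨x, Or.inl rfl, Or.inr h⟩
        · exact ⟨y, Or.inr rfl, Or.inl h⟩
        · exact ⟨y, Or.inr rfl, Or.inr h⟩
    simp only [key] at ho
    clear key hcon he hf hg ha1 ha2 hb1 hb2 hc1 hc2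
    by_cases x1 : x = a
    · subst x1
      by_cases y2 : y = b
      · subst y2; simp_all
      by_cases y3 : y = c
      · subst y3; simp_all
      simp_all
    by_cases x2 : x = b
    · subst x2
      by_cases y2 : y = a
      · subst y2; simp_all
      by_cases y3 : y = c
      · subst y3; simp_all
      simp_all
    by_cases x3 : x = c
    · subst x3
      by_cases y2 : y = a
      · subst y2; simp_all
      by_cases y3 : y = b
      · subst y3; simp_all
      simp_all
    by_cases y1 : y = a
    · subst y1; simp_all
    by_cases y2 : y = b
    · subst y2; simp_all
    by_cases y3 : y = c
    · subst y3; simp_all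
    simp_all

theorem odd_of_star (hconn : G.lineGraph.Connected) (hinf : Infinite G.edgeSet) {e f g : G.edgeSet}
    (hef : e ≠ f) (heg : e ≠ g) (hfg : f ≠ g) {v : V} (he : v ∈ e.1) (hf : v ∈ f.1)
    (hg : v ∈ g.1) : OddT e f g := by
  by_contra hodd
  have hodd : ∀ h, ¬ _ := fun h hh => hodd ⟨h, hh⟩
  obtain ⟨a, hav, ea⟩ := edge_form e he
  obtain ⟨b, hbv, eb⟩ := edge_form f hf
  obtain ⟨c, hcv, ec⟩ := edge_form g hg
  have hab : a ≠ b := fun h => hef (Subtype.ext (by rw [ea, eb, h]))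
  have hac : a ≠ c := fun h => heg (Subtype.ext (by rw [ea, ec, h]))
  have hbc : b ≠ c := fun h => hfg (Subtype.ext (by rw [eb, ec, h]))
  let W : Set V := {v, a, b, c}
  have claim : ∀ (h : G.edgeSet) x, x ∈ h.1 → x ∈ W → ∀ y ∈ h.1, y ∈ W := by
    intro h x hx hxW
    have ho := hodd h
    obtain ⟨y, hyx, hxy⟩ := edge_form h hx
    simp only [lg_adj, ne_eq, Subtype.ext_iff, ea, eb, ec, hxy] at ho
    have key : ∀ p q : V, (∃ v, v ∈ s(x, y) ∧ v ∈ s(p, q)) ↔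
        (x = p ∨ x = q ∨ y = p ∨ y = q) := by
      intro p q
      simp only [Sym2.mem_iff]
      constructor
      · rintro ⟨v, rfl | rfl, rfl | rfl⟩ <;> simp
      · rintro (h | h | h | h)
        · exact ⟨x, Or.inl rfl, Or.inl h⟩
        · exact ⟨x, Or.inl rfl, Or.inr h⟩
        · exact ⟨y, Or.inr rfl, Or.inl h⟩
        · exact ⟨y, Or.inr rfl, Or.inr h⟩
    simp only [key, Sym2.eq_iff] at ho
    have hyW : y ∈ W := by
      by_contra hyW
      simp only [W, Set.mem_insert_iff, Set.mem_singleton_iff, not_or] at hyW hxW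
      obtain ⟨y0, y1, y2, y3⟩ := hyW
      apply ho
      simp only [y0, y1, y2, y3, or_false, and_false]
      rcases hxW with rfl | rfl | rfl | rfl <;> simp_all <;> tauto
    intro z hz
    rw [hxy, Sym2.mem_iff] at hz
    rcases hz with rfl | rfl
    · exact hxW
    · exact hyW
  have hall : ∀ h : G.edgeSet, ∀ y ∈ h.1, y ∈ W := by
    intro h
    refine reach_ind (K := G.lineGraph) (v := e) (p := fun h => ∀ y ∈ h.1, y ∈ W) ?_ ?_
      (hconn.preconnected e h)
    · exact claim e v he (Or.inl rfl)
    · intro h k _ hk ih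
      rw [lg_adj] at hk
      obtain ⟨_, x, hx1, hx2⟩ := hk
      exact claim k x hx2 (ih x hx1)
  have hW : W.Finite := by simp [W]
  have hfin : ((fun p : V × V => s(p.1, p.2)) '' (W ×ˢ W)).Finite := (hW.prod hW).image _
  have : G.edgeSet.Finite := by
    refine hfin.subset ?_
    intro h hh
    have := hall ⟨h, hh⟩
    induction h using Sym2.ind with
    | _ x y => exact ⟨(x, y), ⟨this x (by simp), this y (by simp)⟩, rfl⟩
  exact (Set.infinite_coe_iff.1 hinf) this

theorem OddT_map (γ : G.lineGraph ≃g G.lineGraph) (e f g : G.edgeSet) (h : OddT e f g) :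
    OddT (γ e) (γ f) (γ g) := by
  obtain ⟨h, hh⟩ := h
  refine ⟨γ h, ?_⟩
  simp only [γ.map_adj_iff]
  exact hh

theorem star_map (hconn : G.lineGraph.Connected) (hinf : Infinite G.edgeSet)
    (γ : G.lineGraph ≃g G.lineGraph) {e f g : G.edgeSet}
    (hef : e ≠ f) (heg : e ≠ g) (hfg : f ≠ g) {v : V} (he : v ∈ e.1) (hf : v ∈ f.1)
    (hg : v ∈ g.1) {v' : V} (he' : v' ∈ (γ e).1) (hf' : v' ∈ (γ f).1) : v' ∈ (γ g).1 := by
  have h1 := OddT_map γ _ _ _ (odd_of_star hconn hinf hef heg hfg he hf hg)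
  obtain ⟨w, hw1, hw2, hw3⟩ := star_of_odd
    (γ.map_adj_iff.2 ((lg_adj _ _).2 ⟨hef, v, he, hf⟩))
    (γ.map_adj_iff.2 ((lg_adj _ _).2 ⟨heg, v, he, hg⟩))
    (γ.map_adj_iff.2 ((lg_adj _ _).2 ⟨hfg, v, hf, hg⟩)) h1
  have : v' = w := edge_unique (fun h => hef (γ.injective h)) he' hf' hw1 hw2
  rw [this]
  exact hw3

theorem vmap2 (hconn : G.lineGraph.Connected) (hinf : Infinite G.edgeSet)
    (γ : G.lineGraph ≃g G.lineGraph) {e f : G.edgeSet} (hef : e ≠ f) {v : V} (he : v ∈ e.1)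
    (hf : v ∈ f.1) : ∃ v', ∀ g, v ∈ g.1 ↔ v' ∈ (γ g).1 := by
  have hadj : G.lineGraph.Adj (γ e) (γ f) := γ.map_adj_iff.2 ((lg_adj _ _).2 ⟨hef, v, he, hf⟩)
  obtain ⟨hne, v', h1, h2⟩ := (lg_adj _ _).1 hadj
  refine ⟨v', fun g => ?_⟩
  by_cases hge : e = g
  · subst hge; exact ⟨fun _ => h1, fun _ => he⟩
  by_cases hgf : f = g
  · subst hgf; exact ⟨fun _ => h2, fun _ => hf⟩
  constructor
  · intro hg
    exact star_map hconn hinf γ hef hge hgf he hf hg h1 h2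
  · intro hg
    have := star_map hconn hinf γ.symm hne (fun h => hge (γ.injective h))
      (fun h => hgf (γ.injective h)) h1 h2 hg (v' := v) (by simpa using he) (by simpa using hf)
    simpa using this

theorem exists_nb (hconn : G.lineGraph.Connected) (hinf : Infinite G.edgeSet) (e : G.edgeSet) :
    ∃ f, G.lineGraph.Adj e f := by
  by_contra hcon
  push Not at hcon
  have hall : ∀ h : G.edgeSet, h = e := by
    intro h
    refine reach_ind (K := G.lineGraph) (v := e) (p := fun h => h = e) rfl ?_
      (hconn.preconnected e h)
    intro a b _ hab ih
    exact absurd (ih ▸ hab) (hcon b)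
  have : Subsingleton G.edgeSet := ⟨fun a b => (hall a).trans (hall b).symm⟩
  exact not_finite G.edgeSet

theorem vmap (hconn : G.lineGraph.Connected) (hinf : Infinite G.edgeSet)
    (γ : G.lineGraph ≃g G.lineGraph) {e : G.edgeSet} {v : V} (he : v ∈ e.1) :
    ∃ v', ∀ g, v ∈ g.1 ↔ v' ∈ (γ g).1 := by
  by_cases h2 : ∃ f, e ≠ f ∧ v ∈ f.1
  · obtain ⟨f, hef, hf⟩ := h2
    exact vmap2 hconn hinf γ hef he hf
  push Not at h2
  obtain ⟨u, huv, hu⟩ := edge_form e he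
  have hue : u ∈ e.1 := by rw [hu]; simp
  obtain ⟨f, hf⟩ := exists_nb hconn hinf e
  obtain ⟨hef, w, hw1, hw2⟩ := (lg_adj _ _).1 hf
  have hwu : w = u := by
    rw [hu, Sym2.mem_iff] at hw1
    rcases hw1 with rfl | h
    · exact absurd hw2 (h2 f hef)
    · exact h
  subst hwu
  obtain ⟨u', hu'⟩ := vmap2 hconn hinf γ hef hue hw2
  obtain ⟨v', hv'u, hv'⟩ := edge_form (γ e) ((hu' e).1 hue)
  have hv'e : v' ∈ (γ e).1 := by rw [hv']; simp
  refine ⟨v', fun g => ?_⟩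
  by_cases hge : e = g
  · subst hge; exact ⟨fun _ => hv'e, fun _ => he⟩
  · refine ⟨fun h => absurd h (h2 g hge), fun h => ?_⟩
    exfalso
    have hadj : G.lineGraph.Adj (γ e) (γ g) :=
      (lg_adj _ _).2 ⟨fun h => hge (γ.injective h), v', hv'e, h⟩
    obtain ⟨_, x, hx1, hx2⟩ := (lg_adj _ _).1 (γ.map_adj_iff.1 hadj)
    rw [hu, Sym2.mem_iff] at hx1
    rcases hx1 with rfl | rfl
    · exact h2 g hge hx2
    · have := (hu' g).1 hx2
      exact hv'u (edge_unique (fun h => hge (γ.injective h)) hv'e h ((hu' e).1 hue) this)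

theorem v_inj (hconn : G.lineGraph.Connected) (hinf : Infinite G.edgeSet) {v w : V}
    {e : G.edgeSet} (he : v ∈ e.1) (h : ∀ g : G.edgeSet, v ∈ g.1 ↔ w ∈ g.1) : v = w := by
  by_contra hne
  obtain ⟨f, hf⟩ := exists_nb hconn hinf e
  obtain ⟨hef, x, hx1, hx2⟩ := (lg_adj _ _).1 hf
  have hwe := (h e).1 he
  have e1 := (Sym2.mem_and_mem_iff hne).1 ⟨he, hwe⟩
  rw [e1, Sym2.mem_iff] at hx1
  have hvf : v ∈ f.1 := by
    rcases hx1 with rfl | rfl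
    · exact hx2
    · exact (h f).2 hx2
  exact hne (edge_unique hef he hvf hwe ((h f).1 hvf))

theorem whitney (hconn : G.lineGraph.Connected) (hinf : Infinite G.edgeSet)
    (γ : G.lineGraph ≃g G.lineGraph) :
    ∃ φ : G ≃g G, ∀ u v (h : G.Adj u v), (γ ⟨s(u, v), h⟩).1 = s(φ u, φ v) := by
  classical
  have hex : ∀ γ : G.lineGraph ≃g G.lineGraph, ∃ φ : V → V,
      (∀ v, (∃ e : G.edgeSet, v ∈ e.1) → ∀ g, v ∈ g.1 ↔ φ v ∈ (γ g).1) ∧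
      ∀ v, (¬ ∃ e : G.edgeSet, v ∈ e.1) → φ v = v := by
    intro γ
    have : ∀ v, ∃ v', ((∃ e : G.edgeSet, v ∈ e.1) → ∀ g, v ∈ g.1 ↔ v' ∈ (γ g).1) ∧
      ((¬ ∃ e : G.edgeSet, v ∈ e.1) → v' = v) := by
      intro v
      by_cases h : ∃ e : G.edgeSet, v ∈ e.1
      · obtain ⟨e, he⟩ := h
        obtain ⟨v', hv'⟩ := vmap hconn hinf γ he
        exact ⟨v', fun _ => hv', fun h => absurd ⟨e, he⟩ h⟩
      · exact ⟨v, fun h' => absurd h' h, fun _ => rfl⟩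
    choose φ h1 h2 using this
    exact ⟨φ, h1, h2⟩
  have hinv : ∀ (γ : G.lineGraph ≃g G.lineGraph) (φ ψ : V → V),
      (∀ v, (∃ e : G.edgeSet, v ∈ e.1) → ∀ g, v ∈ g.1 ↔ φ v ∈ (γ g).1) →
      (∀ v, (¬ ∃ e : G.edgeSet, v ∈ e.1) → φ v = v) →
      (∀ v, (∃ e : G.edgeSet, v ∈ e.1) → ∀ g, v ∈ g.1 ↔ ψ v ∈ (γ.symm g).1) →
      (∀ v, (¬ ∃ e : G.edgeSet, v ∈ e.1) → ψ v = v) → ∀ v, ψ (φ v) = v := by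
    intro γ φ ψ h1 h2 h3 h4 v
    by_cases h : ∃ e : G.edgeSet, v ∈ e.1
    · have hφ := h1 v h
      obtain ⟨e, he⟩ := h
      have hψ := h3 (φ v) ⟨γ e, (hφ e).1 he⟩
      refine (v_inj hconn hinf he (fun g => ?_)).symm
      rw [hφ g, hψ (γ g), RelIso.symm_apply_apply]
    · rw [h2 v h, h4 v h]
  have hmap : ∀ (γ : G.lineGraph ≃g G.lineGraph) (φ : V → V), Function.Injective φ →
      (∀ v, (∃ e : G.edgeSet, v ∈ e.1) → ∀ g, v ∈ g.1 ↔ φ v ∈ (γ g).1) →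
      ∀ u v (h : G.Adj u v), (γ ⟨s(u, v), h⟩).1 = s(φ u, φ v) := by
    intro γ φ hi h1 u v huv
    refine (Sym2.mem_and_mem_iff (fun h => huv.ne (hi h))).1 ⟨?_, ?_⟩
    · exact (h1 u ⟨⟨s(u, v), huv⟩, by simp⟩ _).1 (by simp)
    · exact (h1 v ⟨⟨s(u, v), huv⟩, by simp⟩ _).1 (by simp)
  have hadj : ∀ (γ : G.lineGraph ≃g G.lineGraph) (φ : V → V), Function.Injective φ →
      (∀ v, (∃ e : G.edgeSet, v ∈ e.1) → ∀ g, v ∈ g.1 ↔ φ v ∈ (γ g).1) →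
      ∀ u v, G.Adj u v → G.Adj (φ u) (φ v) := by
    intro γ φ hi h1 u v huv
    have := (γ ⟨s(u, v), huv⟩).2
    rwa [hmap γ φ hi h1 u v huv] at this
  obtain ⟨φ, h1, h2⟩ := hex γ
  obtain ⟨ψ, h3, h4⟩ := hex γ.symm
  have hl := hinv γ φ ψ h1 h2 h3 h4
  have hr := hinv γ.symm ψ φ h3 h4 h1 h2
  have hi : Function.Injective φ := Function.LeftInverse.injective hl
  have hi' : Function.Injective ψ := Function.LeftInverse.injective hr
  refine ⟨⟨⟨φ, ψ, hl, hr⟩, ?_⟩, hmap γ φ hi h1⟩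
  intro u v
  constructor
  · intro h
    have := hadj γ.symm ψ hi' h3 _ _ h
    simpa [hl] using this
  · exact hadj γ φ hi h1 u v
end
end LG

open LG SimpleGraph in
theorem stmt_4 {V : Type} (G : SimpleGraph V)
    [Countable G.edgeSet] (hconn : G.lineGraph.Connected)
    (hmotion : ∀ γ : G.lineGraph ≃g G.lineGraph, (∃ e, γ e ≠ e) →
      {e : G.edgeSet | γ e ≠ e}.Infinite) :
    ∃ c : G.edgeSet → Fin 2, ∀ γ : G.lineGraph ≃g G.lineGraph,
      (∀ e, c (γ e) = c e) → ∀ e, γ e = e := by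
  classical
  rcases finite_or_infinite G.edgeSet with hfin | hinf
  · refine ⟨fun _ => 0, fun γ _ e => ?_⟩
    by_contra h
    exact hmotion γ ⟨e, h⟩ (Set.toFinite _)
  have hm : Motion G := by
    intro φ hφ u v huv
    by_contra hne
    have hval : ∀ e : G.edgeSet, ((Iso.lineGraph φ) e).1 = e.1.map φ := fun e => rfl
    have h1 := hmotion (Iso.lineGraph φ) ⟨⟨s(u, v), huv⟩, fun h => hne (by
      have := congrArg Subtype.val h
      rw [hval] at this
      simpa using this)⟩
    apply h1
    refine Set.Finite.of_finite_image ((hφ.image (fun p => s(p.1, p.2))).subset ?_)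
      Subtype.val_injective.injOn
    rintro _ ⟨⟨e, he⟩, hmv, rfl⟩
    induction e using Sym2.ind with
    | _ x y =>
      refine ⟨(x, y), ⟨he, fun h => hmv (Subtype.ext ?_)⟩, rfl⟩
      rw [hval]
      simpa using h
  have hc : {v | ∃ u, G.Adj v u}.Countable := by
    have : (⋃ e : G.edgeSet, {v | v ∈ e.1}).Countable := by
      refine Set.countable_iUnion (fun e => ?_)
      obtain ⟨e, he⟩ := e
      induction e using Sym2.ind with
      | _ x y =>
        refine Set.Finite.countable (Set.Finite.subset (Set.toFinite {x, y}) ?_)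
        intro v hv
        simpa using hv
    refine this.mono ?_
    rintro v ⟨u, hu⟩
    exact Set.mem_iUnion.2 ⟨⟨s(v, u), hu⟩, by simp⟩
  obtain ⟨one, hsymm, hone⟩ := partB G hm hc
  refine ⟨fun e => if ∃ u v, e.1 = s(u, v) ∧ one u v then 1 else 0, fun γ hγ e => ?_⟩
  obtain ⟨φ, hφ⟩ := whitney hconn hinf γ
  have hiff : ∀ a b, (∃ u v, s(a, b) = s(u, v) ∧ one u v) ↔ one a b := by
    intro a b
    constructor
    · rintro ⟨u, v, h1, h2⟩
      rw [Sym2.eq_iff] at h1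
      rcases h1 with ⟨rfl, rfl⟩ | ⟨rfl, rfl⟩
      · exact h2
      · exact (hsymm _ _).1 h2
    · exact fun h => ⟨a, b, rfl, h⟩
  have hgood : Good G one φ := by
    intro u v huv
    have := hγ ⟨s(u, v), huv⟩
    simp only [hφ u v huv, hiff] at this
    by_cases h1 : one u v <;> by_cases h2 : one (φ u) (φ v) <;> simp_all
  obtain ⟨e, he⟩ := e
  induction e using Sym2.ind with
  | _ x y =>
    apply Subtype.ext
    rw [hφ x y he]
    exact hone φ hgood x y he
end

section
/- For every connected graph G (finite or infinite), the distinguishing index satisfies D'(G) ≤ D(G) + 1. -/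
open Cardinal

/-- The distinguishing number `D(G)`: the least cardinal number of colours in a
distinguishing vertex colouring of `G`. -/
noncomputable def distinguishingNumber {V : Type u} (G : SimpleGraph V) : Cardinal.{u} :=
  sInf {κ : Cardinal.{u} | ∃ (C : Type u) (c : V → C), #C = κ ∧
    ∀ γ : G ≃g G, (∀ v, c (γ v) = c v) → ∀ v, γ v = v}

/-- The distinguishing index `D'(G)`: the least cardinal number of colours in a
distinguishing edge colouring of `G`. -/
noncomputable def distinguishingIndex {V : Type u} (G : SimpleGraph V) : Cardinal.{u} :=
  sInf {κ : Cardinal.{u} | ∃ (C : Type u) (c : G.edgeSet → C), #C = κ ∧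
    ∀ γ : G ≃g G, (∀ e : G.edgeSet, c (γ.mapEdgeSet e) = c e) → ∀ v, γ v = v}


namespace DistIdx

variable {V : Type u} {C : Type u}

/-- A parent structure towards a nonempty set `Z`. -/
lemma exists_parent (G : SimpleGraph V) (hconn : G.Connected) (Z : Set V) (hZ : Z.Nonempty) :
    ∃ (d : V → ℕ) (p : V → V), (∀ v, v ∉ Z → G.Adj v (p v) ∧ d (p v) < d v) ∧
      (∀ γ : G ≃g G, (∀ v, γ v ∈ Z ↔ v ∈ Z) → ∀ v, d (γ v) = d v) := by
  classical
  let S : V → Set ℕ := fun v => {n | ∃ z ∈ Z, ∃ w : G.Walk v z, w.length = n}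
  have hS : ∀ v, (S v).Nonempty := by
    intro v
    obtain ⟨z, hz⟩ := hZ
    obtain ⟨w⟩ := hconn.preconnected v z
    exact ⟨w.length, z, hz, w, rfl⟩
  have key : ∀ v, v ∉ Z → ∃ u, G.Adj v u ∧ sInf (S u) < sInf (S v) := by
    intro v hv
    obtain ⟨z, hz, w, hw⟩ := Nat.sInf_mem (hS v)
    cases w with
    | nil => exact absurd hz hv
    | cons h w' =>
      refine ⟨_, h, ?_⟩
      have : sInf (S _) ≤ w'.length := Nat.sInf_le ⟨z, hz, w', rfl⟩
      rw [SimpleGraph.Walk.length_cons] at hw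
      omega
  have sub : ∀ γ : G ≃g G, (∀ v, γ v ∈ Z ↔ v ∈ Z) → ∀ v, S v ⊆ S (γ v) := by
    rintro γ hγ v n ⟨z, hz, w, hw⟩
    exact ⟨γ z, (hγ z).2 hz, w.map γ.toHom, by simpa using hw⟩
  refine ⟨fun v => sInf (S v), fun v => if h : v ∉ Z then (key v h).choose else v, ?_, ?_⟩
  · intro v hv
    simp only [hv, not_false_eq_true, dite_true]
    exact (key v hv).choose_spec
  · intro γ hγ v
    have h1 := sub γ hγ v
    have h2 := sub γ.symm (fun v => by rw [← hγ]; simp) (γ v)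
    rw [RelIso.symm_apply_apply] at h2
    show sInf (S (γ v)) = sInf (S v)
    rw [Set.Subset.antisymm h1 h2]

lemma exists_col (Z : Set V) (d : V → ℕ) (p : V → V) (hp : ∀ v, v ∉ Z → d (p v) < d v)
    (c : V → C) (g : Sym2 V → Option C) :
    ∃ f : Sym2 V → Option C,
      (∀ u v, u ∈ Z → v ∈ Z → f s(u, v) = g s(u, v)) ∧
      (∀ v, v ∉ Z → f s(v, p v) = some (c v)) ∧
      (∀ u v, u ∉ Z → f s(u, v) ≠ none → v = p u ∨ (u = p v ∧ v ∉ Z)) := by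
  classical
  refine ⟨fun e => if ∀ v ∈ e, v ∈ Z then g e else
    if h : ∃ v, v ∉ Z ∧ e = s(v, p v) then some (c h.choose) else none, ?_, ?_, ?_⟩
  · intro u v hu hv
    simp [hu, hv]
  · intro v hv
    have h : ∃ u, u ∉ Z ∧ s(v, p v) = s(u, p u) := ⟨v, hv, rfl⟩
    have h0 : ¬ ∀ u ∈ s(v, p v), u ∈ Z := fun h => hv (h v (by simp))
    simp only [h0, if_false, h, dite_true]
    obtain ⟨h1, h2⟩ := h.choose_spec
    generalize h.choose = u at h1 h2
    rw [Sym2.eq_iff] at h2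
    rcases h2 with h2 | ⟨h2, h3⟩
    · rw [h2.1]
    · have a := hp u h1
      have b := hp v hv
      rw [← h2] at a
      rw [h3] at b
      omega
  · intro u v hu hf
    have h0 : ¬ ∀ w ∈ s(u, v), w ∈ Z := fun h => hu (h u (by simp))
    simp only [h0, if_false] at hf
    by_cases h : ∃ w, w ∉ Z ∧ s(u, v) = s(w, p w)
    · obtain ⟨w, hw, h⟩ := h
      rw [Sym2.eq_iff] at h
      rcases h with ⟨rfl, rfl⟩ | ⟨rfl, rfl⟩
      · left; rfl
      · right; exact ⟨rfl, hw⟩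
    · exact absurd (dif_neg h) hf

/-- Off the root set, colours are preserved. -/
lemma core (G : SimpleGraph V) (Z : Set V) (d : V → ℕ) (p : V → V)
    (hp : ∀ v, v ∉ Z → G.Adj v (p v) ∧ d (p v) < d v)
    (hd : ∀ γ : G ≃g G, (∀ v, γ v ∈ Z ↔ v ∈ Z) → ∀ v, d (γ v) = d v)
    (c : V → C) (f : Sym2 V → Option C)
    (h2 : ∀ v, v ∉ Z → f s(v, p v) = some (c v))
    (h3 : ∀ u v, u ∉ Z → f s(u, v) ≠ none → v = p u ∨ (u = p v ∧ v ∉ Z))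
    (γ : G ≃g G) (hγ : ∀ u v, G.Adj u v → f s(γ u, γ v) = f s(u, v))
    (hZ : ∀ v, γ v ∈ Z ↔ v ∈ Z) (v : V) (hv : v ∉ Z) : c (γ v) = c v := by
  obtain ⟨ha, hlt⟩ := hp v hv
  have e := hγ v (p v) ha
  rw [h2 v hv] at e
  have hv' : γ v ∉ Z := fun h => hv ((hZ v).1 h)
  rcases h3 (γ v) (γ (p v)) hv' (by simp [e]) with h | ⟨h, h'⟩
  · rw [h, h2 _ hv'] at e
    exact Option.some.inj e
  · have := (hp _ h').2
    rw [← h, hd γ hZ, hd γ hZ] at this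
    omega

/-- In an acyclic graph every edge not inside `Z` is a parent edge. -/
lemma acyclic_parent (G : SimpleGraph V) (hac : G.IsAcyclic) (Z : Set V) (d : V → ℕ) (p : V → V)
    (hp : ∀ v, v ∉ Z → G.Adj v (p v) ∧ d (p v) < d v) (z : V)
    (hZ : ∀ H : SimpleGraph V, (∀ a b, a ∈ Z → b ∈ Z → G.Adj a b → H.Adj a b) →
      ∀ a ∈ Z, H.Reachable a z)
    (u w : V) (huw : G.Adj u w) (hu : u ∉ Z ∨ w ∉ Z) :
    (u ∉ Z ∧ w = p u) ∨ (w ∉ Z ∧ u = p w) := by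
  by_contra hcon
  have hb := (SimpleGraph.isAcyclic_iff_forall_adj_isBridge.1 hac) huw
  rw [SimpleGraph.isBridge_iff] at hb
  apply hb
  have hr : ∀ n, ∀ v, d v = n → (G.deleteEdges {s(u, w)}).Reachable v z := by
    intro n
    induction n using Nat.strong_induction_on with
    | _ n ih =>
      intro v hv
      by_cases hvZ : v ∈ Z
      · refine hZ _ ?_ v hvZ
        intro a b ha hb hab
        rw [SimpleGraph.deleteEdges_adj]
        refine ⟨hab, ?_⟩
        intro h
        rw [Set.mem_singleton_iff, Sym2.eq_iff] at h
        rcases h with ⟨rfl, rfl⟩ | ⟨rfl, rfl⟩ <;> tauto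
      · obtain ⟨h1, h2⟩ := hp v hvZ
        refine SimpleGraph.Reachable.trans (SimpleGraph.Adj.reachable ?_)
          (ih (d (p v)) (by omega) (p v) rfl)
        rw [SimpleGraph.deleteEdges_adj]
        refine ⟨h1, ?_⟩
        intro h
        rw [Set.mem_singleton_iff, Sym2.eq_iff] at h
        apply hcon
        rcases h with ⟨h, h'⟩ | ⟨h, h'⟩
        · left; subst h; exact ⟨hvZ, h'.symm⟩
        · right; subst h; exact ⟨hvZ, h'.symm⟩
  exact (hr _ u rfl).trans (hr _ w rfl).symm

/-- Tree step: an edge colouring such that every preserving automorphism preserves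
edges inside `Z` and the colours off `Z`. -/
lemma tree_step (G : SimpleGraph V) (hconn : G.Connected) (hac : G.IsAcyclic) (Z : Set V) (z : V)
    (hzZ : z ∈ Z)
    (hZ : ∀ H : SimpleGraph V, (∀ a b, a ∈ Z → b ∈ Z → G.Adj a b → H.Adj a b) →
      ∀ a ∈ Z, H.Reachable a z) (hZ2 : ∀ a ∈ Z, ∃ b ∈ Z, G.Adj a b) (c : V → C) :
    ∃ f : Sym2 V → Option C, ∀ γ : G ≃g G,
      (∀ u v, G.Adj u v → f s(γ u, γ v) = f s(u, v)) →
      (∀ v, γ v ∈ Z ↔ v ∈ Z) ∧ ∀ v, v ∉ Z → c (γ v) = c v := by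
  obtain ⟨d, p, hp, hd⟩ := exists_parent G hconn Z ⟨z, hzZ⟩
  obtain ⟨f, h1, h2, h3⟩ := exists_col Z d p (fun v hv => (hp v hv).2) c (fun _ => none)
  refine ⟨f, ?_⟩
  have hnone : ∀ u v, G.Adj u v → (f s(u, v) = none ↔ (u ∈ Z ∧ v ∈ Z)) := by
    intro u v huv
    constructor
    · intro hf
      by_contra hcon
      rcases acyclic_parent G hac Z d p hp z hZ u v huv (by tauto) with ⟨h, h'⟩ | ⟨h, h'⟩
      · rw [h', h2 u h] at hf; simp at hf
      · rw [h', Sym2.eq_swap, h2 v h] at hf; simp at hf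
    · rintro ⟨hu, hv⟩
      exact h1 u v hu hv
  intro γ hγ
  have hZ' : ∀ v, γ v ∈ Z ↔ v ∈ Z := by
    intro v
    constructor
    · intro hv
      obtain ⟨b, hb, hab⟩ := hZ2 _ hv
      have hadj : G.Adj v (γ.symm b) := by
        rw [← γ.map_adj_iff]; simpa using hab
      have := hγ v (γ.symm b) hadj
      rw [RelIso.apply_symm_apply, (hnone _ _ hab).2 ⟨hv, hb⟩] at this
      exact ((hnone _ _ hadj).1 this.symm).1
    · intro hv
      obtain ⟨b, hb, hab⟩ := hZ2 _ hv
      have := hγ v b hab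
      rw [(hnone _ _ hab).2 ⟨hv, hb⟩] at this
      exact ((hnone _ _ (γ.map_adj_iff.2 hab)).1 this).1
  exact ⟨hZ', core G Z d p hp hd c f h2 h3 γ hγ hZ'⟩

lemma pair_reach (G : SimpleGraph V) (a b : V) (hab : G.Adj a b) :
    ∀ H : SimpleGraph V, (∀ s t, s ∈ ({a, b} : Set V) → t ∈ ({a, b} : Set V) → G.Adj s t → H.Adj s t) →
      ∀ s ∈ ({a, b} : Set V), H.Reachable s a := by
  intro H hH s hs
  rcases hs with rfl | rfl
  · exact SimpleGraph.Reachable.refl _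
  · exact (hH _ _ (by simp) (by simp) hab).symm.reachable

lemma tree_case (G : SimpleGraph V) (hconn : G.Connected) (hac : G.IsAcyclic)
    (x y z : V) (hxy : G.Adj x y) (hyz : G.Adj y z) (hxz : x ≠ z)
    (c : V → C) (hc : ∀ γ : G ≃g G, (∀ v, c (γ v) = c v) → ∀ v, γ v = v) :
    ∃ f : Sym2 V → Option C, ∀ γ : G ≃g G,
      (∀ u v, G.Adj u v → f s(γ u, γ v) = f s(u, v)) → ∀ v, γ v = v := by
  classical
  have tri : ∀ a b e, G.Adj a b → G.Adj b e → G.Adj e a → False := by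
    intro a b e h1 h2 h3
    have hb := (SimpleGraph.isAcyclic_iff_forall_adj_isBridge.1 hac) h1
    rw [SimpleGraph.isBridge_iff] at hb
    apply hb
    have q1 : (G.deleteEdges {s(a, b)}).Adj a e := by
      rw [SimpleGraph.deleteEdges_adj]
      refine ⟨h3.symm, ?_⟩
      rw [Set.mem_singleton_iff, Sym2.eq_iff]
      rintro (⟨-, h⟩ | ⟨-, h⟩)
      · exact h2.ne h.symm
      · exact h3.ne h
    have q2 : (G.deleteEdges {s(a, b)}).Adj e b := by
      rw [SimpleGraph.deleteEdges_adj]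
      refine ⟨h2.symm, ?_⟩
      rw [Set.mem_singleton_iff, Sym2.eq_iff]
      rintro (⟨h, -⟩ | ⟨h, -⟩)
      · exact h3.ne h
      · exact h2.ne h.symm
    exact q1.reachable.trans q2.reachable
  by_cases A1 : ∃ a b, G.Adj a b ∧ c a = c b
  · obtain ⟨a, b, hab, hcab⟩ := A1
    obtain ⟨f, hf⟩ := tree_step G hconn hac {a, b} a (by simp) (pair_reach G a b hab)
      (by rintro s (rfl | rfl)
          · exact ⟨b, by simp, hab⟩
          · exact ⟨a, by simp, hab.symm⟩) c
    refine ⟨f, fun γ hγ => hc γ ?_⟩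
    obtain ⟨h1, h2⟩ := hf γ hγ
    intro v
    by_cases hv : v ∈ ({a, b} : Set V)
    · have := (h1 v).2 hv
      rcases hv with hv | hv <;> rcases this with h | h <;> simp_all
    · exact h2 v hv
  by_cases A2 : ∃ a b e, G.Adj a b ∧ G.Adj b e ∧ a ≠ e ∧ c a = c e
  · obtain ⟨a, b, e, hab, hbe, hae, hcae⟩ := A2
    obtain ⟨f, hf⟩ := tree_step G hconn hac {a, b, e} b (by simp)
      (by intro H hH s hs
          rcases hs with rfl | rfl | rfl
          · exact (hH _ _ (by simp) (by simp) hab).reachable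
          · exact SimpleGraph.Reachable.refl _
          · exact (hH _ _ (by simp) (by simp) hbe).symm.reachable)
      (by rintro s (rfl | rfl | rfl)
          · exact ⟨b, by simp, hab⟩
          · exact ⟨e, by simp, hbe⟩
          · exact ⟨b, by simp, hbe.symm⟩) c
    refine ⟨f, fun γ hγ => hc γ ?_⟩
    obtain ⟨h1, h2⟩ := hf γ hγ
    have ga : γ a ∈ ({a, b, e} : Set V) := (h1 a).2 (by simp)
    have gb : γ b ∈ ({a, b, e} : Set V) := (h1 b).2 (by simp)
    have ge : γ e ∈ ({a, b, e} : Set V) := (h1 e).2 (by simp)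
    have nae : ¬ G.Adj a e := fun h => tri a b e hab hbe h.symm
    have adj1 : G.Adj (γ a) (γ b) := γ.map_adj_iff.2 hab
    have adj2 : G.Adj (γ b) (γ e) := γ.map_adj_iff.2 hbe
    have ne1 : γ a ≠ γ e := fun h => hae (γ.injective h)
    have nea : ¬ G.Adj e a := fun h => nae h.symm
    have i1 := adj1.ne
    have i2 := adj2.ne
    intro v
    by_cases hv : v ∈ ({a, b, e} : Set V)
    · have hgb : γ b = b := by
        rcases gb with g | g | g
        · exfalso
          have q1 : γ a = b := by
            rcases ga with g1 | g1 | g1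
            · exact absurd (g1.trans g.symm) i1
            · exact g1
            · rw [g1, g] at adj1; exact absurd adj1 nea
          have q2 : γ e = b := by
            rcases ge with g1 | g1 | g1
            · exact absurd (g.trans g1.symm) i2
            · exact g1
            · rw [g1, g] at adj2; exact absurd adj2 nae
          exact ne1 (q1.trans q2.symm)
        · exact g
        · exfalso
          have q1 : γ a = b := by
            rcases ga with g1 | g1 | g1
            · rw [g1, g] at adj1; exact absurd adj1 nae
            · exact g1
            · exact absurd (g1.trans g.symm) i1
          have q2 : γ e = b := by
            rcases ge with g1 | g1 | g1
            · rw [g1, g] at adj2; exact absurd adj2 nea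
            · exact g1
            · exact absurd (g.trans g1.symm) i2
          exact ne1 (q1.trans q2.symm)
      rcases hv with hv | hv | hv
      · rw [hv]
        rcases ga with g1 | g1 | g1
        · rw [g1]
        · exact absurd (g1.trans hgb.symm) i1
        · rw [g1, hcae]
      · rw [hv, hgb]
      · rw [hv]
        rcases ge with g1 | g1 | g1
        · rw [g1, hcae]
        · exact absurd (hgb.trans g1.symm) i2
        · rw [g1]
    · exact h2 v hv
  · obtain ⟨f, hf⟩ := tree_step G hconn hac {x, y} x (by simp) (pair_reach G x y hxy)
      (by rintro s (rfl | rfl)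
          · exact ⟨y, by simp, hxy⟩
          · exact ⟨x, by simp, hxy.symm⟩) (Function.update c z (c x))
    refine ⟨f, fun γ hγ => hc γ ?_⟩
    obtain ⟨h1, h2⟩ := hf γ hγ
    have hzZ : z ∉ ({x, y} : Set V) := by
      rintro (h | h)
      · exact hxz h.symm
      · exact hyz.ne h.symm
    have hgzZ : γ z ∉ ({x, y} : Set V) := fun h => hzZ ((h1 z).1 h)
    have hgx : γ x ∈ ({x, y} : Set V) := (h1 x).2 (by simp)
    have hgy : γ y ∈ ({x, y} : Set V) := (h1 y).2 (by simp)
    have hadj : G.Adj (γ y) (γ z) := γ.map_adj_iff.2 hyz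
    have hne : γ x ≠ γ y := fun h => hxy.ne (γ.injective h)
    have hcz := h2 z hzZ
    rw [Function.update_self] at hcz
    rcases hgy with gy | gy
    · exfalso
      rw [gy] at hadj
      by_cases hz : γ z = z
      · rw [hz] at hadj
        exact tri x y z hxy hyz hadj.symm
      · rw [Function.update_of_ne hz] at hcz
        exact A1 ⟨x, γ z, hadj, hcz.symm⟩
    · have gy' : γ y = y := gy
      have gx : γ x = x := by
        rcases hgx with h | h
        · exact h
        · exact absurd (h.trans gy'.symm) hne
      have gz : γ z = z := by
        by_contra hz
        rw [Function.update_of_ne hz] at hcz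
        rw [gy'] at hadj
        refine A2 ⟨x, y, γ z, hxy, hadj, ?_, hcz.symm⟩
        intro h
        exact hgzZ (by rw [← h]; simp)
      intro v
      by_cases hv : v ∈ ({x, y} : Set V)
      · rcases hv with rfl | rfl
        · rw [gx]
        · rw [gy']
      · by_cases hvz : v = z
        · rw [hvz, gz]
        · have hgv : γ v ≠ z := fun h => hvz (γ.injective (h.trans gz.symm))
          have := h2 v hv
          rwa [Function.update_of_ne hvz, Function.update_of_ne hgv] at this

lemma two_ne (n : ℕ) (hn : 3 ≤ n) : (2 : ZMod n) ≠ 0 := by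
  intro h
  have : ((2 : ℕ) : ZMod n) = 0 := by exact_mod_cast h
  rw [ZMod.natCast_eq_zero_iff] at this
  have := Nat.le_of_dvd (by norm_num) this
  omega

lemma cyc_col (n : ℕ) (hn : 3 ≤ n) [Nontrivial C] (c : ZMod n → C) :
    ∃ k : ZMod n → C, (∀ r, (∀ i, k (i + r) = k i) → ∀ i, c (i + r) = c i) ∧
      (∀ t, (∀ i, k (t - i - 1) = k i) → ∀ i, c (t - i) = c i) := by
  classical
  have h2 := two_ne n hn
  have : NeZero n := ⟨by omega⟩
  by_cases hs : ∃ s, ∀ i, c (s - i) = c i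
  · obtain ⟨s, hs⟩ := hs
    obtain ⟨a, b, hab⟩ := exists_pair_ne C
    have hk : ∃ k : ZMod n, s = 2 * k ∨ s = 2 * k + 1 := by
      refine ⟨((s.val / 2 : ℕ) : ZMod n), ?_⟩
      have e : s = ((s.val : ℕ) : ZMod n) := (ZMod.natCast_zmod_val s).symm
      rcases Nat.even_or_odd' s.val with ⟨m, hm | hm⟩
      · left
        have : s.val / 2 = m := by omega
        rw [this, e, hm]; push_cast; ring
      · right
        have : s.val / 2 = m := by omega
        rw [this, e, hm]; push_cast; ring
    obtain ⟨q, hq⟩ := hk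
    let k : ZMod n → C := fun i => if i = q ∨ i = s - q - 1 then a else b
    have hk : ∀ i j, k i = k j → (i = q ∨ i = s - q - 1) → (j = q ∨ j = s - q - 1) := by
      intro i j h hi
      by_contra hj
      simp only [k, hi, hj, if_true, if_false] at h
      exact hab h
    refine ⟨k, ?_, ?_⟩
    · intro r hr
      have hr0 : r = 0 := by
        have e1 := hk q (q + r) (hr q).symm (Or.inl rfl)
        have e2 := hk (s - q - 1) (s - q - 1 + r) (hr _).symm (Or.inr rfl)
        rcases hq with hq | hq
        · rcases e1 with e1 | e1
          · linear_combination e1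
          · rcases e2 with e2 | e2
            · exact absurd (show (2 : ZMod n) = 0 by linear_combination e1 - e2 + 2 * hq) h2
            · linear_combination e2
        · rcases e1 with e1 | e1
          · linear_combination e1
          · linear_combination e1 + hq
      intro i; rw [hr0, add_zero]
    · intro t ht
      have hts : t = s := by
        have e1 := hk q (t - q - 1) (ht q).symm (Or.inl rfl)
        have e2 := hk (s - q - 1) (t - (s - q - 1) - 1) (ht _).symm (Or.inr rfl)
        rcases e1 with e1 | e1
        · rcases hq with hq | hq
          · rcases e2 with e2 | e2
            · linear_combination e2
            · exact absurd (show (2 : ZMod n) = 0 by linear_combination e2 - e1 + 2 * hq) h2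
          · linear_combination e1 - hq
        · linear_combination e1
      rw [hts]; exact hs
  · refine ⟨c, fun r h => h, fun t h => ?_⟩
    exact absurd ⟨t - 1, fun i => by rw [← h i]; congr 1; ring⟩ hs

lemma dihedral (n : ℕ) (hn : 3 ≤ n) (σ : ZMod n → ZMod n) (hinj : Function.Injective σ)
    (h : ∀ i, σ (i + 1) = σ i + 1 ∨ σ (i + 1) = σ i - 1) :
    (∀ i, σ (i + 1) = σ i + 1) ∨ (∀ i, σ (i + 1) = σ i - 1) := by
  have h2 := two_ne n hn
  have : NeZero n := ⟨by omega⟩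
  have hne : ∀ i, σ (i + 1 + 1) ≠ σ i := by
    intro i e
    have := hinj e
    exact h2 (by linear_combination this)
  have ind : ∀ P : ZMod n → Prop, P 0 → (∀ i, P i → P (i + 1)) → ∀ i, P i := by
    intro P h0 hs i
    have : ∀ m : ℕ, P (m : ZMod n) := by
      intro m
      induction m with
      | zero => simpa using h0
      | succ m ih => push_cast; exact hs _ ih
    rw [← ZMod.natCast_zmod_val i]; exact this _
  rcases h 0 with h0 | h0
  · left
    refine ind _ h0 ?_
    intro i hi
    rcases h (i + 1) with h' | h'
    · exact h'
    · exact absurd (by rw [h', hi]; ring) (hne i)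
  · right
    refine ind _ h0 ?_
    intro i hi
    rcases h (i + 1) with h' | h'
    · exact absurd (by rw [h', hi]; ring) (hne i)
    · exact h'

lemma lin_of_step (n : ℕ) [NeZero n] (σ : ZMod n → ZMod n) (e : ZMod n)
    (h : ∀ i, σ (i + 1) = σ i + e) (i : ZMod n) : σ i = σ 0 + i * e := by
  have : ∀ m : ℕ, σ (m : ZMod n) = σ 0 + m * e := by
    intro m
    induction m with
    | zero => simp
    | succ m ih => push_cast; rw [h, ih]; ring
  have := this i.val
  rwa [ZMod.natCast_zmod_val] at this

lemma exists_cycle (G : SimpleGraph V) (hac : ¬ G.IsAcyclic) :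
    ∃ (n : ℕ) (_ : 3 ≤ n) (v : ZMod n → V), Function.Injective v ∧ ∀ i, G.Adj (v i) (v (i + 1)) := by
  unfold SimpleGraph.IsAcyclic at hac
  push Not at hac
  obtain ⟨u, w, hw⟩ := hac
  have hn := hw.three_le_length
  have : NeZero w.length := ⟨by omega⟩
  have : Fact (1 < w.length) := ⟨by omega⟩
  refine ⟨w.length, hn, fun i => w.getVert i.val, ?_, ?_⟩
  · intro i j hij
    have hi := ZMod.val_lt i
    have hj := ZMod.val_lt j
    apply ZMod.val_injective
    exact hw.getVert_injOn' (by rw [Set.mem_ofPred_eq]; omega) (by rw [Set.mem_ofPred_eq]; omega) hij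
  · intro i
    have hi := ZMod.val_lt i
    have := w.adj_getVert_succ hi
    show G.Adj (w.getVert i.val) (w.getVert (i + 1).val)
    rw [show w.getVert (i + 1).val = w.getVert (i.val + 1) from ?_]
    · exact this
    · rw [ZMod.val_add, ZMod.val_one]
      by_cases h : i.val + 1 < w.length
      · rw [Nat.mod_eq_of_lt h]
      · have : i.val + 1 = w.length := by omega
        rw [this, Nat.mod_self]; simp

lemma cycle_case (G : SimpleGraph V) (hconn : G.Connected) (hac : ¬ G.IsAcyclic)
    [Nontrivial C]
    (c : V → C) (hc : ∀ γ : G ≃g G, (∀ v, c (γ v) = c v) → ∀ v, γ v = v) :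
    ∃ f : Sym2 V → Option C, ∀ γ : G ≃g G,
      (∀ u v, G.Adj u v → f s(γ u, γ v) = f s(u, v)) → ∀ v, γ v = v := by
  classical
  obtain ⟨n, hn, x, hinj, hadj⟩ := exists_cycle G hac
  have h2 := two_ne n hn
  have : NeZero n := ⟨by omega⟩
  obtain ⟨k, hk1, hk2⟩ := cyc_col n hn (fun i => c (x i))
  let Z : Set V := Set.range x
  have hxZ : ∀ i, x i ∈ Z := fun i => ⟨i, rfl⟩
  obtain ⟨d, p, hp, hd⟩ := exists_parent G hconn Z ⟨x 0, hxZ 0⟩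
  let g : Sym2 V → Option C := fun e =>
    if h : ∃ i, e = s(x i, x (i + 1)) then some (k h.choose) else none
  have hg1 : ∀ i, g s(x i, x (i + 1)) = some (k i) := by
    intro i
    have h : ∃ j, s(x i, x (i + 1)) = s(x j, x (j + 1)) := ⟨i, rfl⟩
    simp only [g, h, dite_true]
    have hj := h.choose_spec
    generalize h.choose = j at hj
    rw [Sym2.eq_iff] at hj
    rcases hj with ⟨h1, -⟩ | ⟨h1, h3⟩
    · rw [hinj h1]
    · have a := hinj h1
      have b := hinj h3
      exact absurd (show (2 : ZMod n) = 0 by linear_combination b - a) h2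
  have hg2 : ∀ e, g e ≠ none → ∃ i, e = s(x i, x (i + 1)) := by
    intro e he
    by_contra h
    simp [g, h] at he
  obtain ⟨f, f1, f2, f3⟩ := exists_col Z d p (fun v hv => (hp v hv).2) c g
  have hfx : ∀ i, f s(x i, x (i + 1)) = some (k i) := fun i => by
    rw [f1 _ _ (hxZ _) (hxZ _), hg1]
  refine ⟨f, ?_⟩
  have hsub : ∀ γ : G ≃g G, (∀ u v, G.Adj u v → f s(γ u, γ v) = f s(u, v)) →
      ∀ i, γ (x i) ∈ Z := by
    intro γ hγ
    by_contra hcon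
    push Not at hcon
    have hfin : ({i | γ (x i) ∉ Z} : Set (ZMod n)).Finite := Set.toFinite _
    obtain ⟨i, hi, hmax⟩ := Set.exists_max_image _ (fun i => d (γ (x i))) hfin hcon
    simp only [Set.mem_ofPred_eq] at hi hmax
    have nb : ∀ j, f s(γ (x i), γ (x j)) ≠ none → γ (x j) = p (γ (x i)) := by
      intro j hj
      rcases f3 _ _ hi hj with h | ⟨h, h'⟩
      · exact h
      · have a := (hp _ h').2
        rw [← h] at a
        have := hmax j h'
        omega
    have n1 := nb (i + 1) (by rw [hγ _ _ (hadj i), hfx]; simp)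
    have n2 := nb (i - 1) (by
      have e := hfx (i - 1)
      have e' := hadj (i - 1)
      rw [sub_add_cancel] at e e'
      rw [hγ _ _ e'.symm, Sym2.eq_swap, e]; simp)
    have := hinj (γ.injective (n1.trans n2.symm))
    exact h2 (by linear_combination this)
  intro γ hγ
  apply hc γ
  have hγ' : ∀ u v, G.Adj u v → f s(γ.symm u, γ.symm v) = f s(u, v) := by
    intro u v huv
    have hh : G.Adj (γ.symm u) (γ.symm v) := γ.symm.map_adj_iff.2 huv
    have := hγ _ _ hh
    rw [RelIso.apply_symm_apply, RelIso.apply_symm_apply] at this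
    exact this.symm
  have hZ : ∀ v, γ v ∈ Z ↔ v ∈ Z := by
    intro v
    constructor
    · rintro ⟨i, hi⟩
      have := hsub γ.symm hγ' i
      rwa [hi, RelIso.symm_apply_apply] at this
    · rintro ⟨i, rfl⟩
      exact hsub γ hγ i
  have hoff := core G Z d p hp hd c f f2 f3 γ hγ hZ
  choose σ hσ using fun i => hsub γ hγ i
  have hσinj : Function.Injective σ := by
    intro i j hij
    apply hinj
    apply γ.injective
    rw [← hσ, ← hσ, hij]
  have hstep : ∀ i, (σ (i + 1) = σ i + 1 ∧ k (σ i) = k i) ∨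
      (σ (i + 1) = σ i - 1 ∧ k (σ i - 1) = k i) := by
    intro i
    have e := hγ _ _ (hadj i)
    rw [hfx, ← hσ, ← hσ, f1 _ _ (hxZ _) (hxZ _)] at e
    obtain ⟨j, hj⟩ := hg2 _ (by rw [e]; simp)
    rw [hj, hg1] at e
    have e' := Option.some.inj e
    rw [Sym2.eq_iff] at hj
    rcases hj with ⟨a, b⟩ | ⟨a, b⟩
    · left
      rw [hinj a, hinj b]
      exact ⟨rfl, e'⟩
    · right
      rw [hinj a, hinj b]
      simpa using e'
  have hon : ∀ i, c (x (σ i)) = c (x i) := by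
    rcases dihedral n hn σ hσinj (fun i => (hstep i).imp And.left And.left) with h | h
    · have hl := lin_of_step n σ 1 h
      have hr := hk1 (σ 0) (by
        intro i
        rcases hstep i with ⟨_, b⟩ | ⟨a, _⟩
        · rw [← b, hl i]; congr 1; ring
        · rw [h i] at a
          exact absurd (by linear_combination a) h2)
      intro i
      rw [← hr i, hl i]
      show c (x _) = c (x _)
      congr 2; ring
    · have hl := lin_of_step n σ (-1) (fun i => by rw [h i]; ring)
      have hr := hk2 (σ 0) (by
        intro i
        rcases hstep i with ⟨a, _⟩ | ⟨_, b⟩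
        · rw [h i] at a
          exact absurd (by linear_combination -a) h2
        · rw [← b, hl i]; congr 1; ring)
      intro i
      rw [← hr i, hl i]
      show c (x _) = c (x _)
      congr 2; ring
  intro v
  by_cases hv : v ∈ Z
  · obtain ⟨i, rfl⟩ := hv
    rw [← hσ, hon]
  · exact hoff v hv

/-- Combination: either there is a good edge colouring or no edge colouring is distinguishing. -/
lemma main (G : SimpleGraph V) (hconn : G.Connected)
    (c : V → C) (hc : ∀ γ : G ≃g G, (∀ v, c (γ v) = c v) → ∀ v, γ v = v)
    (hex : ∃ (D : Type u) (f : G.edgeSet → D),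
      ∀ γ : G ≃g G, (∀ e : G.edgeSet, f (γ.mapEdgeSet e) = f e) → ∀ v, γ v = v) :
    ∃ f : Sym2 V → Option C, ∀ γ : G ≃g G,
      (∀ u v, G.Adj u v → f s(γ u, γ v) = f s(u, v)) → ∀ v, γ v = v := by
  classical
  rcases subsingleton_or_nontrivial C with hC | hC
  · exact ⟨fun _ => none, fun γ _ => hc γ fun v => Subsingleton.elim _ _⟩
  by_cases hac : G.IsAcyclic
  · by_cases hP : ∃ x y z, G.Adj x y ∧ G.Adj y z ∧ x ≠ z
    · obtain ⟨x, y, z, h1, h2, h3⟩ := hP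
      exact tree_case G hconn hac x y z h1 h2 h3 c hc
    · push Not at hP
      obtain ⟨D, f, hf⟩ := hex
      refine ⟨fun _ => none, fun γ _ => hf γ ?_⟩
      -- every automorphism fixes every edge
      have huniv : ∀ x y, G.Adj x y → ∀ v, v = x ∨ v = y := by
        intro x y hxy v
        obtain ⟨w⟩ := hconn.preconnected v x
        have : ∀ a b (w : G.Walk a b), (b = x ∨ b = y) → (a = x ∨ a = y) := by
          intro a b w
          induction w with
          | nil => exact id
          | cons h w ih =>
            intro hb
            rcases ih hb with rfl | rfl
            · right; exact hP _ _ _ h hxy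
            · left; exact hP _ _ _ h hxy.symm
        exact this v x w (Or.inl rfl)
      intro e
      congr 1
      obtain ⟨e, he⟩ := e
      induction e with
      | _ x y =>
        have hxy : G.Adj x y := he
        apply Subtype.ext
        show Sym2.map γ s(x, y) = s(x, y)
        rw [Sym2.map_mk, Sym2.eq_iff]
        have hne : γ x ≠ γ y := fun h => hxy.ne (γ.injective h)
        rcases huniv x y hxy (γ x) with h | h <;> rcases huniv x y hxy (γ y) with h' | h'
        · exact absurd (h.trans h'.symm) hne
        · exact Or.inl ⟨h, h'⟩
        · exact Or.inr ⟨h, h'⟩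
        · exact absurd (h.trans h'.symm) hne
  · exact cycle_case G hconn hac c hc

end DistIdx

/-- For every connected graph `G` (finite or infinite), `D'(G) ≤ D(G) + 1`. -/
theorem stmt_7 {V : Type u} (G : SimpleGraph V) (hconn : G.Connected) :
    distinguishingIndex G ≤ distinguishingNumber G + 1 := by
  classical
  unfold distinguishingIndex
  rcases Set.eq_empty_or_nonempty {κ : Cardinal.{u} | ∃ (C : Type u) (c : G.edgeSet → C), #C = κ ∧
    ∀ γ : G ≃g G, (∀ e : G.edgeSet, c (γ.mapEdgeSet e) = c e) → ∀ v, γ v = v} with h | h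
  · rw [h, Cardinal.sInf_empty]
    exact zero_le
  · obtain ⟨_, D, f, -, hf⟩ := h
    have hne : {κ : Cardinal.{u} | ∃ (C : Type u) (c : V → C), #C = κ ∧
        ∀ γ : G ≃g G, (∀ v, c (γ v) = c v) → ∀ v, γ v = v}.Nonempty :=
      ⟨_, V, id, rfl, fun γ h => h⟩
    obtain ⟨C, c, hC, hc⟩ := csInf_mem hne
    obtain ⟨g, hg⟩ := DistIdx.main G hconn c hc ⟨D, f, hf⟩
    refine csInf_le' ⟨Option C, fun e => g e.1, ?_, ?_⟩
    · rw [Cardinal.mk_option, hC]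
      rfl
    · intro γ hγ
      exact hg γ fun u v huv => hγ ⟨s(u, v), huv⟩
end
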